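/- arXiv:1805.09518 — 14 statements merged into one kernel-verified Lean document; each statement's English description precedes it below -/
import Mathlib

section
/- The ordered Ramsey number of the ordered graph K₂ ∪ K₂ with ordering A (vertex set {1,2,3,4}, edge set {{1,2},{3,4}}) equals 6. That is, 6 is the least N such that every 2-coloring of the edges of the complete graph on {1,...,N} contains a monochromatic ordered copy of this graph. -/
/-- A 2-coloring `c` of the edges of the complete graph on the ordered vertex set
`{1,…,N}` contains an ordered copy, in color `b`, of the ordered graph with vertex
set `{1,…,n}` and edge set `E` (edges listed as pairs `(i, j)` with `i < j`):
there is a strictly increasing map `φ : {1,…,n} → {1,…,N}` such that every edge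
`(i, j) ∈ E` has `(φ i, φ j)` colored `b`. -/
def ContainsOrderedCopy (n N : ℕ) (E : Finset (ℕ × ℕ)) (c : ℕ → ℕ → Bool) (b : Bool) :
    Prop :=
  ∃ φ : ℕ → ℕ,
    (∀ i, 1 ≤ i → i ≤ n → 1 ≤ φ i ∧ φ i ≤ N) ∧
    (∀ i j, 1 ≤ i → i < j → j ≤ n → φ i < φ j) ∧
    (∀ e ∈ E, c (φ e.1) (φ e.2) = b)

/-- A 2-coloring `c` of the edges of the complete graph on `{1,…,N}` contains a
monochromatic ordered copy of the ordered graph with vertex set `{1,…,n}` and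
edge set `E`. -/
def ContainsMonoOrderedCopy (n N : ℕ) (E : Finset (ℕ × ℕ)) (c : ℕ → ℕ → Bool) : Prop :=
  ∃ b : Bool, ContainsOrderedCopy n N E c b

/-- The ordered Ramsey number of `K₂ ∪ K₂` with ordering `A`
(edge set `{(1, 2), (3, 4)}`) equals `6`. -/
theorem orderedRamsey_K2uK2_A :
    IsLeast {N : ℕ | ∀ c : ℕ → ℕ → Bool,
      ContainsMonoOrderedCopy 4 N {(1, 2), (3, 4)} c} 6 := by
  constructor
  · intro c
    have key : ∀ a b d e : ℕ, 1 ≤ a → a < b → b < d → d < e → e ≤ 6 → c a b = c d e →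
        ContainsMonoOrderedCopy 4 6 {(1, 2), (3, 4)} c := by
      intro a b d e h1 h2 h3 h4 h5 h
      refine ⟨c a b, fun i => if i = 1 then a else if i = 2 then b else if i = 3 then d else e,
        ?_, ?_, ?_⟩
      · intro i hi hi'
        interval_cases i <;> simp <;> omega
      · intro i j hi hij hj
        have : i ≤ 4 := by omega
        interval_cases j <;> interval_cases i <;> simp <;> omega
      · simp [h]
    by_cases h1 : c 1 2 = c 3 4
    · exact key 1 2 3 4 (by omega) (by omega) (by omega) (by omega) (by omega) h1
    by_cases h2 : c 1 2 = c 5 6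
    · exact key 1 2 5 6 (by omega) (by omega) (by omega) (by omega) (by omega) h2
    refine key 3 4 5 6 (by omega) (by omega) (by omega) (by omega) (by omega) ?_
    revert h1 h2
    cases c 1 2 <;> cases c 3 4 <;> cases c 5 6 <;> simp
  · intro N hN
    by_contra hlt
    obtain ⟨b, φ, hr, hm, hc⟩ := hN (fun _ j => decide (j ≤ 3))
    have h12 := hc (1, 2) (by simp)
    have h34 := hc (3, 4) (by simp)
    have a1 := hr 1 (by omega) (by omega)
    have a4 := hr 4 (by omega) (by omega)
    have m1 := hm 1 2 (by omega) (by omega) (by omega)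
    have m2 := hm 2 3 (by omega) (by omega) (by omega)
    have m3 := hm 3 4 (by omega) (by omega) (by omega)
    have e : decide (φ 2 ≤ 3) = decide (φ 4 ≤ 3) := h12.trans h34.symm
    rw [decide_eq_decide] at e
    omega
end

section
/- The ordered Ramsey number of the ordered graph K₂ ∪ K₂ with ordering B (vertex set {1,2,3,4}, edge set {{1,3},{2,4}}) equals 5. -/
theorem copy_of_four (c : ℕ → ℕ → Bool) (p q r s : ℕ) (hp : 1 ≤ p) (hpq : p < q)
    (hqr : q < r) (hrs : r < s) (hs : s ≤ 5) (h : c p r = c q s) :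
    ContainsMonoOrderedCopy 4 5 {(1, 3), (2, 4)} c := by
  refine ⟨c p r, fun i => if i = 1 then p else if i = 2 then q else if i = 3 then r else s,
    ?_, ?_, ?_⟩
  · intro i h1 h2
    interval_cases i <;> simp <;> omega
  · intro i j h1 h2 h3
    have : i < 4 := by omega
    interval_cases j <;> interval_cases i <;> simp <;> omega
  · intro e he
    simp only [Finset.mem_insert, Finset.mem_singleton] at he
    rcases he with rfl | rfl
    · simp
    · simp [h]

/-- The ordered Ramsey number of `K₂ ∪ K₂` with ordering `B`
(edge set `{(1, 3), (2, 4)}`) equals `5`. -/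
theorem orderedRamsey_K2uK2_B :
    IsLeast {N : ℕ | ∀ c : ℕ → ℕ → Bool,
      ContainsMonoOrderedCopy 4 N {(1, 3), (2, 4)} c} 5 := by
  constructor
  · intro c
    by_cases h1 : c 1 3 = c 2 4
    · exact copy_of_four c 1 2 3 4 (by omega) (by omega) (by omega) (by omega) (by omega) h1
    by_cases h2 : c 1 3 = c 2 5
    · exact copy_of_four c 1 2 3 5 (by omega) (by omega) (by omega) (by omega) (by omega) h2
    by_cases h3 : c 1 4 = c 2 5
    · exact copy_of_four c 1 2 4 5 (by omega) (by omega) (by omega) (by omega) (by omega) h3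
    by_cases h4 : c 1 4 = c 3 5
    · exact copy_of_four c 1 3 4 5 (by omega) (by omega) (by omega) (by omega) (by omega) h4
    by_cases h5 : c 2 4 = c 3 5
    · exact copy_of_four c 2 3 4 5 (by omega) (by omega) (by omega) (by omega) (by omega) h5
    exfalso
    revert h1 h2 h3 h4 h5
    generalize c 1 3 = a1
    generalize c 2 4 = a2
    generalize c 2 5 = a3
    generalize c 1 4 = a4
    generalize c 3 5 = a5
    revert a1 a2 a3 a4 a5
    decide
  · intro N hN
    by_contra hlt
    obtain ⟨b, φ, hr, hm, he⟩ := hN (fun i _ => decide (i = 1))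
    have a1 := hr 1 (by omega) (by omega)
    have a4 := hr 4 (by omega) (by omega)
    have m1 := hm 1 2 (by omega) (by omega) (by omega)
    have m2 := hm 2 3 (by omega) (by omega) (by omega)
    have m3 := hm 3 4 (by omega) (by omega) (by omega)
    have e1 := he (1, 3) (by simp)
    have e2 := he (2, 4) (by simp)
    have f1 : φ 1 = 1 := by omega
    have f2 : φ 2 = 2 := by omega
    simp only [f1, f2] at e1 e2
    rw [← e2] at e1
    revert e1
    decide
end

section
/- The ordered Ramsey number of the ordered graph K₂ ∪ K₂ with ordering C (vertex set {1,2,3,4}, edge set {{1,4},{2,3}}) equals 6. -/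
theorem copy_of_quad (c : ℕ → ℕ → Bool) (N w x y z : ℕ) (h0 : 1 ≤ w) (h1 : w < x) (h2 : x < y)
    (h3 : y < z) (h4 : z ≤ N) (h : c w z = c x y) :
    ContainsMonoOrderedCopy 4 N {(1, 4), (2, 3)} c := by
  refine ⟨c x y, fun i => if i = 1 then w else if i = 2 then x else if i = 3 then y else z,
    ?_, ?_, ?_⟩
  · intro i hi hi'
    interval_cases i <;> simp <;> omega
  · intro i j hi hij hj
    have hi' : i ≤ 3 := by omega
    interval_cases i <;> interval_cases j <;> simp <;> omega
  · intro e he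
    simp only [Finset.mem_insert, Finset.mem_singleton] at he
    rcases he with rfl | rfl
    · simpa using h
    · simp

/-- The ordered Ramsey number of `K₂ ∪ K₂` with ordering `C`
(edge set `{(1, 4), (2, 3)}`) equals `6`. -/
theorem orderedRamsey_K2uK2_C :
    IsLeast {N : ℕ | ∀ c : ℕ → ℕ → Bool,
      ContainsMonoOrderedCopy 4 N {(1, 4), (2, 3)} c} 6 := by
  constructor
  · intro c
    by_cases h1 : c 1 6 = c 2 5
    · exact copy_of_quad c 6 1 2 5 6 (by omega) (by omega) (by omega) (by omega) (by omega) h1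
    by_cases h2 : c 1 6 = c 3 4
    · exact copy_of_quad c 6 1 3 4 6 (by omega) (by omega) (by omega) (by omega) (by omega) h2
    refine copy_of_quad c 6 2 3 4 5 (by omega) (by omega) (by omega) (by omega) (by omega) ?_
    cases h : c 1 6 <;> simp_all
  · intro N hN
    by_contra hlt
    obtain ⟨b, φ, hr, hm, hc⟩ := hN (fun a b => decide (a = 1 ∨ b = 5))
    have e1 := hc (1, 4) (by simp)
    have e2 := hc (2, 3) (by simp)
    have r1 := hr 1 (by omega) (by omega)
    have r4 := hr 4 (by omega) (by omega)
    have m1 := hm 1 2 (by omega) (by omega) (by omega)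
    have m2 := hm 2 3 (by omega) (by omega) (by omega)
    have m3 := hm 3 4 (by omega) (by omega) (by omega)
    have t1 : φ 1 = 1 ∨ φ 4 = 5 := by omega
    have t2 : ¬ (φ 2 = 1 ∨ φ 3 = 5) := by omega
    have e3 : decide (φ 1 = 1 ∨ φ 4 = 5) = decide (φ 2 = 1 ∨ φ 3 = 5) := e1.trans e2.symm
    rw [decide_eq_true t1, decide_eq_false t2] at e3
    exact absurd e3 (by decide)
end

section
/- The ordered Ramsey number of the ordered diamond graph K₄ − e with ordering A (vertex set {1,2,3,4}, all edges of K₄ except {1,4}) is at most 17: every 2-coloring of the edges of the complete graph on {1,...,17} contains a monochromatic ordered copy of this graph. -/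
theorem ramsey34 (G : SimpleGraph (Fin 9)) :
    (∃ s, G.IsNClique 3 s) ∨ (∃ s, Gᶜ.IsNClique 4 s) := by
  classical
  by_contra hcon
  push Not at hcon
  obtain ⟨h3, h4⟩ := hcon
  have tri : ∀ a b c, G.Adj a b → G.Adj a c → G.Adj b c → False := fun a b c h1 h2 h5 =>
    h3 {a, b, c} (SimpleGraph.is3Clique_triple_iff.2 ⟨h1, h2, h5⟩)
  have hdeg : ∃ v, G.degree v ≠ 3 := by
    by_contra hc
    push Not at hc
    have := G.sum_degrees_eq_twice_card_edges
    simp [hc] at this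
    omega
  obtain ⟨v, hv⟩ := hdeg
  rcases lt_or_gt_of_ne hv with hlt | hgt
  · -- the non-neighbours of `v`
    have hM : 6 ≤ (Gᶜ.neighborFinset v).card := by
      rw [SimpleGraph.card_neighborFinset_eq_degree, SimpleGraph.degree_compl]
      simp
      omega
    have ext4 : ∀ s : Finset (Fin 9), Gᶜ.IsNClique 3 s → ¬ (∀ x ∈ s, Gᶜ.Adj v x) :=
      fun s hs hx => h4 _ (hs.insert hx)
    obtain ⟨u, hu⟩ : (Gᶜ.neighborFinset v).Nonempty := by
      rw [← Finset.card_pos]; omega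
    set M := (Gᶜ.neighborFinset v).erase u with hMdef
    have hMc : 5 ≤ M.card := by
      rw [Finset.card_erase_of_mem hu]; omega
    have hMm : ∀ x ∈ M, x ≠ u ∧ Gᶜ.Adj v x := by
      intro x hx
      simpa [hMdef] using hx
    have hu' : Gᶜ.Adj v u := by simpa using hu
    have hsplit := Finset.card_filter_add_card_filter_not (s := M) (fun x => G.Adj u x)
    rcases (by omega : 3 ≤ (M.filter (fun x => G.Adj u x)).card ∨
        3 ≤ (M.filter (fun x => ¬ G.Adj u x)).card) with h | h
    · obtain ⟨t, ht, htc⟩ := Finset.exists_subset_card_eq h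
      refine ext4 t ⟨?_, htc⟩ ?_
      · intro x hx y hy hxy
        have hx' := (Finset.mem_filter.1 (ht hx)).2
        have hy' := (Finset.mem_filter.1 (ht hy)).2
        exact (SimpleGraph.compl_adj _ _ _).2 ⟨hxy, fun h => tri _ _ _ hx' hy' h⟩
      · intro x hx
        exact (hMm x (Finset.mem_filter.1 (ht hx)).1).2
    · obtain ⟨t, ht, htc⟩ := Finset.exists_subset_card_eq h
      refine h3 t ⟨?_, htc⟩
      intro x hx y hy hxy
      by_contra hn
      obtain ⟨hx1, hx2⟩ := Finset.mem_filter.1 (ht hx)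
      obtain ⟨hy1, hy2⟩ := Finset.mem_filter.1 (ht hy)
      refine ext4 {u, x, y} (SimpleGraph.is3Clique_triple_iff.2 ⟨?_, ?_, ?_⟩) ?_
      · exact (SimpleGraph.compl_adj _ _ _).2 ⟨(hMm x hx1).1.symm, hx2⟩
      · exact (SimpleGraph.compl_adj _ _ _).2 ⟨(hMm y hy1).1.symm, hy2⟩
      · exact (SimpleGraph.compl_adj _ _ _).2 ⟨hxy, hn⟩
      · intro z hz
        simp only [Finset.mem_insert, Finset.mem_singleton] at hz
        rcases hz with rfl | rfl | rfl
        · exact hu'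
        · exact (hMm _ hx1).2
        · exact (hMm _ hy1).2
  · have : 4 ≤ (G.neighborFinset v).card := by
      rw [SimpleGraph.card_neighborFinset_eq_degree]; omega
    obtain ⟨t, ht, htc⟩ := Finset.exists_subset_card_eq this
    refine h4 t ⟨?_, htc⟩
    intro x hx y hy hxy
    have hx' : G.Adj v x := by simpa using ht hx
    have hy' : G.Adj v y := by simpa using ht hy
    exact (SimpleGraph.compl_adj _ _ _).2 ⟨hxy, fun h => tri _ _ _ hx' hy' h⟩

theorem mk_copy (c : ℕ → ℕ → Bool) (b : Bool) (p q r s : ℕ) (h0 : 1 ≤ p) (h1 : p < q)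
    (h2 : q < r) (h3 : r < s) (h4 : s ≤ 17) (e1 : c p q = b) (e2 : c p r = b)
    (e3 : c q r = b) (e4 : c q s = b) (e5 : c r s = b) :
    ContainsMonoOrderedCopy 4 17 {(1, 2), (1, 3), (2, 3), (2, 4), (3, 4)} c := by
  refine ⟨b, fun i => if i = 1 then p else if i = 2 then q else if i = 3 then r else s,
    ?_, ?_, ?_⟩
  · intro i _ _
    dsimp only
    split_ifs <;> omega
  · intro i j _ _ _
    dsimp only
    split_ifs <;> omega
  · intro e he
    simp only [Finset.mem_insert, Finset.mem_singleton] at he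
    rcases he with rfl | rfl | rfl | rfl | rfl <;> simpa

/-- Every 2-coloring of the edges of the complete graph on `{1,…,17}` contains a
monochromatic ordered copy of the diamond `K₄ - e` with ordering `A`
(all edges of `K₄` on `{1,2,3,4}` except `(1, 4)`), i.e. `r_<(K₄ - e) ≤ 17`
for this ordering. -/
theorem orderedRamsey_diamond_A_le :
    ∀ c : ℕ → ℕ → Bool,
      ContainsMonoOrderedCopy 4 17 {(1, 2), (1, 3), (2, 3), (2, 4), (3, 4)} c := by
  intro c
  obtain ⟨b, hb⟩ : ∃ b, 8 ≤ ((Finset.Icc 2 16).filter (fun x => c 1 x = b)).card := by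
    have h := Finset.card_filter_add_card_filter_not (s := Finset.Icc 2 16)
      (fun x => c 1 x = true)
    simp only [Bool.not_eq_true, Nat.card_Icc] at h
    by_contra hc
    push Not at hc
    have h1 := hc true
    have h2 := hc false
    omega
  obtain ⟨S, hS, hSc⟩ := Finset.exists_subset_card_eq hb
  have hS1 : ∀ x ∈ S, 2 ≤ x ∧ x ≤ 16 ∧ c 1 x = b := by
    intro x hx
    have := hS hx
    simp only [Finset.mem_filter, Finset.mem_Icc] at this
    tauto
  have hcard : (insert 17 S).card = 9 := by
    rw [Finset.card_insert_of_notMem, hSc]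
    intro h
    have := hS1 _ h
    omega
  set f := (insert 17 S).orderEmbOfFin hcard with hf
  have hfm : ∀ i, f i = 17 ∨ f i ∈ S := fun i => by
    have := Finset.orderEmbOfFin_mem (insert 17 S) hcard i
    exact Finset.mem_insert.1 this
  have hfr : ∀ i, 2 ≤ f i ∧ f i ≤ 17 := fun i => by
    rcases hfm i with h | h
    · omega
    · have := hS1 _ h
      omega
  have hfS : ∀ i, f i < 17 → c 1 (f i) = b := fun i hi => by
    rcases hfm i with h | h
    · omega
    · exact (hS1 _ h).2.2
  have hmono : ∀ i j, i < j → f i < f j := fun i j h => f.strictMono h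
  let G : SimpleGraph (Fin 9) :=
    { Adj := fun i j => i ≠ j ∧ c (f (min i j)) (f (max i j)) = b
      symm := ⟨fun i j h => ⟨h.1.symm, by rw [min_comm, max_comm]; exact h.2⟩⟩
      loopless := ⟨fun i h => h.1 rfl⟩ }
  have hG : ∀ i j, i < j → (G.Adj i j ↔ c (f i) (f j) = b) := by
    intro i j hij
    show (i ≠ j ∧ c (f (min i j)) (f (max i j)) = b) ↔ _
    rw [min_eq_left hij.le, max_eq_right hij.le]
    exact ⟨fun h => h.2, fun h => ⟨hij.ne, h⟩⟩
  rcases ramsey34 G with ⟨s, hs⟩ | ⟨s, hs⟩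
  · set e := s.orderEmbOfFin hs.card_eq with he
    have hem : ∀ i, e i ∈ s := Finset.orderEmbOfFin_mem s hs.card_eq
    have key : ∀ i j, i < j → f (e i) < f (e j) ∧ c (f (e i)) (f (e j)) = b := by
      intro i j hij
      have hlt : e i < e j := e.strictMono hij
      exact ⟨hmono _ _ hlt, (hG _ _ hlt).1 (hs.isClique (hem i) (hem j) hlt.ne)⟩
    have k01 := key 0 1 (by decide)
    have k02 := key 0 2 (by decide)
    have k12 := key 1 2 (by decide)
    have r0 := hfr (e 0)
    have r2 := hfr (e 2)
    exact mk_copy c b 1 (f (e 0)) (f (e 1)) (f (e 2)) le_rfl (by omega) k01.1 k12.1 r2.2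
      (hfS _ (by omega)) (hfS _ (by omega)) k01.2 k02.2 k12.2
  · set e := s.orderEmbOfFin hs.card_eq with he
    have hem : ∀ i, e i ∈ s := Finset.orderEmbOfFin_mem s hs.card_eq
    have key : ∀ i j, i < j → f (e i) < f (e j) ∧ c (f (e i)) (f (e j)) = !b := by
      intro i j hij
      have hlt : e i < e j := e.strictMono hij
      have h := ((SimpleGraph.compl_adj _ _ _).1 (hs.isClique (hem i) (hem j) hlt.ne)).2
      rw [hG _ _ hlt] at h
      exact ⟨hmono _ _ hlt, by simpa [Bool.eq_not] using h⟩
    have k01 := key 0 1 (by decide)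
    have k02 := key 0 2 (by decide)
    have k12 := key 1 2 (by decide)
    have k13 := key 1 3 (by decide)
    have k23 := key 2 3 (by decide)
    have r0 := hfr (e 0)
    have r3 := hfr (e 3)
    exact mk_copy c (!b) _ _ _ _ (by omega) k01.1 k12.1 k23.1 r3.2
      k01.2 k02.2 k12.2 k13.2 k23.2
end

section
/- The ordered Ramsey number of the ordered diamond graph K₄ − e with ordering B (vertex set {1,2,3,4}, all edges of K₄ except {3,4}) is at most 15: every 2-coloring of the edges of the complete graph on {1,...,15} contains a monochromatic ordered copy of this graph. -/
theorem diamond_aux (c : ℕ → ℕ → Bool)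
    (h : ¬ ContainsMonoOrderedCopy 4 15 {(1, 2), (1, 3), (1, 4), (2, 3), (2, 4)} c)
    (k : Bool) (p q : ℕ) (hp : 1 ≤ p) (hpq : p < q) (hk : c p q = k) (S : Finset ℕ)
    (hS : ∀ x ∈ S, q < x ∧ x ≤ 15 ∧ c p x = k) :
    (S.filter (fun x => c q x = k)).card ≤ 1 := by
  have key : ∀ x y, q < x → x < y → y ≤ 15 → c p x = k → c p y = k → c q x = k →
      c q y = k → False := by
    intro x y h1 h2 h3 h4 h5 h6 h7
    refine h ⟨k, fun i => if i = 1 then p else if i = 2 then q else if i = 3 then x else y,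
      ?_, ?_, ?_⟩
    · intro i hi hi'
      interval_cases i <;> simp <;> omega
    · intro i j hi hij hj
      interval_cases j <;> interval_cases i <;> simp <;> omega
    · simp [hk, h4, h5, h6, h7]
  by_contra hc
  obtain ⟨x, hx, y, hy, hxy⟩ := Finset.one_lt_card.1 (not_le.1 hc)
  simp only [Finset.mem_filter] at hx hy
  obtain ⟨x1, x2, x3⟩ := hS x hx.1
  obtain ⟨y1, y2, y3⟩ := hS y hy.1
  rcases lt_or_gt_of_ne hxy with hl | hl
  · exact key x y x1 hl y2 x3 y3 hx.2 hy.2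
  · exact key y x y1 hl x2 y3 x3 hy.2 hx.2

theorem diamond_split (f : ℕ → Bool) (k : Bool) (S : Finset ℕ) :
    (S.filter (fun x => f x = k)).card + (S.filter (fun x => f x = !k)).card = S.card := by
  rw [← Finset.card_filter_add_card_filter_not (s := S) (fun x => f x = k)]
  congr 2
  ext x
  cases f x <;> cases k <;> simp

theorem diamond_min (S : Finset ℕ) (n : ℕ) (hn : n + 1 ≤ S.card) :
    ∃ s ∈ S, ∃ T ⊆ S, n ≤ T.card ∧ ∀ x ∈ T, s < x := by
  have hne : S.Nonempty := Finset.card_pos.1 (by omega)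
  refine ⟨S.min' hne, S.min'_mem hne, S.erase (S.min' hne), Finset.erase_subset _ _, ?_, ?_⟩
  · rw [Finset.card_erase_of_mem (S.min'_mem hne)]; omega
  · intro x hx
    exact S.min'_lt_of_mem_erase_min' hne hx

/-- Every 2-coloring of the edges of the complete graph on `{1,…,15}` contains a
monochromatic ordered copy of the diamond `K₄ - e` with ordering `B`
(all edges of `K₄` on `{1,2,3,4}` except `(3, 4)`), i.e. `r_<(K₄ - e) ≤ 15`
for this ordering. -/
theorem orderedRamsey_diamond_B_le :
    ∀ c : ℕ → ℕ → Bool,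
      ContainsMonoOrderedCopy 4 15 {(1, 2), (1, 3), (1, 4), (2, 3), (2, 4)} c := by
  intro c
  by_contra h
  obtain ⟨k, hk⟩ : ∃ k, 7 ≤ ((Finset.Icc 2 15).filter (fun x => c 1 x = k)).card := by
    by_contra! hc
    have h1 := hc true
    have h2 := hc false
    have h3 := diamond_split (c 1) true (Finset.Icc 2 15)
    simp only [Nat.card_Icc, Bool.not_true] at h3
    omega
  obtain ⟨s, hs, S, hS, hSc, hSl⟩ := diamond_min _ 6 hk
  have hS' : ∀ x ∈ S, 2 ≤ x ∧ x ≤ 15 ∧ c 1 x = k := by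
    intro x hx
    have := hS hx
    simpa [and_assoc] using this
  simp only [Finset.mem_filter, Finset.mem_Icc] at hs
  have e1 := diamond_aux c h k 1 s le_rfl (by omega) hs.2 S
    (fun x hx => ⟨hSl x hx, (hS' x hx).2⟩)
  have e2 := diamond_split (c s) k S
  obtain ⟨t, ht, T, hT, hTc, hTl⟩ :=
    diamond_min (S.filter (fun x => c s x = !k)) 4 (by omega)
  rw [Finset.mem_filter] at ht
  have hT' : ∀ x ∈ T, x ∈ S ∧ c s x = !k := fun x hx => Finset.mem_filter.1 (hT hx)
  have f1 := diamond_aux c h k 1 t le_rfl (by have := hS' t ht.1; omega) (hS' t ht.1).2.2 T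
    (fun x hx => ⟨hTl x hx, (hS' x (hT' x hx).1).2⟩)
  have f2 := diamond_aux c h (!k) s t (by omega) (hSl t ht.1) ht.2 T
    (fun x hx => ⟨hTl x hx, (hS' x (hT' x hx).1).2.1, (hT' x hx).2⟩)
  have f3 := diamond_split (c t) k T
  omega
end

section
/- The ordered Ramsey number of the ordered diamond graph K₄ − e with ordering C (vertex set {1,2,3,4}, all edges of K₄ except {1,3}) is at most 14: every 2-coloring of the edges of the complete graph on {1,...,14} contains a monochromatic ordered copy of this graph. -/
theorem copy_of_four_s7 (c : ℕ → ℕ → Bool) (b : Bool) (x y z w : ℕ) (h1 : 1 ≤ x) (h2 : x < y)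
    (h3 : y < z) (h4 : z < w) (h5 : w ≤ 14) (e1 : c x y = b) (e2 : c x w = b) (e3 : c y z = b)
    (e4 : c y w = b) (e5 : c z w = b) :
    ContainsMonoOrderedCopy 4 14 {(1, 2), (1, 4), (2, 3), (2, 4), (3, 4)} c := by
  refine ⟨b, fun i => if i = 1 then x else if i = 2 then y else if i = 3 then z else w, ?_, ?_, ?_⟩
  · intro i _ _
    dsimp only
    split_ifs <;> omega
  · intro i j _ _ _
    dsimp only
    split_ifs <;> omega
  · intro e he
    simp only [Finset.mem_insert, Finset.mem_singleton] at he
    rcases he with rfl | rfl | rfl | rfl | rfl <;> simpa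

theorem copy_of_clique (c : ℕ → ℕ → Bool) (b : Bool) (s : Finset ℕ) (hs : 4 ≤ s.card)
    (hr : ∀ x ∈ s, 1 ≤ x ∧ x ≤ 13) (hc : ∀ x ∈ s, ∀ y ∈ s, x < y → c x y = b) :
    ContainsMonoOrderedCopy 4 14 {(1, 2), (1, 4), (2, 3), (2, 4), (3, 4)} c := by
  obtain ⟨t, hts, ht⟩ := Finset.exists_subset_card_eq hs
  let f := t.orderEmbOfFin ht
  have hm : ∀ i, f i ∈ s := fun i => hts (t.orderEmbOfFin_mem ht i)
  have hl : ∀ i j : Fin 4, i < j → f i < f j := fun i j h => f.strictMono h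
  have he : ∀ i j : Fin 4, i < j → c (f i) (f j) = b :=
    fun i j h => hc _ (hm i) _ (hm j) (hl i j h)
  have h0 := hr _ (hm 0)
  have h3 := hr _ (hm 3)
  exact copy_of_four_s7 c b (f 0) (f 1) (f 2) (f 3) h0.1 (hl _ _ (by decide)) (hl _ _ (by decide))
    (hl _ _ (by decide)) (by omega) (he _ _ (by decide)) (he _ _ (by decide)) (he _ _ (by decide))
    (he _ _ (by decide)) (he _ _ (by decide))

theorem copy_of_nbhd (c : ℕ → ℕ → Bool) (b : Bool) (T : Finset ℕ) (hT : 7 ≤ T.card)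
    (hr : ∀ x ∈ T, 1 ≤ x ∧ x ≤ 13) (hc : ∀ x ∈ T, c x 14 = b) :
    ContainsMonoOrderedCopy 4 14 {(1, 2), (1, 4), (2, 3), (2, 4), (3, 4)} c := by
  by_contra hno
  have hcard := Finset.card_filter_add_card_filter_not (s := T) (fun x => ∃ z ∈ T, z < x ∧ c z x = b)
  have hor : 4 ≤ (T.filter (fun x => ∃ z ∈ T, z < x ∧ c z x = b)).card ∨
      4 ≤ (T.filter (fun x => ¬ ∃ z ∈ T, z < x ∧ c z x = b)).card := by omega
  rcases hor with h | h
  · refine hno (copy_of_clique c (!b) _ h (fun x hx => hr x (Finset.mem_filter.1 hx).1) ?_)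
    intro x hx y hy hxy
    obtain ⟨hxT, z, hz, hzx, hzc⟩ := Finset.mem_filter.1 hx
    have hyT := (Finset.mem_filter.1 hy).1
    by_contra hne
    have hb : c x y = b := by simpa using hne
    exact hno (copy_of_four_s7 c b z x y 14 (hr z hz).1 hzx hxy (by have := hr y hyT; omega) le_rfl
      hzc (hc z hz) hb (hc x hxT) (hc y hyT))
  · refine hno (copy_of_clique c (!b) _ h (fun x hx => hr x (Finset.mem_filter.1 hx).1) ?_)
    intro x hx y hy hxy
    have hxT := (Finset.mem_filter.1 hx).1
    by_contra hne
    have hb : c x y = b := by simpa using hne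
    exact (Finset.mem_filter.1 hy).2 ⟨x, hxT, hxy, hb⟩

/-- Every 2-coloring of the edges of the complete graph on `{1,…,14}` contains a
monochromatic ordered copy of the diamond `K₄ - e` with ordering `C`
(all edges of `K₄` on `{1,2,3,4}` except `(1, 3)`), i.e. `r_<(K₄ - e) ≤ 14`
for this ordering. -/
theorem orderedRamsey_diamond_C_le :
    ∀ c : ℕ → ℕ → Bool,
      ContainsMonoOrderedCopy 4 14 {(1, 2), (1, 4), (2, 3), (2, 4), (3, 4)} c := by
  intro c
  have hcard := Finset.card_filter_add_card_filter_not (s := Finset.Icc 1 13) (fun x => c x 14 = true)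
  rw [Nat.card_Icc] at hcard
  have hor : 7 ≤ ((Finset.Icc 1 13).filter (fun x => c x 14 = true)).card ∨
      7 ≤ ((Finset.Icc 1 13).filter (fun x => ¬ c x 14 = true)).card := by omega
  rcases hor with h | h
  · exact copy_of_nbhd c true _ h (fun x hx => Finset.mem_Icc.1 (Finset.mem_filter.1 hx).1)
      (fun x hx => (Finset.mem_filter.1 hx).2)
  · exact copy_of_nbhd c false _ h (fun x hx => Finset.mem_Icc.1 (Finset.mem_filter.1 hx).1)
      (fun x hx => by simpa using (Finset.mem_filter.1 hx).2)
end

section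
/- The ordered Ramsey number of the 3-pan graph with ordering A (vertex set {1,2,3,4}, edge set {{2,3},{2,4},{3,4},{1,4}}, i.e., a triangle on {2,3,4} with a pendant edge from vertex 1 to vertex 4) is at most 10: every 2-coloring of the edges of the complete graph on {1,...,10} contains a monochromatic ordered copy of this graph. -/
theorem pan_copy (c : ℕ → ℕ → Bool) (p q r s : ℕ) (b : Bool) (h0 : 1 ≤ p) (h1 : p < q)
    (h2 : q < r) (h3 : r < s) (h4 : s ≤ 10) (e1 : c p s = b) (e2 : c q r = b)
    (e3 : c q s = b) (e4 : c r s = b) :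
    ContainsMonoOrderedCopy 4 10 {(1, 4), (2, 3), (2, 4), (3, 4)} c := by
  refine ⟨b, fun i => if i = 1 then p else if i = 2 then q else if i = 3 then r else s,
    ?_, ?_, ?_⟩
  · intro i _ _
    dsimp only
    split_ifs <;> omega
  · intro i j _ _ _
    dsimp only
    split_ifs <;> omega
  · intro e he
    simp only [Finset.mem_insert, Finset.mem_singleton] at he
    rcases he with rfl | rfl | rfl | rfl <;> simpa

theorem pan_of_five (c : ℕ → ℕ → Bool) (b : Bool)
    (h : 5 ≤ ((Finset.Icc 1 9).filter (fun x => c x 10 = b)).card) :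
    ContainsMonoOrderedCopy 4 10 {(1, 4), (2, 3), (2, 4), (3, 4)} c := by
  obtain ⟨t, ht, hc⟩ := Finset.exists_subset_card_eq h
  let f := t.orderEmbOfFin hc
  have hm : ∀ i, (1 ≤ f i ∧ f i ≤ 9) ∧ c (f i) 10 = b := by
    intro i
    have := ht (t.orderEmbOfFin_mem hc i)
    simpa only [Finset.mem_filter, Finset.mem_Icc] using this
  have hlt : ∀ i j, i < j → f i < f j := fun i j hij => f.strictMono hij
  by_cases hb : ∃ i j : Fin 5, 0 < i ∧ i < j ∧ c (f i) (f j) = b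
  · obtain ⟨i, j, hi, hij, e⟩ := hb
    exact pan_copy c (f 0) (f i) (f j) 10 b (hm 0).1.1 (hlt _ _ hi) (hlt _ _ hij)
      (by have := (hm j).1.2; omega) le_rfl (hm 0).2 e (hm i).2 (hm j).2
  · have hn : ∀ i j : Fin 5, 0 < i → i < j → c (f i) (f j) = !b := by
      intro i j hi hij
      have : c (f i) (f j) ≠ b := fun e => hb ⟨i, j, hi, hij, e⟩
      exact Bool.eq_not_of_ne this
    exact pan_copy c (f 1) (f 2) (f 3) (f 4) (!b) (hm 1).1.1 (hlt _ _ (by decide))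
      (hlt _ _ (by decide)) (hlt _ _ (by decide)) (by have := (hm 4).1.2; omega)
      (hn _ _ (by decide) (by decide)) (hn _ _ (by decide) (by decide))
      (hn _ _ (by decide) (by decide)) (hn _ _ (by decide) (by decide))

/-- Every 2-coloring of the edges of the complete graph on `{1,…,10}` contains a
monochromatic ordered copy of the 3-pan with ordering `A` (a triangle on
`{2,3,4}` with pendant edge `(1, 4)`), i.e. `r_<(3-pan) ≤ 10` for this ordering. -/
theorem orderedRamsey_pan_A_le :
    ∀ c : ℕ → ℕ → Bool,
      ContainsMonoOrderedCopy 4 10 {(1, 4), (2, 3), (2, 4), (3, 4)} c := by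
  intro c
  have h := Finset.card_filter_add_card_filter_not (s := Finset.Icc 1 9) (fun x => c x 10 = true)
  simp only [Bool.not_eq_true, Nat.card_Icc] at h
  by_cases h5 : 5 ≤ ((Finset.Icc 1 9).filter (fun x => c x 10 = true)).card
  · exact pan_of_five c true h5
  · exact pan_of_five c false (by omega)
end

section
/- The ordered Ramsey number of the 3-pan graph with ordering C (vertex set {1,2,3,4}, edge set {{2,3},{2,4},{3,4},{1,2}}, i.e., a triangle on {2,3,4} with a pendant edge from vertex 1 to vertex 2) is at most 11: every 2-coloring of the edges of the complete graph on {1,...,11} contains a monochromatic ordered copy of this graph. -/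
/-- No monochromatic copy of the pan. -/
def PanFree (c : ℕ → ℕ → Bool) : Prop :=
  ∀ w x y z, 1 ≤ w → w < x → x < y → y < z → z ≤ 11 → ∀ b,
    c w x = b → c x y = b → c x z = b → c y z = b → False

theorem ne_not {a b : Bool} (h : ¬ a = b) : a = !b := by
  revert h; cases a <;> cases b <;> simp

theorem pig7 : ∀ f : Fin 7 → Bool, ∃ i j k l : Fin 7, i < j ∧ j < k ∧ k < l ∧
    f j = f i ∧ f k = f i ∧ f l = f i := by
  have h : ∀ a b c d e f g : Bool, ∃ i j k l : Fin 7, i < j ∧ j < k ∧ k < l ∧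
    (![a,b,c,d,e,f,g] j = ![a,b,c,d,e,f,g] i ∧ ![a,b,c,d,e,f,g] k = ![a,b,c,d,e,f,g] i
      ∧ ![a,b,c,d,e,f,g] l = ![a,b,c,d,e,f,g] i) := by
    decide +kernel
  intro f
  have e : f = ![f 0, f 1, f 2, f 3, f 4, f 5, f 6] := by
    ext i; fin_cases i <;> rfl
  rw [e]
  exact h _ _ _ _ _ _ _

theorem pig5 : ∀ a b c d e : Bool, ∃ i j k : Fin 5, i < j ∧ j < k ∧
    ![a,b,c,d,e] j = ![a,b,c,d,e] i ∧ ![a,b,c,d,e] k = ![a,b,c,d,e] i := by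
  decide +kernel

theorem ramsey6 (c : ℕ → ℕ → Bool) (g : ℕ → ℕ) (hg : ∀ i j, i < j → g i < g j) :
    ∃ i j k b, i < j ∧ j < k ∧ k < 6 ∧ c (g i) (g j) = b ∧ c (g i) (g k) = b ∧
      c (g j) (g k) = b := by
  obtain ⟨i, j, k, hij, hjk, h1, h2⟩ := pig5 (c (g 0) (g 1)) (c (g 0) (g 2)) (c (g 0) (g 3))
    (c (g 0) (g 4)) (c (g 0) (g 5))
  have e : ∀ i : Fin 5, ![c (g 0) (g 1), c (g 0) (g 2), c (g 0) (g 3),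
    c (g 0) (g 4), c (g 0) (g 5)] i = c (g 0) (g (i.1 + 1)) := by
    intro i; fin_cases i <;> rfl
  simp only [e] at h1 h2
  have hi := i.2
  have hj := j.2
  have hk := k.2
  have hij' : i.1 < j.1 := hij
  have hjk' : j.1 < k.1 := hjk
  generalize hb : c (g 0) (g (i.1 + 1)) = b at h1 h2
  by_cases p : c (g (i.1+1)) (g (j.1+1)) = b
  · exact ⟨0, i.1+1, j.1+1, b, by omega, by omega, by omega, hb, h1, p⟩
  by_cases q : c (g (i.1+1)) (g (k.1+1)) = b
  · exact ⟨0, i.1+1, k.1+1, b, by omega, by omega, by omega, hb, h2, q⟩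
  by_cases r : c (g (j.1+1)) (g (k.1+1)) = b
  · exact ⟨0, j.1+1, k.1+1, b, by omega, by omega, by omega, h1, h2, r⟩
  refine ⟨i.1+1, j.1+1, k.1+1, !b, by omega, by omega, by omega, ?_, ?_, ?_⟩
  · exact ne_not p
  · exact ne_not q
  · exact ne_not r

theorem four (c : ℕ → ℕ → Bool) (H : PanFree c) (a v x y z w : ℕ) (b : Bool) (ha : 1 ≤ a)
    (hav : a < v) (hvx : v < x) (hxy : x < y) (hyz : y < z) (hzw : z < w) (hw : w ≤ 11)
    (h0 : c a v = b) (h1 : c v x = b) (h2 : c v y = b) (h3 : c v z = b) (h4 : c v w = b) :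
    False := by
  have key : ∀ p q, v < p → p < q → q ≤ 11 → c v p = b → c v q = b → c p q = !b := by
    intro p q hp hq hq' e1 e2
    have := H a v p q ha hav hp hq hq' b h0 e1 e2
    exact ne_not this
  exact H x y z w (by omega) hxy hyz hzw hw (!b)
    (key _ _ (by omega) (by omega) (by omega) h1 h2)
    (key _ _ (by omega) (by omega) (by omega) h2 h3)
    (key _ _ (by omega) (by omega) (by omega) h2 h4)
    (key _ _ (by omega) (by omega) (by omega) h3 h4)

theorem left_mono (c : ℕ → ℕ → Bool) (H : PanFree c) (a a' v : ℕ) (ha : 1 ≤ a) (ha' : 1 ≤ a')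
    (hav : a < v) (hav' : a' < v) (hv : v ≤ 4) : c a v = c a' v := by
  by_contra hne
  obtain ⟨i, j, k, l, hij, hjk, hkl, h1, h2, h3⟩ := pig7 (fun i => c v (5 + i.1))
  have hij' : i.1 < j.1 := hij
  have hjk' : j.1 < k.1 := hjk
  have hkl' : k.1 < l.1 := hkl
  have hl := l.2
  by_cases e : c a v = c v (5 + i.1)
  · exact four c H a v (5 + i.1) (5 + j.1) (5 + k.1) (5 + l.1) _ ha hav (by omega) (by omega)
      (by omega) (by omega) (by omega) e rfl h1 h2 h3
  · have e' : c a' v = c v (5 + i.1) := by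
      revert hne e
      cases c a v <;> cases c a' v <;> cases c v (5 + i.1) <;> simp
    exact four c H a' v (5 + i.1) (5 + j.1) (5 + k.1) (5 + l.1) _ ha' hav' (by omega) (by omega)
      (by omega) (by omega) (by omega) e' rfl h1 h2 h3

theorem core (c : ℕ → ℕ → Bool) (H : PanFree c) (u v t : ℕ) (b : Bool) (hu : 2 ≤ u)
    (huv : u < v) (hv : v ≤ 4) (ht : 2 ≤ t) (ht' : t ≤ 4) (h1 : c 1 u = b) (h2 : c u v = b)
    (h3 : c 1 t = !b) : False := by
  have tri : ∀ x y z k, 5 ≤ x → x < y → y < z → z ≤ 11 → c x y = k → c x z = k → c y z = k →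
      ∀ a, 1 ≤ a → a < x → c a x = !b := by
    intro x y z k hx hxy hyz hz e1 e2 e3
    have L : ∀ a, 1 ≤ a → a < x → c a x = !k := by
      intro a ha hax
      have : ¬ c a x = k := fun e => H a x y z ha hax hxy hyz hz k e e1 e2 e3
      exact ne_not this
    by_cases hk : k = b
    · subst hk; exact L
    · have hk' : (!k) = b := by revert hk; cases k <;> cases b <;> simp
      exfalso
      exact H 1 u v x (by omega) (by omega) huv (by omega) (by omega) b h1 h2
        ((L u (by omega) (by omega)).trans hk') ((L v (by omega) (by omega)).trans hk')
  have two : ∀ x x', 5 ≤ x → x < x' → x' ≤ 11 →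
      (∀ a, 1 ≤ a → a < x → c a x = !b) → (∀ a, 1 ≤ a → a < x' → c a x' = !b) → False := by
    intro x x' hx hxx hx' l l'
    exact H 1 t x x' (by omega) (by omega) (by omega) hxx hx' (!b) h3 (l t (by omega) (by omega))
      (l' t (by omega) (by omega)) (l' x (by omega) hxx)
  obtain ⟨i, j, k, b1, hij, hjk, hk, e1, e2, e3⟩ := ramsey6 c (fun i => 5 + i) (by intros; omega)
  have T1 := tri _ _ _ _ (by omega) (by omega) (by omega) (by omega) e1 e2 e3
  obtain ⟨i', j', k', b2, hij', hjk', hk', e1', e2', e3'⟩ := ramsey6 c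
    (fun m => if m < i then 5 + m else 6 + m) (by intros; split_ifs <;> omega)
  have T2 := tri _ _ _ _ (by split_ifs <;> omega) (by split_ifs <;> omega)
    (by split_ifs <;> omega) (by split_ifs <;> omega) e1' e2' e3'
  by_cases hi : i' < i
  · simp only [hi, if_true] at T2
    exact two _ _ (by omega) (by omega) (by omega) T2 T1
  · simp only [hi, if_false] at T2
    exact two _ _ (by omega) (by omega) (by omega) T1 T2

theorem panFree_false (c : ℕ → ℕ → Bool) (H : PanFree c) : False := by
  have a1 := left_mono c H 1 2 3 (by omega) (by omega) (by omega) (by omega) (by omega)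
  have a2 := left_mono c H 1 2 4 (by omega) (by omega) (by omega) (by omega) (by omega)
  have a3 := left_mono c H 1 3 4 (by omega) (by omega) (by omega) (by omega) (by omega)
  have P := H 1 2 3 4 (by omega) (by omega) (by omega) (by omega) (by omega)
  have C1 := core c H 2 3 4 (c 1 2) (by omega) (by omega) (by omega) (by omega) (by omega) rfl
  have C2 := core c H 2 4 3 (c 1 2) (by omega) (by omega) (by omega) (by omega) (by omega) rfl
  have C3 := core c H 3 4 2 (c 1 3) (by omega) (by omega) (by omega) (by omega) (by omega) rfl
  have P' := P (c 1 2) rfl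
  rw [← a1, ← a2, ← a3] at P'
  rw [← a1] at C1
  rw [← a2] at C2
  rw [← a3] at C3
  revert P' C1 C2 C3
  cases c 1 2 <;> cases c 1 3 <;> cases c 1 4 <;> simp

/-- Every 2-coloring of the edges of the complete graph on `{1,…,11}` contains a
monochromatic ordered copy of the 3-pan with ordering `C` (a triangle on
`{2,3,4}` with pendant edge `(1, 2)`), i.e. `r_<(3-pan) ≤ 11` for this ordering. -/
theorem orderedRamsey_pan_C_le :
    ∀ c : ℕ → ℕ → Bool,
      ContainsMonoOrderedCopy 4 11 {(1, 2), (2, 3), (2, 4), (3, 4)} c := by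
  intro c
  by_contra hc
  apply panFree_false c
  intro w x y z hw hwx hxy hyz hz b e1 e2 e3 e4
  apply hc
  refine ⟨b, fun i => if i = 1 then w else if i = 2 then x else if i = 3 then y else z,
    ?_, ?_, ?_⟩
  · intro i _ _
    dsimp only
    split_ifs <;> omega
  · intro i j _ _ _
    dsimp only
    split_ifs <;> omega
  · intro e he
    simp only [Finset.mem_insert, Finset.mem_singleton] at he
    rcases he with rfl | rfl | rfl | rfl <;> simpa
end

section
/- Let K_m^1 denote the complete-with-1-pendant ordered graph on m+1 vertices: vertex set {1,...,m+1}, with all edges among {2,...,m+1} together with the edge {1,2}. For all m, n ≥ 2, the off-diagonal ordered Ramsey number satisfies r_<(K_m^1, K_n^1) ≤ R(m,n) + m + n − 1, where R(m,n) is the classical Ramsey number, i.e., the least N such that every red/blue coloring of the edges of the complete graph on N vertices contains a red complete subgraph on m vertices or a blue complete subgraph on n vertices. -/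
/-- The classical Ramsey number `R(m, n)`: the least `N` such that every red/blue
coloring of the edges of the complete graph on `{1,…,N}` contains a red complete
subgraph on `m` vertices or a blue complete subgraph on `n` vertices.
(`c i j = true` means edge `(i, j)` (with `i < j`) is red, `false` means blue.) -/
noncomputable def classicalRamsey (m n : ℕ) : ℕ :=
  sInf {N : ℕ | ∀ c : ℕ → ℕ → Bool,
    (∃ S : Finset ℕ, S ⊆ Finset.Icc 1 N ∧ S.card = m ∧
      ∀ i ∈ S, ∀ j ∈ S, i < j → c i j = true) ∨
    (∃ S : Finset ℕ, S ⊆ Finset.Icc 1 N ∧ S.card = n ∧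
      ∀ i ∈ S, ∀ j ∈ S, i < j → c i j = false)}

/-- The edge set of the complete-with-1-pendant ordered graph `K_m^1` on `m + 1`
vertices: all edges among `{2,…,m+1}` together with the edge `(1, 2)`. -/
def pendantEdges (m : ℕ) : Finset (ℕ × ℕ) :=
  insert (1, 2)
    (((Finset.Icc 2 (m + 1)) ×ˢ (Finset.Icc 2 (m + 1))).filter (fun p => p.1 < p.2))

theorem aux_enum (T : Finset ℕ) (k : ℕ) (h : T.card = k) :
    ∃ f : ℕ → ℕ, (∀ i, 1 ≤ i → i ≤ k → f i ∈ T) ∧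
      (∀ i j, 1 ≤ i → i < j → j ≤ k → f i < f j) ∧ (∀ x ∈ T, f 1 ≤ x) := by
  refine ⟨fun i => if hi : i - 1 < k then T.orderEmbOfFin h ⟨i - 1, hi⟩ else 0, ?_, ?_, ?_⟩
  · intro i h1 h2
    have hi : i - 1 < k := by omega
    simp only [hi, dif_pos]
    exact Finset.orderEmbOfFin_mem _ _ _
  · intro i j h1 h2 h3
    have hi : i - 1 < k := by omega
    have hj : j - 1 < k := by omega
    simp only [hi, hj, dif_pos]
    apply (T.orderEmbOfFin h).strictMono
    show i - 1 < j - 1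
    omega
  · intro x hx
    have hk : 0 < k := by rw [← h]; exact Finset.card_pos.mpr ⟨x, hx⟩
    have hi : 1 - 1 < k := by omega
    simp only [hi, dif_pos]
    have := Finset.orderEmbOfFin_zero h hk
    simp only [Nat.sub_self]
    rw [this]
    exact Finset.min'_le _ _ hx

theorem aux_copy (m N : ℕ) (c : ℕ → ℕ → Bool) (b : Bool) (S : Finset ℕ) (u v : ℕ)
    (hm : 2 ≤ m) (hS : S ⊆ Finset.Icc 1 N) (hc : S.card = m)
    (hmono : ∀ i ∈ S, ∀ j ∈ S, i < j → c i j = b)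
    (hv : v ∈ S) (hmin : ∀ x ∈ S, v ≤ x) (hu : 1 ≤ u) (huv : u < v) (hcol : c u v = b) :
    ContainsOrderedCopy (m + 1) N (pendantEdges m) c b := by
  obtain ⟨f, hf, hlt, hf1⟩ := aux_enum S m hc
  have h1 : f 1 = v := le_antisymm (hf1 v hv) (hmin _ (hf 1 le_rfl (by omega)))
  refine ⟨fun i => if i = 1 then u else f (i - 1), ?_, ?_, ?_⟩
  · intro i hi1 hi2
    by_cases h : i = 1
    · have := Finset.mem_Icc.mp (hS hv)
      simp only [h, if_true]; omega
    · simp only [h, if_false]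
      exact Finset.mem_Icc.mp (hS (hf (i - 1) (by omega) (by omega)))
  · intro i j hi hij hj
    have hj1 : j ≠ 1 := by omega
    by_cases h : i = 1
    · simp only [h, hj1, if_true, if_false]
      exact lt_of_lt_of_le huv (hmin _ (hf _ (by omega) (by omega)))
    · simp only [h, hj1, if_false]
      exact hlt _ _ (by omega) (by omega) (by omega)
  · rintro ⟨i, j⟩ he
    simp only [pendantEdges, Finset.mem_insert, Finset.mem_filter, Finset.mem_product,
      Finset.mem_Icc, Prod.mk.injEq] at he
    rcases he with ⟨rfl, rfl⟩ | ⟨⟨⟨a1, a2⟩, a3, a4⟩, a5⟩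
    · simpa [h1] using hcol
    · have hi1 : i ≠ 1 := by omega
      have hj1 : j ≠ 1 := by omega
      simp only [hi1, hj1, if_false]
      exact hmono _ (hf _ (by omega) (by omega)) _ (hf _ (by omega) (by omega))
        (hlt _ _ (by omega) (by omega) (by omega))

theorem aux_ramsey (s : ℕ) : ∀ m n : ℕ, m + n = s → ∃ N : ℕ, ∀ (c : ℕ → ℕ → Bool) (T : Finset ℕ),
    N ≤ T.card →
    (∃ S : Finset ℕ, S ⊆ T ∧ S.card = m ∧ ∀ i ∈ S, ∀ j ∈ S, i < j → c i j = true) ∨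
    (∃ S : Finset ℕ, S ⊆ T ∧ S.card = n ∧ ∀ i ∈ S, ∀ j ∈ S, i < j → c i j = false) := by
  induction s with
  | zero =>
    intro m n h
    exact ⟨0, fun c T _ => Or.inl ⟨∅, by simp, by simp; omega, by simp⟩⟩
  | succ s ih =>
    intro m n h
    rcases m with _ | m
    · exact ⟨0, fun c T _ => Or.inl ⟨∅, by simp, by simp, by simp⟩⟩
    rcases n with _ | n
    · exact ⟨0, fun c T _ => Or.inr ⟨∅, by simp, by simp, by simp⟩⟩
    obtain ⟨N1, h1⟩ := ih m (n + 1) (by omega)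
    obtain ⟨N2, h2⟩ := ih (m + 1) n (by omega)
    refine ⟨N1 + N2 + 1, fun c T hT => ?_⟩
    have hne : T.Nonempty := Finset.card_pos.mp (by omega)
    set t := T.min' hne with ht
    have htT : t ∈ T := Finset.min'_mem _ _
    have hmin : ∀ x ∈ T.erase t, t < x := fun x hx =>
      lt_of_le_of_ne (Finset.min'_le _ _ (Finset.mem_of_mem_erase hx))
        (Finset.ne_of_mem_erase hx).symm
    have hcard : (T.erase t).card = T.card - 1 := Finset.card_erase_of_mem htT
    have hsplit := Finset.card_filter_add_card_filter_not (s := T.erase t) (fun x => c t x = true)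
    have ext : ∀ (b : Bool) (k : ℕ) (S : Finset ℕ), S ⊆ (T.erase t).filter (fun x => c t x = b) →
        S.card = k → (∀ i ∈ S, ∀ j ∈ S, i < j → c i j = b) →
        ∃ S' : Finset ℕ, S' ⊆ T ∧ S'.card = k + 1 ∧ ∀ i ∈ S', ∀ j ∈ S', i < j → c i j = b := by
      intro b k S hS hk hmono
      have hS' : ∀ x ∈ S, x ∈ T.erase t ∧ c t x = b := fun x hx => Finset.mem_filter.mp (hS hx)
      have htS : t ∉ S := fun h => absurd (hmin t (hS' t h).1) (lt_irrefl _)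
      refine ⟨insert t S, ?_, by rw [Finset.card_insert_of_notMem htS, hk], ?_⟩
      · intro x hx
        rcases Finset.mem_insert.mp hx with rfl | hx
        · exact htT
        · exact Finset.mem_of_mem_erase (hS' x hx).1
      · intro i hi j hj hij
        rcases Finset.mem_insert.mp hi with hi | hi <;> rcases Finset.mem_insert.mp hj with hj | hj
        · omega
        · rw [hi]; exact (hS' j hj).2
        · have := hmin i (hS' i hi).1
          omega
        · exact hmono i hi j hj hij
    have sub : ∀ (b : Bool), (T.erase t).filter (fun x => c t x = b) ⊆ T := fun b =>
      (Finset.filter_subset _ _).trans (Finset.erase_subset _ _)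
    simp only [Bool.not_eq_true] at hsplit
    by_cases hc : N1 ≤ ((T.erase t).filter (fun x => c t x = true)).card
    · rcases h1 c _ hc with ⟨S, a, b, d⟩ | ⟨S, a, b, d⟩
      · exact Or.inl (ext true m S a b d)
      · exact Or.inr ⟨S, a.trans (sub _), b, d⟩
    · rcases h2 c ((T.erase t).filter (fun x => c t x = false)) (by omega) with
        ⟨S, a, b, d⟩ | ⟨S, a, b, d⟩
      · exact Or.inl ⟨S, a.trans (sub _), b, d⟩
      · exact Or.inr (ext false n S a b d)

theorem aux_classical (m n : ℕ) (c : ℕ → ℕ → Bool) (T : Finset ℕ)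
    (hT : classicalRamsey m n ≤ T.card) :
    (∃ S : Finset ℕ, S ⊆ T ∧ S.card = m ∧ ∀ i ∈ S, ∀ j ∈ S, i < j → c i j = true) ∨
    (∃ S : Finset ℕ, S ⊆ T ∧ S.card = n ∧ ∀ i ∈ S, ∀ j ∈ S, i < j → c i j = false) := by
  have hmem : classicalRamsey m n ∈ {N : ℕ | ∀ c : ℕ → ℕ → Bool,
    (∃ S : Finset ℕ, S ⊆ Finset.Icc 1 N ∧ S.card = m ∧
      ∀ i ∈ S, ∀ j ∈ S, i < j → c i j = true) ∨
    (∃ S : Finset ℕ, S ⊆ Finset.Icc 1 N ∧ S.card = n ∧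
      ∀ i ∈ S, ∀ j ∈ S, i < j → c i j = false)} := by
    apply Nat.sInf_mem
    obtain ⟨N, hN⟩ := aux_ramsey (m + n) m n rfl
    exact ⟨N, fun c => hN c (Finset.Icc 1 N) (by simp)⟩
  generalize classicalRamsey m n = R at hmem hT
  obtain ⟨f, hf, hlt, -⟩ := aux_enum T _ rfl
  have tr : ∀ (b : Bool) (k : ℕ), (∃ S : Finset ℕ, S ⊆ Finset.Icc 1 R ∧ S.card = k ∧
      ∀ i ∈ S, ∀ j ∈ S, i < j → c (f i) (f j) = b) →
      ∃ S : Finset ℕ, S ⊆ T ∧ S.card = k ∧ ∀ i ∈ S, ∀ j ∈ S, i < j → c i j = b := by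
    rintro b k ⟨S, hS, hk, hm⟩
    have hS' : ∀ x ∈ S, 1 ≤ x ∧ x ≤ T.card := fun x hx => by
      have := Finset.mem_Icc.mp (hS hx)
      omega
    have hmono : ∀ i ∈ S, ∀ j ∈ S, i < j → f i < f j := fun i hi j hj h =>
      hlt i j (hS' i hi).1 h (hS' j hj).2
    refine ⟨S.image f, ?_, ?_, ?_⟩
    · intro x hx
      obtain ⟨i, hi, rfl⟩ := Finset.mem_image.mp hx
      exact hf i (hS' i hi).1 (hS' i hi).2
    · rw [Finset.card_image_of_injOn, hk]
      intro i hi j hj hij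
      by_contra hne
      rcases lt_or_gt_of_ne hne with h | h
      · have := hmono i hi j hj h
        omega
      · have := hmono j hj i hi h
        omega
    · intro x hx y hy hxy
      obtain ⟨i, hi, rfl⟩ := Finset.mem_image.mp hx
      obtain ⟨j, hj, rfl⟩ := Finset.mem_image.mp hy
      apply hm i hi j hj
      by_contra hne
      rcases lt_or_eq_of_le (not_lt.mp hne) with h | h
      · have := hmono j hj i hi h
        omega
      · rw [h] at hxy; omega
  rcases hmem (fun i j => c (f i) (f j)) with h | h
  · exact Or.inl (tr _ _ h)
  · exact Or.inr (tr _ _ h)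

theorem aux_bound (m n N : ℕ) (c : ℕ → ℕ → Bool) (b : Bool) (hm : 2 ≤ m) (hn : 2 ≤ n)
    (h1 : ¬ ContainsOrderedCopy (m + 1) N (pendantEdges m) c b)
    (h2 : ¬ ContainsOrderedCopy (n + 1) N (pendantEdges n) c (!b))
    (A : Finset ℕ) (hA : A ⊆ Finset.Icc 2 N)
    (hAS : ∀ v ∈ A, ∃ S : Finset ℕ, S ⊆ Finset.Icc 1 N ∧ S.card = m ∧
      (∀ i ∈ S, ∀ j ∈ S, i < j → c i j = b) ∧ v ∈ S ∧ ∀ x ∈ S, v ≤ x) :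
    A.card < n := by
  have key : ∀ v ∈ A, ∀ u, 1 ≤ u → u < v → c u v = !b := by
    intro v hv u hu huv
    obtain ⟨S, a1, a2, a3, a4, a5⟩ := hAS v hv
    by_contra hne
    have : c u v = b := by
      cases b <;> simpa using hne
    exact h1 (aux_copy m N c b S u v hm a1 a2 a3 a4 a5 hu huv this)
  by_contra hc
  obtain ⟨S, hSA, hS⟩ := Finset.exists_subset_card_eq (not_lt.mp hc)
  have hne : S.Nonempty := Finset.card_pos.mp (by omega)
  have hI : ∀ x ∈ S, 2 ≤ x ∧ x ≤ N := fun x hx => Finset.mem_Icc.mp (hA (hSA hx))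
  have hv := Finset.min'_mem S hne
  refine h2 (aux_copy n N c (!b) S 1 (S.min' hne) hn ?_ hS ?_ hv
    (fun x hx => Finset.min'_le _ _ hx) le_rfl ?_ ?_)
  · intro x hx
    have := hI x hx
    exact Finset.mem_Icc.mpr (by omega)
  · intro i hi j hj hij
    exact key j (hSA hj) i (by have := hI i hi; omega) hij
  · have := hI _ hv
    omega
  · exact key _ (hSA hv) 1 le_rfl (by have := hI _ hv; omega)


/-- For all `m, n ≥ 2`, every red/blue coloring of the edges of the complete graph on
`{1,…,R(m,n) + m + n - 1}` contains a red ordered copy of `K_m^1` or a blue ordered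
copy of `K_n^1`; that is, `r_<(K_m^1, K_n^1) ≤ R(m,n) + m + n - 1`. -/
theorem orderedRamsey_pendant_le (m n : ℕ) (hm : 2 ≤ m) (hn : 2 ≤ n) :
    ∀ c : ℕ → ℕ → Bool,
      ContainsOrderedCopy (m + 1) (classicalRamsey m n + m + n - 1) (pendantEdges m) c
        true ∨
      ContainsOrderedCopy (n + 1) (classicalRamsey m n + m + n - 1) (pendantEdges n) c
        false := by

  intro c
  by_contra hcon
  rw [not_or] at hcon
  obtain ⟨h1, h2⟩ := hcon
  set N := classicalRamsey m n + m + n - 1 with hN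
  classical
  let P : ℕ → Bool → ℕ → Prop := fun k b v => ∃ S : Finset ℕ, S ⊆ Finset.Icc 1 N ∧ S.card = k ∧
      (∀ i ∈ S, ∀ j ∈ S, i < j → c i j = b) ∧ v ∈ S ∧ ∀ x ∈ S, v ≤ x
  let A := (Finset.Icc 2 N).filter (P m true)
  let B := (Finset.Icc 2 N).filter (P n false)
  have hA : A.card < n := aux_bound m n N c true hm hn h1 h2 A (Finset.filter_subset _ _)
    (fun v hv => (Finset.mem_filter.mp hv).2)
  have hB : B.card < m := aux_bound n m N c false hn hm h2 h1 B (Finset.filter_subset _ _)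
    (fun v hv => (Finset.mem_filter.mp hv).2)
  have hcard : classicalRamsey m n ≤ (Finset.Icc 2 N \ (A ∪ B)).card := by
    have e1 := Finset.le_card_sdiff (A ∪ B) (Finset.Icc 2 N)
    have e2 := Finset.card_union_le A B
    have e3 : (Finset.Icc 2 N).card = N + 1 - 2 := Nat.card_Icc 2 N
    omega
  have fin : ∀ (k : ℕ) (b : Bool), 2 ≤ k → (∀ v ∈ Finset.Icc 2 N, P k b v → v ∈ A ∪ B) →
      ¬ ∃ S : Finset ℕ, S ⊆ Finset.Icc 2 N \ (A ∪ B) ∧ S.card = k ∧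
        ∀ i ∈ S, ∀ j ∈ S, i < j → c i j = b := by
    rintro k b hk hP ⟨S, hS, hSk, hmono⟩
    have hne : S.Nonempty := Finset.card_pos.mp (by omega)
    have hv := Finset.min'_mem S hne
    have hv' := Finset.mem_sdiff.mp (hS hv)
    refine hv'.2 (hP _ hv'.1 ⟨S, ?_, hSk, hmono, hv, fun x hx => Finset.min'_le _ _ hx⟩)
    exact (hS.trans Finset.sdiff_subset).trans (Finset.Icc_subset_Icc (by omega) le_rfl)
  rcases aux_classical m n c _ hcard with h | h
  · exact fin m true hm (fun v hv hp =>
      Finset.mem_union_left _ (Finset.mem_filter.mpr ⟨hv, hp⟩)) h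
  · exact fin n false hn (fun v hv hp =>
      Finset.mem_union_right _ (Finset.mem_filter.mpr ⟨hv, hp⟩)) h
end

section
/- Let K_m^1 denote the complete-with-1-pendant ordered graph on m+1 vertices: vertex set {1,...,m+1}, with all edges among {2,...,m+1} together with the edge {1,2}. For all m, n ≥ 2, there exists a red/blue coloring of the edges of the complete graph on the ordered vertex set {1,...,R(m,n)+m+n−2} that contains no red ordered copy of K_m^1 and no blue ordered copy of K_n^1, where R(m,n) is the classical Ramsey number. -/
theorem growth_aux (φ : ℕ → ℕ) (k : ℕ)
    (h : ∀ i j, 1 ≤ i → i < j → j ≤ k → φ i < φ j) (i : ℕ) (hi : 1 ≤ i) (d : ℕ) :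
    i + d ≤ k → φ i + d ≤ φ (i + d) := by
  induction d with
  | zero => intro _; simp
  | succ d ih =>
    intro hd
    have h1 := ih (by omega)
    have h2 := h (i + d) (i + (d + 1)) (by omega) (by omega) hd
    omega

theorem clique_aux (φ : ℕ → ℕ) (k N t M : ℕ) (c d : ℕ → ℕ → Bool) (b : Bool)
    (hN : ∀ i, 1 ≤ i → i ≤ k + 1 → 1 ≤ φ i ∧ φ i ≤ N)
    (h : ∀ i j, 1 ≤ i → i < j → j ≤ k + 1 → φ i < φ j)
    (hE : ∀ i j, 2 ≤ i → i < j → j ≤ k + 1 → c (φ i) (φ j) = b)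
    (ht : t < φ 2) (hM : N - t ≤ M)
    (hc : ∀ i j, t < i → c i j = d (i - t) (j - t)) :
    ∃ S : Finset ℕ, S ⊆ Finset.Icc 1 M ∧ S.card = k ∧
      ∀ i ∈ S, ∀ j ∈ S, i < j → d i j = b := by
  have hlt : ∀ i, 2 ≤ i → i ≤ k + 1 → t < φ i := by
    intro i hi hk
    rcases Nat.eq_or_lt_of_le hi with rfl | h2
    · exact ht
    · exact ht.trans (h 2 i (by omega) h2 hk)
  refine ⟨(Finset.Icc 2 (k + 1)).image (fun i => φ i - t), ?_, ?_, ?_⟩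
  · intro x hx
    simp only [Finset.mem_image, Finset.mem_Icc] at hx ⊢
    obtain ⟨i, ⟨h1, h2⟩, rfl⟩ := hx
    have := hlt i h1 h2
    have := hN i (by omega) h2
    omega
  · rw [Finset.card_image_of_injOn]
    · simp
    · intro i hi j hj hij
      simp only [Finset.coe_Icc, Set.mem_Icc] at hi hj
      simp only at hij
      have := hlt i hi.1 hi.2
      have := hlt j hj.1 hj.2
      rcases lt_trichotomy i j with h1 | h1 | h1
      · have := h i j (by omega) h1 hj.2
        omega
      · exact h1
      · have := h j i (by omega) h1 hi.2
        omega
  · intro x hx y hy hxy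
    simp only [Finset.mem_image, Finset.mem_Icc] at hx hy
    obtain ⟨i, hi, rfl⟩ := hx
    obtain ⟨j, hj, rfl⟩ := hy
    have h1 := hlt i hi.1 hi.2
    rw [← hc _ _ h1]
    apply hE i j hi.1 _ hj.2
    by_contra hle
    rcases Nat.eq_or_lt_of_le (not_lt.mp hle) with h2 | h2
    · subst h2; omega
    · have := h j i (by omega) h2 hi.2
      omega

theorem good_aux (m n : ℕ) (hm : 2 ≤ m) (hn : 2 ≤ n) : ∃ d : ℕ → ℕ → Bool,
    ¬ ((∃ S : Finset ℕ, S ⊆ Finset.Icc 1 (classicalRamsey m n - 1) ∧ S.card = m ∧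
      ∀ i ∈ S, ∀ j ∈ S, i < j → d i j = true) ∨
    (∃ S : Finset ℕ, S ⊆ Finset.Icc 1 (classicalRamsey m n - 1) ∧ S.card = n ∧
      ∀ i ∈ S, ∀ j ∈ S, i < j → d i j = false)) := by
  rcases Nat.eq_zero_or_pos (classicalRamsey m n) with h0 | h0
  · refine ⟨fun _ _ => true, ?_⟩
    rw [h0]
    rintro (⟨S, hS, hc, -⟩ | ⟨S, hS, hc, -⟩)
    · have := Finset.card_le_card hS
      simp at this
      subst this
      simp at hc
      omega
    · have := Finset.card_le_card hS
      simp at this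
      subst this
      simp at hc
      omega
  · have h1 : classicalRamsey m n - 1 < classicalRamsey m n := by omega
    have h2 := Nat.notMem_of_lt_sInf h1
    simp only [Set.mem_setOf_eq] at h2
    exact not_forall.mp h2

theorem edges_aux (k : ℕ) (c : ℕ → ℕ → Bool) (b : Bool) (φ : ℕ → ℕ)
    (h : ∀ e ∈ pendantEdges k, c (φ e.1) (φ e.2) = b) :
    c (φ 1) (φ 2) = b ∧ ∀ i j, 2 ≤ i → i < j → j ≤ k + 1 → c (φ i) (φ j) = b := by
  constructor
  · exact h (1, 2) (by simp [pendantEdges])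
  · intro i j h1 h2 h3
    apply h (i, j)
    simp only [pendantEdges, Finset.mem_insert, Finset.mem_filter, Finset.mem_product,
      Finset.mem_Icc]
    right
    omega

/-- For all `m, n ≥ 2`, there is a red/blue coloring of the edges of the complete graph
on `{1,…,R(m,n) + m + n - 2}` with no red ordered copy of `K_m^1` and no blue ordered
copy of `K_n^1`. -/
theorem orderedRamsey_pendant_lowerBound (m n : ℕ) (hm : 2 ≤ m) (hn : 2 ≤ n) :
    ∃ c : ℕ → ℕ → Bool,
      ¬ ContainsOrderedCopy (m + 1) (classicalRamsey m n + m + n - 2) (pendantEdges m) c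
          true ∧
      ¬ ContainsOrderedCopy (n + 1) (classicalRamsey m n + m + n - 2) (pendantEdges n) c
          false := by
  obtain ⟨d, hd⟩ := good_aux m n hm hn
  rw [not_or] at hd
  let c : ℕ → ℕ → Bool := fun i j =>
    if m + n - 1 < i then d (i - (m + n - 1)) (j - (m + n - 1))
    else if j ≤ m then true else if i ≤ m then false
    else if j ≤ m + n - 1 then false else true
  have hcM : ∀ i j, m + n - 1 < i → c i j = d (i - (m + n - 1)) (j - (m + n - 1)) := by
    intro i j h
    simp [c, h]
  refine ⟨c, ?_, ?_⟩
  · rintro ⟨φ, hN, hφ, hE⟩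
    obtain ⟨h12, hE⟩ := edges_aux _ _ _ _ hE
    by_cases h : m + n - 1 < φ 2
    · exact hd.1 (clique_aux φ m _ _ _ c d true hN hφ hE h (by omega) hcM)
    · have a1 := hφ 1 2 (by omega) (by omega) (by omega)
      have a2 := growth_aux φ _ hφ 1 le_rfl m (by omega)
      have a3 := hE 2 (m + 1) le_rfl (by omega) le_rfl
      have a4 := hN 1 le_rfl (by omega)
      rw [add_comm 1 m] at a2
      simp only [c] at h12 a3
      split_ifs at h12 a3 <;> first | omega | simp_all
  · rintro ⟨φ, hN, hφ, hE⟩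
    obtain ⟨h12, hE⟩ := edges_aux _ _ _ _ hE
    by_cases h : m + n - 1 < φ 2
    · exact hd.2 (clique_aux φ n _ _ _ c d false hN hφ hE h (by omega) hcM)
    · have a1 := hφ 1 2 (by omega) (by omega) (by omega)
      have a2 := growth_aux φ _ hφ 2 (by omega) (n - 1) (by omega)
      have a3 := hE 2 (n + 1) le_rfl (by omega) le_rfl
      have a4 := hN 1 le_rfl (by omega)
      rw [show 2 + (n - 1) = n + 1 by omega] at a2
      simp only [c] at h12 a3
      split_ifs at h12 a3 <;> first | omega | simp_all
end

section
/- Let K_m^1 denote the complete-with-1-pendant ordered graph on m+1 vertices: vertex set {1,...,m+1}, with all edges among {2,...,m+1} together with the edge {1,2}. For all m, n ≥ 2, the off-diagonal ordered Ramsey number satisfies r_<(K_m^1, K_n^1) = R(m,n) + m + n − 1, where R(m,n) is the classical Ramsey number. -/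
theorem enum_aux (T : Finset ℕ) : ∃ g : ℕ → ℕ,
    (∀ i, 1 ≤ i → i ≤ T.card → g i ∈ T) ∧
    (∀ i j, 1 ≤ i → i < j → j ≤ T.card → g i < g j) ∧
    (∀ x ∈ T, ∃ i, 1 ≤ i ∧ i ≤ T.card ∧ g i = x) := by
  classical
  let f := T.orderEmbOfFin rfl
  have key : ∀ i (h : i - 1 < T.card),
      (fun i => if h : i - 1 < T.card then f ⟨i - 1, h⟩ else 0) i = f ⟨i - 1, h⟩ := by
    intro i h
    simp [h]
  refine ⟨fun i => if h : i - 1 < T.card then f ⟨i - 1, h⟩ else 0, ?_, ?_, ?_⟩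
  · intro i h1 h2
    rw [key i (by omega)]
    exact T.orderEmbOfFin_mem rfl _
  · intro i j h1 h2 h3
    rw [key i (by omega), key j (by omega)]
    apply f.strictMono
    rw [Fin.mk_lt_mk]
    omega
  · intro x hx
    have hr : x ∈ Set.range (T.orderEmbOfFin rfl) := by
      rw [Finset.range_orderEmbOfFin]; exact hx
    obtain ⟨i, hi⟩ := hr
    refine ⟨i.1 + 1, by omega, by omega, ?_⟩
    rw [key _ (by simp)]
    exact hi

theorem copy_iff (m N : ℕ) (hm : 2 ≤ m) (c : ℕ → ℕ → Bool) (b : Bool) :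
    ContainsOrderedCopy (m + 1) N (pendantEdges m) c b ↔
    ∃ (S : Finset ℕ) (v u : ℕ), S ⊆ Finset.Icc 1 N ∧ S.card = m ∧
      (∀ i ∈ S, ∀ j ∈ S, i < j → c i j = b) ∧ u ∈ S ∧ (∀ x ∈ S, u ≤ x) ∧
      1 ≤ v ∧ v < u ∧ c v u = b := by
  classical
  constructor
  · rintro ⟨φ, h1, h2, h3⟩
    have hle : ∀ i j, 1 ≤ i → i ≤ j → j ≤ m + 1 → φ i ≤ φ j := by
      intro i j hi hij hj
      rcases hij.eq_or_lt with h | h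
      · rw [h]
      · exact (h2 i j hi h hj).le
    refine ⟨(Finset.Icc 2 (m + 1)).image φ, φ 1, φ 2, ?_, ?_, ?_, ?_, ?_, ?_, ?_, ?_⟩
    · intro x hx
      simp only [Finset.mem_image, Finset.mem_Icc] at hx ⊢
      obtain ⟨i, hi, rfl⟩ := hx
      exact h1 i (by omega) (by omega)
    · rw [Finset.card_image_of_injOn]
      · simp
      · intro i hi j hj hij
        simp only [Finset.coe_Icc, Set.mem_Icc] at hi hj
        rcases lt_trichotomy i j with h | h | h
        · have := h2 i j (by omega) h (by omega)
          omega
        · exact h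
        · have := h2 j i (by omega) h (by omega)
          omega
    · intro x hx y hy hxy
      simp only [Finset.mem_image, Finset.mem_Icc] at hx hy
      obtain ⟨i, hi, rfl⟩ := hx
      obtain ⟨j, hj, rfl⟩ := hy
      have hij : i < j := by
        by_contra h
        have := hle j i (by omega) (by omega) (by omega)
        omega
      apply h3 (i, j)
      simp [pendantEdges]
      omega
    · exact Finset.mem_image_of_mem _ (by simp; omega)
    · intro x hx
      simp only [Finset.mem_image, Finset.mem_Icc] at hx
      obtain ⟨i, hi, rfl⟩ := hx
      exact hle 2 i (by omega) (by omega) (by omega)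
    · exact (h1 1 (by omega) (by omega)).1
    · exact h2 1 2 (by omega) (by omega) (by omega)
    · exact h3 (1, 2) (by simp [pendantEdges])
  · rintro ⟨S, v, u, hS, hc, hcl, hu, hmin, hv, hvu, hb⟩
    obtain ⟨g, g1, g2, g3⟩ := enum_aux S
    rw [hc] at g1 g2 g3
    have hg1 : g 1 = u := by
      obtain ⟨i, hi1, hi2, hi⟩ := g3 u hu
      by_cases h : i = 1
      · rw [← h, hi]
      · have := g2 1 i (by omega) (by omega) hi2
        have := hmin (g 1) (g1 1 (by omega) (by omega))
        omega
    refine ⟨fun i => if i = 1 then v else g (i - 1), ?_, ?_, ?_⟩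
    · intro i hi1 hi2
      by_cases h : i = 1
      · have := Finset.mem_Icc.1 (hS hu)
        simp only [h, if_true]
        omega
      · simp only [h, if_false]
        exact Finset.mem_Icc.1 (hS (g1 (i - 1) (by omega) (by omega)))
    · intro i j hi hij hj
      have hj1 : j ≠ 1 := by omega
      by_cases h : i = 1
      · simp only [h, hj1, if_true, if_false]
        have := hmin (g (j - 1)) (g1 (j - 1) (by omega) (by omega))
        omega
      · simp only [h, hj1, if_false]
        exact g2 _ _ (by omega) (by omega) (by omega)
    · rintro ⟨i, j⟩ he
      simp only [pendantEdges, Finset.mem_insert, Prod.mk.injEq, Finset.mem_filter,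
        Finset.mem_product, Finset.mem_Icc] at he
      rcases he with ⟨rfl, rfl⟩ | he
      · simpa [hg1] using hb
      · have hi1 : i ≠ 1 := by omega
        have hj1 : j ≠ 1 := by omega
        simp only [hi1, hj1, if_false]
        exact hcl _ (g1 _ (by omega) (by omega)) _ (g1 _ (by omega) (by omega))
          (g2 _ _ (by omega) (by omega) (by omega))

theorem ramsey_exists (k : ℕ) : ∀ m n : ℕ, m + n ≤ k → ∃ N : ℕ, ∀ T : Finset ℕ, N ≤ T.card →
    ∀ c : ℕ → ℕ → Bool,
    (∃ S : Finset ℕ, S ⊆ T ∧ S.card = m ∧ ∀ i ∈ S, ∀ j ∈ S, i < j → c i j = true) ∨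
    (∃ S : Finset ℕ, S ⊆ T ∧ S.card = n ∧ ∀ i ∈ S, ∀ j ∈ S, i < j → c i j = false) := by
  classical
  have ext : ∀ (c : ℕ → ℕ → Bool) (b : Bool) (T S : Finset ℕ) (v : ℕ), v ∈ T →
      (∀ x ∈ T, v ≤ x) → S ⊆ (T.erase v).filter (fun w => c v w = b) →
      (∀ i ∈ S, ∀ j ∈ S, i < j → c i j = b) →
      ∃ S' : Finset ℕ, S' ⊆ T ∧ S'.card = S.card + 1 ∧
        ∀ i ∈ S', ∀ j ∈ S', i < j → c i j = b := by
    intro c b T S v hv hmin hS hcl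
    have hS' : ∀ x ∈ S, (x ≠ v ∧ x ∈ T) ∧ c v x = b := by
      intro x hx
      simpa using hS hx
    refine ⟨insert v S, ?_, ?_, ?_⟩
    · intro x hx
      rcases Finset.mem_insert.1 hx with rfl | hx
      · exact hv
      · exact (hS' x hx).1.2
    · rw [Finset.card_insert_of_notMem]
      intro h
      exact (hS' v h).1.1 rfl
    · intro i hi j hj hij
      rcases Finset.mem_insert.1 hi with rfl | hi' <;> rcases Finset.mem_insert.1 hj with rfl | hj'
      · omega
      · exact (hS' j hj').2
      · have := hmin i (hS' i hi').1.2
        omega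
      · exact hcl i hi' j hj' hij
  induction k with
  | zero =>
    intro m n h
    exact ⟨0, fun T _ c => Or.inl ⟨∅, by simp, by simp; omega, by simp⟩⟩
  | succ k ih =>
    intro m n h
    rcases m with _ | m
    · exact ⟨0, fun T _ c => Or.inl ⟨∅, by simp, by simp, by simp⟩⟩
    rcases n with _ | n
    · exact ⟨0, fun T _ c => Or.inr ⟨∅, by simp, by simp, by simp⟩⟩
    obtain ⟨N1, h1⟩ := ih m (n + 1) (by omega)
    obtain ⟨N2, h2⟩ := ih (m + 1) n (by omega)
    refine ⟨N1 + N2 + 1, fun T hT c => ?_⟩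
    have hne : T.Nonempty := by
      rw [← Finset.card_pos]; omega
    set v := T.min' hne with hvd
    have hv : v ∈ T := T.min'_mem hne
    have hmin : ∀ x ∈ T, v ≤ x := fun x hx => T.min'_le x hx
    have hcard := Finset.card_erase_of_mem hv
    have hsplit := Finset.card_filter_add_card_filter_not (s := T.erase v) (fun w => c v w = true)
    have hsub : ∀ b, (T.erase v).filter (fun w => c v w = b) ⊆ T := fun b =>
      (Finset.filter_subset _ _).trans (Finset.erase_subset _ _)
    simp only [Bool.not_eq_true] at hsplit
    by_cases hc : N1 ≤ ((T.erase v).filter (fun w => c v w = true)).card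
    · rcases h1 _ hc c with ⟨S, hS, hSc, hcl⟩ | ⟨S, hS, hSc, hcl⟩
      · left
        rw [← hSc]
        exact ext c true T S v hv hmin hS hcl
      · exact Or.inr ⟨S, hS.trans (hsub _), hSc, hcl⟩
    · have hc2 : N2 ≤ ((T.erase v).filter (fun w => c v w = false)).card := by omega
      rcases h2 _ hc2 c with ⟨S, hS, hSc, hcl⟩ | ⟨S, hS, hSc, hcl⟩
      · exact Or.inl ⟨S, hS.trans (hsub _), hSc, hcl⟩
      · right
        rw [← hSc]
        exact ext c false T S v hv hmin hS hcl

theorem ramsey_spec (m n : ℕ) : ∀ c : ℕ → ℕ → Bool,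
    (∃ S : Finset ℕ, S ⊆ Finset.Icc 1 (classicalRamsey m n) ∧ S.card = m ∧
      ∀ i ∈ S, ∀ j ∈ S, i < j → c i j = true) ∨
    (∃ S : Finset ℕ, S ⊆ Finset.Icc 1 (classicalRamsey m n) ∧ S.card = n ∧
      ∀ i ∈ S, ∀ j ∈ S, i < j → c i j = false) := by
  have hne : {N : ℕ | ∀ c : ℕ → ℕ → Bool,
    (∃ S : Finset ℕ, S ⊆ Finset.Icc 1 N ∧ S.card = m ∧
      ∀ i ∈ S, ∀ j ∈ S, i < j → c i j = true) ∨
    (∃ S : Finset ℕ, S ⊆ Finset.Icc 1 N ∧ S.card = n ∧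
      ∀ i ∈ S, ∀ j ∈ S, i < j → c i j = false)}.Nonempty := by
    obtain ⟨N, hN⟩ := ramsey_exists (m + n) m n le_rfl
    exact ⟨N, fun c => hN _ (by simp) c⟩
  exact Nat.sInf_mem hne

theorem ramsey_spec_set (m n : ℕ) (T : Finset ℕ) (hT : classicalRamsey m n ≤ T.card)
    (c : ℕ → ℕ → Bool) :
    (∃ S : Finset ℕ, S ⊆ T ∧ S.card = m ∧ ∀ i ∈ S, ∀ j ∈ S, i < j → c i j = true) ∨
    (∃ S : Finset ℕ, S ⊆ T ∧ S.card = n ∧ ∀ i ∈ S, ∀ j ∈ S, i < j → c i j = false) := by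
  classical
  obtain ⟨g, g1, g2, -⟩ := enum_aux T
  have tr : ∀ (b : Bool) (S : Finset ℕ), S ⊆ Finset.Icc 1 (classicalRamsey m n) →
      (∀ i ∈ S, ∀ j ∈ S, i < j → c (g i) (g j) = b) →
      ∃ S' : Finset ℕ, S' ⊆ T ∧ S'.card = S.card ∧
        ∀ i ∈ S', ∀ j ∈ S', i < j → c i j = b := by
    intro b S hS hcl
    have hS' : ∀ x ∈ S, 1 ≤ x ∧ x ≤ T.card := by
      intro x hx
      have := Finset.mem_Icc.1 (hS hx)
      omega
    refine ⟨S.image g, ?_, ?_, ?_⟩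
    · intro x hx
      obtain ⟨i, hi, rfl⟩ := Finset.mem_image.1 hx
      exact g1 i (hS' i hi).1 (hS' i hi).2
    · apply Finset.card_image_of_injOn
      intro i hi j hj hij
      have := hS' i hi
      have := hS' j hj
      rcases lt_trichotomy i j with h | h | h
      · have := g2 i j (by omega) h (by omega)
        omega
      · exact h
      · have := g2 j i (by omega) h (by omega)
        omega
    · intro x hx y hy hxy
      obtain ⟨i, hi, rfl⟩ := Finset.mem_image.1 hx
      obtain ⟨j, hj, rfl⟩ := Finset.mem_image.1 hy
      have := hS' i hi
      have := hS' j hj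
      apply hcl i hi j hj
      rcases lt_trichotomy i j with h | h | h
      · exact h
      · subst h; omega
      · have := g2 j i (by omega) h (by omega)
        omega
  rcases ramsey_spec m n (fun i j => c (g i) (g j)) with ⟨S, hS, hSc, hcl⟩ | ⟨S, hS, hSc, hcl⟩
  · left
    rw [← hSc]
    exact tr true S hS hcl
  · right
    rw [← hSc]
    exact tr false S hS hcl

theorem star_copy (m N : ℕ) (hm : 2 ≤ m) (c : ℕ → ℕ → Bool) (b : Bool) (A : Finset ℕ)
    (hA : A ⊆ Finset.Icc 2 N) (h : ∀ v ∈ A, ∀ w, 1 ≤ w → w < v → c w v = b)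
    (hc : m ≤ A.card) : ContainsOrderedCopy (m + 1) N (pendantEdges m) c b := by
  rw [copy_iff m N hm]
  obtain ⟨S, hSA, hS⟩ := Finset.exists_subset_card_eq hc
  have hne : S.Nonempty := by
    rw [← Finset.card_pos]; omega
  have hb : ∀ x ∈ S, 2 ≤ x ∧ x ≤ N := fun x hx => Finset.mem_Icc.1 (hA (hSA hx))
  have hu := S.min'_mem hne
  refine ⟨S, 1, S.min' hne, ?_, hS, ?_, hu, fun x hx => S.min'_le x hx, le_rfl, ?_, ?_⟩
  · intro x hx
    have := hb x hx
    rw [Finset.mem_Icc]; omega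
  · intro i hi j hj hij
    exact h j (hSA hj) i (by have := hb i hi; omega) hij
  · have := hb _ hu
    omega
  · exact h _ (hSA hu) 1 le_rfl (by have := hb _ hu; omega)

theorem clique_copy (m N : ℕ) (hm : 2 ≤ m) (c : ℕ → ℕ → Bool) (b : Bool) (S : Finset ℕ)
    (hA : S ⊆ Finset.Icc 2 N) (h : ∀ v ∈ S, ∃ w, 1 ≤ w ∧ w < v ∧ c w v = b)
    (hS : S.card = m) (hcl : ∀ i ∈ S, ∀ j ∈ S, i < j → c i j = b) :
    ContainsOrderedCopy (m + 1) N (pendantEdges m) c b := by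
  rw [copy_iff m N hm]
  have hne : S.Nonempty := by
    rw [← Finset.card_pos]; omega
  have hu := S.min'_mem hne
  obtain ⟨w, h1, h2, h3⟩ := h _ hu
  refine ⟨S, w, S.min' hne, ?_, hS, hcl, hu, fun x hx => S.min'_le x hx, h1, h2, h3⟩
  exact hA.trans (Finset.Icc_subset_Icc (by omega) le_rfl)

theorem shift_clique (K N : ℕ) (b : Bool) (c c' : ℕ → ℕ → Bool) (S : Finset ℕ)
    (hS : ∀ x ∈ S, K < x ∧ x ≤ N)
    (hc : ∀ i ∈ S, ∀ j ∈ S, i < j → c' i j = c (i - K) (j - K))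
    (hcl : ∀ i ∈ S, ∀ j ∈ S, i < j → c' i j = b) :
    ∃ S' : Finset ℕ, S' ⊆ Finset.Icc 1 (N - K) ∧ S'.card = S.card ∧
      ∀ i ∈ S', ∀ j ∈ S', i < j → c i j = b := by
  classical
  refine ⟨S.image (fun x => x - K), ?_, ?_, ?_⟩
  · intro x hx
    obtain ⟨i, hi, rfl⟩ := Finset.mem_image.1 hx
    have := hS i hi
    rw [Finset.mem_Icc]; omega
  · apply Finset.card_image_of_injOn
    intro i hi j hj hij
    have := hS i hi
    have := hS j hj
    simp only at hij
    omega
  · intro x hx y hy hxy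
    obtain ⟨i, hi, rfl⟩ := Finset.mem_image.1 hx
    obtain ⟨j, hj, rfl⟩ := Finset.mem_image.1 hy
    rw [← hc i hi j hj (by omega)]
    exact hcl i hi j hj (by omega)

/-- For all `m, n ≥ 2`, the off-diagonal ordered Ramsey number of the
complete-with-1-pendant graphs satisfies `r_<(K_m^1, K_n^1) = R(m,n) + m + n - 1`. -/
theorem orderedRamsey_pendant_eq (m n : ℕ) (hm : 2 ≤ m) (hn : 2 ≤ n) :
    IsLeast {N : ℕ | ∀ c : ℕ → ℕ → Bool,
      ContainsOrderedCopy (m + 1) N (pendantEdges m) c true ∨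
      ContainsOrderedCopy (n + 1) N (pendantEdges n) c false}
      (classicalRamsey m n + m + n - 1) := by
  have hR : 1 ≤ classicalRamsey m n := by
    by_contra h
    have h0 : classicalRamsey m n = 0 := by omega
    rcases ramsey_spec m n (fun _ _ => true) with ⟨S, hS, hSc, -⟩ | ⟨S, hS, hSc, -⟩ <;>
    · rw [h0] at hS
      have := Finset.card_le_card hS
      simp at this
      subst this
      simp at hSc
      omega
  constructor
  · intro c
    set N := classicalRamsey m n + m + n - 1 with hN
    by_contra hcon
    push Not at hcon
    obtain ⟨hc1, hc2⟩ := hcon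
    obtain ⟨A, hAm⟩ : ∃ A : Bool → Finset ℕ, ∀ b v, v ∈ A b ↔
        v ∈ Finset.Icc 2 N ∧ ∀ w, 1 ≤ w → w < v → c w v = b := by
      classical
      refine ⟨fun b => @Finset.filter _ (fun v => ∀ w, 1 ≤ w → w < v → c w v = b)
        (Classical.decPred _) (Finset.Icc 2 N), fun b v => ?_⟩
      exact @Finset.mem_filter _ _ (Classical.decPred _) _ _
    have hA : ∀ b, A b ⊆ Finset.Icc 2 N := fun b v hv => ((hAm b v).1 hv).1
    have hA2 : ∀ b, ∀ v ∈ A b, ∀ w, 1 ≤ w → w < v → c w v = b := fun b v hv =>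
      ((hAm b v).1 hv).2
    have h1 : (A true).card < m := by
      by_contra h
      exact hc1 (star_copy m N hm c true (A true) (hA _) (hA2 _) (by omega))
    have h2 : (A false).card < n := by
      by_contra h
      exact hc2 (star_copy n N hn c false (A false) (hA _) (hA2 _) (by omega))
    let C := Finset.Icc 2 N \ (A true ∪ A false)
    have hC : classicalRamsey m n ≤ C.card := by
      have h3 := Finset.le_card_sdiff (A true ∪ A false) (Finset.Icc 2 N)
      have h4 := Finset.card_union_le (A true) (A false)
      have h5 : (Finset.Icc 2 N).card = N - 1 := by simp
      change _ ≤ C.card at h3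
      omega
    have hC0 : C ⊆ Finset.Icc 2 N := Finset.sdiff_subset
    have hCp : ∀ b, ∀ v ∈ C, ∃ w, 1 ≤ w ∧ w < v ∧ c w v = b := by
      intro b v hv
      have hv1 := Finset.mem_sdiff.1 hv
      have hv2 : v ∉ A (!b) := by
        intro h
        apply hv1.2
        rw [Finset.mem_union]
        cases b
        · exact Or.inl h
        · exact Or.inr h
      by_contra hno
      apply hv2
      refine (hAm _ _).2 ⟨hv1.1, fun w hw1 hw2 => ?_⟩
      by_contra hne
      exact hno ⟨w, hw1, hw2, by simpa using hne⟩
    rcases ramsey_spec_set m n C hC c with ⟨S, hS, hSc, hcl⟩ | ⟨S, hS, hSc, hcl⟩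
    · exact hc1 (clique_copy m N hm c true S (hS.trans hC0) (fun v hv => hCp _ v (hS hv)) hSc hcl)
    · exact hc2 (clique_copy n N hn c false S (hS.trans hC0) (fun v hv => hCp _ v (hS hv)) hSc hcl)
  · intro N hN
    by_contra hlt
    have hlt' : N - (n + m - 1) < classicalRamsey m n := by omega
    have hnot := Nat.notMem_of_lt_sInf hlt'
    apply hnot
    intro c
    have hspec := hN (fun i j => if j ≤ n then false else if j ≤ n + m - 1 then true else
      if i ≤ n then true else if i ≤ n + m - 1 then false else
      c (i - (n + m - 1)) (j - (n + m - 1)))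
    set c' : ℕ → ℕ → Bool := fun i j => if j ≤ n then false else if j ≤ n + m - 1 then true else
      if i ≤ n then true else if i ≤ n + m - 1 then false else
      c (i - (n + m - 1)) (j - (n + m - 1)) with hc'
    have e1 : ∀ i j, j ≤ n → c' i j = false := by
      intro i j h; simp [hc', h]
    have e2 : ∀ i j, n < j → j ≤ n + m - 1 → c' i j = true := by
      intro i j h h'; simp only [hc']; rw [if_neg (by omega), if_pos h']
    have e3 : ∀ i j, n + m - 1 < j → i ≤ n → c' i j = true := by
      intro i j h h'; simp only [hc']
      rw [if_neg (by omega), if_neg (by omega), if_pos h']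
    have e4 : ∀ i j, n + m - 1 < j → n < i → i ≤ n + m - 1 → c' i j = false := by
      intro i j h h' h''; simp only [hc']
      rw [if_neg (by omega), if_neg (by omega), if_neg (by omega), if_pos h'']
    have e5 : ∀ i j, n + m - 1 < j → n + m - 1 < i →
        c' i j = c (i - (n + m - 1)) (j - (n + m - 1)) := by
      intro i j h h'; simp only [hc']
      rw [if_neg (by omega), if_neg (by omega), if_neg (by omega), if_neg (by omega)]
    rw [copy_iff m N hm, copy_iff n N hn] at hspec
    rcases hspec with ⟨S, v, u, hS, hSc, hcl, hu, hmin, hv, hvu, hb⟩ |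
      ⟨S, v, u, hS, hSc, hcl, hu, hmin, hv, hvu, hb⟩
    · left
      have hun : n < u := by
        by_contra h
        rw [e1 v u (by omega)] at hb
        cases hb
      by_cases huB : u ≤ n + m - 1
      · exfalso
        have hsub : S ⊆ Finset.Icc (n + 1) (n + m - 1) := by
          intro x hx
          have hux := hmin x hx
          rw [Finset.mem_Icc]
          refine ⟨by omega, ?_⟩
          by_contra h
          have h6 := hcl u hu x hx (by omega)
          rw [e4 u x (by omega) hun huB] at h6
          cases h6
        have := Finset.card_le_card hsub
        simp at this
        omega
      · have hb' : ∀ x ∈ S, n + m - 1 < x ∧ x ≤ N := fun x hx => by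
          have := hmin x hx
          have := Finset.mem_Icc.1 (hS hx)
          omega
        have := shift_clique (n + m - 1) N true c c' S hb'
          (fun i hi j hj _ => e5 i j (hb' j hj).1 (hb' i hi).1) hcl
        rw [hSc] at this
        exact this
    · right
      by_cases hun : u ≤ n
      · exfalso
        have hsub : S ⊆ Finset.Icc 2 n := by
          intro x hx
          have hux := hmin x hx
          rw [Finset.mem_Icc]
          refine ⟨by omega, ?_⟩
          by_contra h
          have h6 := hcl u hu x hx (by omega)
          by_cases hxB : x ≤ n + m - 1
          · rw [e2 u x (by omega) hxB] at h6
            cases h6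
          · rw [e3 u x (by omega) hun] at h6
            cases h6
        have := Finset.card_le_card hsub
        simp at this
        omega
      · have huB : n + m - 1 < u := by
          by_contra h
          rw [e2 v u (by omega) (by omega)] at hb
          cases hb
        have hb' : ∀ x ∈ S, n + m - 1 < x ∧ x ≤ N := fun x hx => by
          have := hmin x hx
          have := Finset.mem_Icc.1 (hS hx)
          omega
        have := shift_clique (n + m - 1) N false c c' S hb'
          (fun i hi j hj _ => e5 i j (hb' j hj).1 (hb' i hi).1) hcl
        rw [hSc] at this
        exact this
end

section
/- The ordered Ramsey number of the ordered diamond graph K₄ − e with vertex set {1,2,3,4} and all edges of K₄ except {1,2} equals 12: every 2-coloring of the edges of the complete graph on {1,...,12} contains a monochromatic ordered copy of this graph, and there is a 2-coloring of the edges of the complete graph on {1,...,11} containing no such copy. -/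
theorem six_aux (c : ℕ → ℕ → Bool) (b : Bool)
    (H : ∀ p q r s, 1 ≤ p → p < q → q < r → r < s → s ≤ 12 → ∀ b : Bool,
      ¬ (c p r = b ∧ c p s = b ∧ c q r = b ∧ c q s = b ∧ c r s = b))
    (S : Finset ℕ) (hS : ∀ x ∈ S, 1 ≤ x ∧ x < 12 ∧ c x 12 = b) (h6 : 6 ≤ S.card) : False := by
  obtain ⟨T, hTS, hT⟩ := Finset.exists_subset_card_eq h6
  have key : ∃ f : ℕ → ℕ, (∀ i < 6, f i ∈ S) ∧ ∀ i j, i < j → j < 6 → f i < f j := by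
    refine ⟨fun i => if h : i < 6 then T.orderEmbOfFin hT ⟨i, h⟩ else 0, ?_, ?_⟩
    · intro i hi
      simp only [hi, dif_pos]
      exact hTS (Finset.orderEmbOfFin_mem _ _ _)
    · intro i j hij hj
      simp only [hj, hij.trans hj, dif_pos]
      exact (T.orderEmbOfFin hT).strictMono hij
  obtain ⟨g, hg, hm⟩ := key
  have A : ∀ i j k, i < j → j < k → k < 6 → c (g i) (g k) = b → c (g j) (g k) = (!b) := by
    intro i j k hij hjk hk h
    have hi := hS _ (hg i (by omega))
    have hj := hS _ (hg j (by omega))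
    have hk' := hS _ (hg k (by omega))
    have := H (g i) (g j) (g k) 12 hi.1 (hm _ _ hij (by omega)) (hm _ _ hjk hk) hk'.2.1 le_rfl b
    cases hb : c (g j) (g k) <;> cases b <;> simp_all
  have B : ∀ i j k l, i < j → j < k → k < l → l < 6 → c (g i) (g k) = (!b) →
      c (g i) (g l) = (!b) → c (g j) (g k) = (!b) → c (g j) (g l) = (!b) →
      c (g k) (g l) = (!b) → False := by
    intro i j k l hij hjk hkl hl h1 h2 h3 h4 h5
    exact H (g i) (g j) (g k) (g l) (hS _ (hg i (by omega))).1 (hm _ _ hij (by omega))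
      (hm _ _ hjk (by omega)) (hm _ _ hkl hl) (hS _ (hg l hl)).2.1.le (!b) ⟨h1, h2, h3, h4, h5⟩
  have dich : ∀ x : Bool, x = b ∨ x = !b := by
    intro x; cases x <;> cases b <;> simp
  -- four vertices before the last one, all of the other colour to it
  have C : ∀ i j k l, i < j → j < k → k < l → l < 5 → c (g i) (g 5) = (!b) →
      c (g j) (g 5) = (!b) → c (g k) (g 5) = (!b) → c (g l) (g 5) = (!b) → False := by
    intro i j k l hij hjk hkl hl h1 h2 h3 h4
    rcases dich (c (g i) (g l)) with h | h
    · exact B j k l 5 hjk hkl hl (by omega) (A i j l hij (by omega) (by omega) h) h2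
        (A i k l (by omega) hkl (by omega) h) h3 h4
    · rcases dich (c (g j) (g l)) with h' | h'
      · exact B i k l 5 (by omega) hkl hl (by omega) h h1 (A j k l hjk hkl (by omega) h') h3 h4
      · exact B i j l 5 hij (by omega) hl (by omega) h h1 h' h2 h4
  rcases dich (c (g 0) (g 5)) with h0 | h0
  · exact C 1 2 3 4 (by omega) (by omega) (by omega) (by omega)
      (A 0 1 5 (by omega) (by omega) (by omega) h0) (A 0 2 5 (by omega) (by omega) (by omega) h0)
      (A 0 3 5 (by omega) (by omega) (by omega) h0) (A 0 4 5 (by omega) (by omega) (by omega) h0)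
  rcases dich (c (g 1) (g 5)) with h1 | h1
  · exact C 0 2 3 4 (by omega) (by omega) (by omega) (by omega) h0
      (A 1 2 5 (by omega) (by omega) (by omega) h1)
      (A 1 3 5 (by omega) (by omega) (by omega) h1) (A 1 4 5 (by omega) (by omega) (by omega) h1)
  rcases dich (c (g 2) (g 5)) with h2 | h2
  · exact C 0 1 3 4 (by omega) (by omega) (by omega) (by omega) h0 h1
      (A 2 3 5 (by omega) (by omega) (by omega) h2) (A 2 4 5 (by omega) (by omega) (by omega) h2)
  rcases dich (c (g 3) (g 5)) with h3 | h3
  · exact C 0 1 2 4 (by omega) (by omega) (by omega) (by omega) h0 h1 h2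
      (A 3 4 5 (by omega) (by omega) (by omega) h3)
  · exact C 0 1 2 3 (by omega) (by omega) (by omega) (by omega) h0 h1 h2 h3

def lowerCol (i j : ℕ) : Bool := Nat.testBit 2722923752234077156180540939587390259200 (12 * i + j)

set_option maxRecDepth 100000 in
set_option synthInstance.maxHeartbeats 400000 in
set_option synthInstance.maxSize 4000 in
theorem lowerCol_spec : ∀ s < 12, ∀ r < s, ∀ q < r, ∀ p < q,
    ¬ (1 ≤ p ∧ lowerCol p s = lowerCol p r ∧ lowerCol q r = lowerCol p r ∧ lowerCol q s = lowerCol p r ∧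
      lowerCol r s = lowerCol p r) := by
  decide +kernel

/-- The ordered Ramsey number of the diamond `K₄ - e` on vertex set `{1,2,3,4}` with
all edges of `K₄` except `(1, 2)` equals `12`: every 2-coloring of the edges
of the complete graph on `{1,…,12}` contains a monochromatic ordered copy, and
some 2-coloring of the edges of the complete graph on `{1,…,11}` contains
none. -/
theorem orderedRamsey_diamond_missing_12_eq :
    (∀ c : ℕ → ℕ → Bool,
      ContainsMonoOrderedCopy 4 12 {(1, 3), (1, 4), (2, 3), (2, 4), (3, 4)} c) ∧
    (∃ c : ℕ → ℕ → Bool,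
      ¬ ContainsMonoOrderedCopy 4 11 {(1, 3), (1, 4), (2, 3), (2, 4), (3, 4)} c) := by
  constructor
  · intro c
    by_contra hc
    have H : ∀ p q r s, 1 ≤ p → p < q → q < r → r < s → s ≤ 12 → ∀ b : Bool,
        ¬ (c p r = b ∧ c p s = b ∧ c q r = b ∧ c q s = b ∧ c r s = b) := by
      rintro p q r s hp hpq hqr hrs hs b ⟨h1, h2, h3, h4, h5⟩
      refine hc ⟨b, fun i => if i = 1 then p else if i = 2 then q else if i = 3 then r else s,
        ?_, ?_, ?_⟩
      · intro i _ _
        dsimp only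
        split_ifs <;> omega
      · intro i j _ _ _
        dsimp only
        split_ifs <;> omega
      · simp [h1, h2, h3, h4, h5]
    have hcard := Finset.card_filter_add_card_filter_not (s := Finset.Ico 1 12)
      (fun x => c x 12 = true)
    rw [Nat.card_Ico] at hcard
    by_cases h : 6 ≤ ((Finset.Ico 1 12).filter (fun x => c x 12 = true)).card
    · refine six_aux c true H _ ?_ h
      intro x hx
      simpa [and_assoc] using hx
    · refine six_aux c false H ((Finset.Ico 1 12).filter (fun x => ¬ c x 12 = true)) ?_ (by omega)
      intro x hx
      simpa [and_assoc] using hx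
  · refine ⟨lowerCol, ?_⟩
    rintro ⟨b, φ, h1, h2, h3⟩
    have e13 := h3 (1, 3) (by simp)
    have e14 := h3 (1, 4) (by simp)
    have e23 := h3 (2, 3) (by simp)
    have e24 := h3 (2, 4) (by simp)
    have e34 := h3 (3, 4) (by simp)
    dsimp only at e13 e14 e23 e24 e34
    have b4 := (h1 4 (by omega) (by omega)).2
    exact lowerCol_spec (φ 4) (by omega) (φ 3) (h2 3 4 (by omega) (by omega) (by omega))
      (φ 2) (h2 2 3 (by omega) (by omega) (by omega)) (φ 1) (h2 1 2 (by omega) (by omega) (by omega))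
      ⟨(h1 1 (by omega) (by omega)).1, by rw [e13, e14, e23, e24, e34]; simp⟩
end

section
/- The ordered Ramsey number of the ordered diamond graph K₄ − e with vertex set {1,2,3,4} and all edges of K₄ except {1,3} equals 14: every 2-coloring of the edges of the complete graph on {1,...,14} contains a monochromatic ordered copy of this graph, and there is a 2-coloring of the edges of the complete graph on {1,...,13} containing no such copy. -/
def diamondCol (a b : ℕ) : Bool := (([0, 13332, 8248, 6816, 992, 1664, 3456, 3072, 6656, 13312, 8192, 12288, 8192] : List ℕ).getD a 0).testBit b

lemma diamondCol_ok : ∀ w ∈ List.range 14, ∀ z ∈ List.range w, ∀ y ∈ List.range z,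
    ∀ x ∈ List.range y,
    ¬ (1 ≤ x ∧ diamondCol x w = diamondCol x y ∧ diamondCol y w = diamondCol x y ∧
      diamondCol y z = diamondCol x y ∧ diamondCol z w = diamondCol x y) := by
  decide +kernel

lemma copy_of (N : ℕ) (c : ℕ → ℕ → Bool) (b : Bool) (x y z w : ℕ) (h1 : 1 ≤ x) (hxy : x < y)
    (hyz : y < z) (hzw : z < w) (hw : w ≤ N) (e1 : c x y = b) (e2 : c x w = b) (e3 : c y z = b)
    (e4 : c y w = b) (e5 : c z w = b) :
    ContainsMonoOrderedCopy 4 N {(1, 2), (1, 4), (2, 3), (2, 4), (3, 4)} c := by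
  refine ⟨b, fun i => if i = 1 then x else if i = 2 then y else if i = 3 then z else w, ?_, ?_, ?_⟩
  · intro i _ _
    dsimp only
    split_ifs <;> omega
  · intro i j _ _ _
    dsimp only
    split_ifs <;> omega
  · simp [e1, e2, e3, e4, e5]

lemma four_of_card (s : Finset ℕ) (h : 3 < s.card) :
    ∃ x ∈ s, ∃ y ∈ s, ∃ z ∈ s, ∃ w ∈ s, x < y ∧ y < z ∧ z < w := by
  obtain ⟨t, hts, ht⟩ := Finset.exists_subset_card_eq (s := s) (n := 4) h
  let f := t.orderEmbOfFin ht
  have hm : ∀ i, f i ∈ s := fun i => hts (t.orderEmbOfFin_mem ht i)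
  exact ⟨f 0, hm 0, f 1, hm 1, f 2, hm 2, f 3, hm 3, f.strictMono (by decide),
    f.strictMono (by decide), f.strictMono (by decide)⟩

lemma upper (c : ℕ → ℕ → Bool) :
    ContainsMonoOrderedCopy 4 14 {(1, 2), (1, 4), (2, 3), (2, 4), (3, 4)} c := by
  classical
  by_contra h
  let P : ℕ → Prop := fun v => ∃ u, 1 ≤ u ∧ u < v ∧ c u 14 = c v 14 ∧ c u v = c v 14
  let f : ℕ → Bool × Bool := fun v => (c v 14, decide (P v))
  obtain ⟨⟨k, p⟩, -, hk⟩ := Finset.exists_lt_card_fiber_of_mul_lt_card_of_maps_to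
    (s := Finset.Icc 1 13) (t := (Finset.univ : Finset (Bool × Bool))) (f := f) (n := 3)
    (fun _ _ => Finset.mem_univ _) (by decide)
  have key : ∀ x y, x ∈ (Finset.Icc 1 13).filter (fun v => f v = (k, p)) →
      y ∈ (Finset.Icc 1 13).filter (fun v => f v = (k, p)) → x < y → c x y = !k := by
    intro x y hx hy hxy
    simp only [Finset.mem_filter, Finset.mem_Icc, f, Prod.mk.injEq] at hx hy
    obtain ⟨⟨hx1, hx2⟩, hxk, hxp⟩ := hx
    obtain ⟨⟨hy1, hy2⟩, hyk, hyp⟩ := hy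
    by_contra hne
    have e : c x y = k := by
      revert hne; cases c x y <;> cases k <;> simp
    have hPy : P y := ⟨x, hx1, hxy, by rw [hxk, hyk], by rw [e, hyk]⟩
    have hPx : P x := by
      have : p = true := by rw [← hyp]; simpa using hPy
      rw [this] at hxp
      simpa using hxp
    obtain ⟨u, hu1, hux, e1, e2⟩ := hPx
    exact h (copy_of 14 c k u x y 14 hu1 hux hxy (by omega) le_rfl (by rw [e2, hxk])
      (by rw [e1, hxk]) e hxk hyk)
  obtain ⟨x, hx, y, hy, z, hz, w, hw, hxy, hyz, hzw⟩ := four_of_card _ hk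
  have hx1 := (Finset.mem_Icc.1 (Finset.mem_filter.1 hx).1).1
  have hw1 := (Finset.mem_Icc.1 (Finset.mem_filter.1 hw).1).2
  exact h (copy_of 14 c (!k) x y z w hx1 hxy hyz hzw (by omega) (key _ _ hx hy hxy)
    (key _ _ hx hw (by omega)) (key _ _ hy hz hyz) (key _ _ hy hw (by omega)) (key _ _ hz hw hzw))

/-- The ordered Ramsey number of the diamond `K₄ - e` on vertex set `{1,2,3,4}` with
all edges of `K₄` except `(1, 3)` equals `14`: every 2-coloring of the edges
of the complete graph on `{1,…,14}` contains a monochromatic ordered copy, and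
some 2-coloring of the edges of the complete graph on `{1,…,13}` contains
none. -/
theorem orderedRamsey_diamond_missing_13_eq :
    (∀ c : ℕ → ℕ → Bool,
      ContainsMonoOrderedCopy 4 14 {(1, 2), (1, 4), (2, 3), (2, 4), (3, 4)} c) ∧
    (∃ c : ℕ → ℕ → Bool,
      ¬ ContainsMonoOrderedCopy 4 13 {(1, 2), (1, 4), (2, 3), (2, 4), (3, 4)} c) := by
  refine ⟨upper, diamondCol, ?_⟩
  rintro ⟨b, φ, h1, h2, h3⟩
  have a1 := h1 1 (by omega) (by omega)
  have a4 := h1 4 (by omega) (by omega)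
  have l12 := h2 1 2 (by omega) (by omega) (by omega)
  have l23 := h2 2 3 (by omega) (by omega) (by omega)
  have l34 := h2 3 4 (by omega) (by omega) (by omega)
  have e12 := h3 (1, 2) (by simp)
  have e14 := h3 (1, 4) (by simp)
  have e23 := h3 (2, 3) (by simp)
  have e24 := h3 (2, 4) (by simp)
  have e34 := h3 (3, 4) (by simp)
  dsimp only at e12 e14 e23 e24 e34
  exact diamondCol_ok (φ 4) (List.mem_range.2 (by omega)) (φ 3) (List.mem_range.2 l34)
    (φ 2) (List.mem_range.2 l23) (φ 1) (List.mem_range.2 l12)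
    ⟨a1.1, by rw [e12, e14], by rw [e24, e12], by rw [e23, e12], by rw [e34, e12]⟩
end

section
/- The ordered Ramsey number of the ordered diamond graph K₄ − e with vertex set {1,2,3,4} and all edges of K₄ except {2,3} equals 13: every 2-coloring of the edges of the complete graph on {1,...,13} contains a monochromatic ordered copy of this graph, and there is a 2-coloring of the edges of the complete graph on {1,...,12} containing no such copy. -/
namespace OD

structure Rec where
  i : ℕ
  b : ℕ
  L : ℕ
  G : ℕ
  R : ℕ
  B : ℕ
  SR : ℕ
  SB : ℕ

structure Tsk where
  b : ℕ
  yR : ℕ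
  yB : ℕ
  xR : ℕ
  xB : ℕ

structure Spec where
  i : ℕ
  b : ℕ
  lo : ℕ
  hi : ℕ
  rB : ℕ
  rA : ℕ
  bB : ℕ
  bA : ℕ

local notation "ifz(" n "," x "," y ")" => Bool.rec (motive := fun _ => Bool) y x (Nat.beq n 0)
local notation "nifz(" n "," x "," y ")" => Bool.rec (motive := fun _ => ℕ) y x (Nat.beq n 0)
local notation "both(" x "," y ")" => Bool.rec (motive := fun _ => Bool) false y x
local infixl:70 "⋏" => Nat.land
local infixl:65 "⋎" => Nat.lor

noncomputable def dec (leaf : ℕ → ℕ → Bool) (ts : List Tsk) : ℕ → ℕ → ℕ → ℕ → Bool :=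
  List.rec (motive := fun _ => ℕ → ℕ → ℕ → ℕ → Bool) (fun KR KB _ _ => leaf KR KB)
    (fun t _ ih KR KB FR FB =>
      Tsk.rec (motive := fun _ => Bool) (fun b yR yB xR xB =>
        both(
          ifz(FR ⋏ b,
            (fun M => (fun F => ifz((M ⋏ Nat.sub M 1) ⋎ (F ⋏ (KR ⋎ FB)), ih (KR ⋎ b) KB F FB, true))
              (FR ⋎ xR ⋎ nifz(M, 0, Nat.xor yR M))) (yR ⋏ KR), true),
          ifz(FB ⋏ b,
            (fun M => (fun F => ifz((M ⋏ Nat.sub M 1) ⋎ (F ⋏ (KB ⋎ FR)), ih KR (KB ⋎ b) FR F, true))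
              (FB ⋎ xB ⋎ nifz(M, 0, Nat.xor yB M))) (yB ⋏ KB), true))) t) ts

noncomputable def pass (A B KR KB : ℕ) (fin : List Tsk → ℕ → ℕ → Bool) (st : List Rec) :
    List Tsk → ℕ → ℕ → Bool :=
  List.rec (motive := fun _ => List Tsk → ℕ → ℕ → Bool) fin
    (fun r _ ih ts FR FB =>
      Rec.rec (motive := fun _ => Bool) (fun _ b L G R Bl SR SB =>
        (fun Y X =>
            ifz(KR ⋏ b,
              ifz(KB ⋏ b,
                ih (⟨b, Y ⋏ R, Y ⋏ Bl, X ⋏ SR, X ⋏ SB⟩ :: ts) FR FB,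
                (fun yB => (fun M => (fun F => ifz((M ⋏ Nat.sub M 1) ⋎ (F ⋏ (KB ⋎ FR)), ih ts FR F, true))
                  (FB ⋎ X ⋏ SB ⋎ nifz(M, 0, Nat.xor yB M))) (yB ⋏ KB)) (Y ⋏ Bl)),
              (fun yR => (fun M => (fun F => ifz((M ⋏ Nat.sub M 1) ⋎ (F ⋏ (KR ⋎ FB)), ih ts F FB, true))
                (FR ⋎ X ⋏ SR ⋎ nifz(M, 0, Nat.xor yR M))) (yR ⋏ KR)) (Y ⋏ R)))
          ((L ⋏ A) ⋎ (G ⋏ B)) (nifz(B ⋏ b, B, A))) r) st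

/-- final check -/
noncomputable def chk (A B KR KB : ℕ) (st : List Rec) : ℕ :=
  List.rec (motive := fun _ => ℕ) 0
    (fun r _ ih =>
      Rec.rec (motive := fun _ => ℕ) (fun _ b L G R Bl _ _ =>
        (fun M => (M ⋏ Nat.sub M 1) ⋎ ih) 
         (((L ⋏ A) ⋎ (G ⋏ B)) ⋏ (nifz(KR ⋏ b, Bl ⋏ KB, R ⋏ KR)))) r) st

noncomputable def sat (A B K : ℕ) (p : Rec → ℕ) (st : List Rec) : ℕ :=
  List.rec (motive := fun _ => ℕ) 0
    (fun r _ ih => nifz(K ⋏ r.b, ih,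
       nifz(((r.L ⋏ A) ⋎ (r.G ⋏ B)) ⋏ (p r ⋏ K), ih, r.b ⋎ ih))) st

noncomputable def upd (vb A B KR KB sR sB : ℕ) (r : Rec) : Rec :=
  Rec.rec (motive := fun _ => Rec) (fun i b L G R Bl SR SB =>
    ⟨i, b, nifz(B ⋏ b, L ⋎ vb, L), nifz(B ⋏ b, G, G ⋎ vb), 
      nifz(KR ⋏ b, R, R ⋎ vb), nifz(KR ⋏ b, Bl ⋎ vb, Bl),
      nifz(KR ⋏ b, SR, SR ⋎ nifz(B ⋏ b, B, A) ⋏ (R ⋏ KR) ⋎ nifz(sR ⋏ b, 0, vb)),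
      nifz(KR ⋏ b, SB ⋎ nifz(B ⋏ b, B, A) ⋏ (Bl ⋏ KB) ⋎ nifz(sB ⋏ b, 0, vb), SB)⟩) r

noncomputable def bld (vb A B KR KB sR sB : ℕ) (st : List Rec) (tl : List Rec) : List Rec :=
  List.rec (motive := fun _ => List Rec) tl
    (fun r _ ih => upd vb A B KR KB sR sB r :: ih) st

noncomputable def gap (s : Spec) (k : List Rec → Bool) (A B : ℕ) (pre rest st : List Rec) : Bool :=
  ifz((s.lo ⋏ A) ⋎ (s.hi ⋏ B),
      (fun KR0 KB0 =>
       pass A B KR0 KB0 (fun ts FR0 FB0 =>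
         dec (fun KR KB => ifz(chk A B KR KB st, 
            (fun sR sB => 
              k (bld s.b A B KR KB sR sB pre (⟨s.i, s.b, B, A, KR, KB, sR, sB⟩ :: 
                bld s.b A B KR KB sR sB rest [])))
              (sat A B KR Rec.R st) (sat A B KB Rec.B st), true)) ts KR0 KB0 FR0 FB0) st [] 0 0)
      ((s.rB ⋏ B) ⋎ (s.rA ⋏ A)) ((s.bB ⋏ B) ⋎ (s.bA ⋏ A)), true)

noncomputable def gaps (s : Spec) (k : List Rec → Bool) (st : List Rec) (rest : List Rec) : 
    ℕ → List Rec → Bool :=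
  List.rec (motive := fun _ => ℕ → List Rec → Bool) (fun B pre => gap s k 0 B pre [] st)
    (fun r rest ih B pre => 
      both(gap s k (r.G ⋎ r.b) B pre (r :: rest) st,
        ih (r.L ⋎ r.b) (pre ++ [r]))) rest

noncomputable def run (leaf : List Rec → Bool) (ss : List Spec) : List Rec → Bool :=
  List.rec (motive := fun _ => List Rec → Bool) leaf
    (fun s _ ih st => gaps s ih st st 0 []) ss

theorem bnz (n : ℕ) (x y : Bool) : ifz(n, x, y) = if n = 0 then x else y := by
  cases n <;> rfl
theorem nnz (n x y : ℕ) : nifz(n, x, y) = if n = 0 then x else y := by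
  cases n <;> rfl
theorem bth (x y : Bool) : both(x, y) = (x && y) := by cases x <;> rfl
theorem tl (a b w : ℕ) : (a ⋏ b).testBit w = (a.testBit w && b.testBit w) := Nat.testBit_and a b w
theorem tor (a b w : ℕ) : (a ⋎ b).testBit w = (a.testBit w || b.testBit w) := Nat.testBit_or a b w
theorem tx (a b w : ℕ) : (Nat.xor a b).testBit w = (a.testBit w != b.testBit w) :=
  Nat.testBit_xor a b w

theorem exbit {n : ℕ} (h : n ≠ 0) : ∃ w, n.testBit w = true := Nat.exists_testBit_of_ne_zero h

theorem lb (n i : ℕ) : (n ⋏ 2 ^ i = 0) ↔ n.testBit i = false := by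
  constructor
  · intro h
    have := congrArg (fun m => m.testBit i) h
    simpa [tl, Nat.testBit_two_pow_self] using this
  · intro h
    by_contra h2
    obtain ⟨w, hw⟩ := exbit h2
    rw [tl, Nat.testBit_two_pow] at hw
    simp at hw
    rw [← hw.2] at hw
    simp [h] at hw

theorem two {M : ℕ} (h : ∀ u w, M.testBit u = true → M.testBit w = true → u = w) :
    M ⋏ Nat.sub M 1 = 0 := by
  by_cases hM : M = 0
  · subst hM; rfl
  obtain ⟨i, hi⟩ := exbit hM
  have : M = 2 ^ i := by
    apply Nat.eq_of_testBit_eq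
    intro w
    rw [Nat.testBit_two_pow]
    by_cases hw : i = w
    · subst hw; simp [hi]
    · simp only [hw, decide_false]
      by_contra h3
      exact hw (h _ _ hi (by simpa using h3))
  subst this
  by_contra h2
  obtain ⟨w, hw⟩ := exbit h2
  rw [tl] at hw
  simp only [Bool.and_eq_true, Nat.testBit_two_pow, decide_eq_true_eq] at hw
  obtain ⟨rfl, h4⟩ := hw
  rw [show Nat.sub (2 ^ i) 1 = 2 ^ i - 1 from rfl, Nat.testBit_two_pow_sub_one] at h4
  simp at h4

section
variable (p : ℕ → ℕ) (col : ℕ → ℕ → Bool)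

def Bet (u m w : ℕ) : Prop := (p u < p m ∧ p m < p w) ∨ (p w < p m ∧ p m < p u)

def Good : Prop :=
  (∀ u w, col u w = col w u) ∧
  ∀ u w m n k, Bet p u m w → Bet p u n w → p m ≠ p n → col u w = k → col u m = k → col m w = k →
    col u n = k → col n w = k → False

def Satd (I : ℕ → Prop) (k : Bool) (u w : ℕ) : Prop :=
  col u w = k ∧ ∃ m, I m ∧ Bet p u m w ∧ col u m = k ∧ col m w = k

structure RecOk (I : ℕ → Prop) (r : Rec) : Prop where
  hb : r.b = 2 ^ r.i
  hi : I r.i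
  hL : ∀ w, r.L.testBit w = true → p w < p r.i ∧ I w
  hG : ∀ w, r.G.testBit w = true → p r.i < p w ∧ I w
  hR : ∀ w, r.R.testBit w = true → col r.i w = true
  hB : ∀ w, r.B.testBit w = true → col r.i w = false
  hSR : ∀ w, r.SR.testBit w = true → Satd p col I true r.i w
  hSB : ∀ w, r.SB.testBit w = true → Satd p col I false r.i w
  hLC : ∀ w, I w → p w < p r.i → r.L.testBit w = true

structure StOk (I : ℕ → Prop) (st : List Rec) : Prop where
  hr : ∀ r ∈ st, RecOk p col I r
  hs : st.Pairwise (fun a b => p a.i < p b.i)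
  hI : ∀ w, I w → ∃ r ∈ st, r.i = w
  hinj : ∀ u w, I u → I w → p u = p w → u = w

variable {p col}

theorem Bet.symm {u m w : ℕ} (h : Bet p u m w) : Bet p w m u := by
  unfold Bet at *; tauto

theorem Satd.symm {I k u w} (hg : Good p col) (h : Satd p col I k u w) : Satd p col I k w u := by
  obtain ⟨h1, m, h2, h3, h4, h5⟩ := h
  exact ⟨by rw [hg.1, h1], m, h2, h3.symm, by rw [hg.1, h5], by rw [hg.1, h4]⟩

variable {I : ℕ → Prop} {v : ℕ}

theorem step (hg : Good p col) (hinj : ∀ u w, I u → I w → p u = p w → u = w)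
    (hv : ∀ m, I m → p m ≠ p v) {k : Bool} {i y x K F F' : ℕ} (hc : col v i = k)
    (hy : ∀ w, y.testBit w = true → Bet p v w i ∧ I w ∧ col i w = k)
    (hx : ∀ w, x.testBit w = true → Bet p i v w ∧ Satd p col I k i w)
    (hK : ∀ w, K.testBit w = true → col v w = k)
    (hF : ∀ w, F.testBit w = true → col v w ≠ k)
    (hF' : ∀ w, F'.testBit w = true → col v w = k) :
    (∀ w, (F ⋎ x ⋎ nifz(y ⋏ K, 0, Nat.xor y (y ⋏ K))).testBit w = true → col v w ≠ k) ∧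
    ((y ⋏ K) ⋏ Nat.sub (y ⋏ K) 1) ⋎ ((F ⋎ x ⋎ nifz(y ⋏ K, 0, Nat.xor y (y ⋏ K))) ⋏ (K ⋎ F')) = 0 := by
  have key : ∀ u w, y.testBit u = true → y.testBit w = true → col v u = k → col v w = k →
      u = w := by
    intro u w hu hw cu cw
    by_contra hne
    obtain ⟨a1, a2, a3⟩ := hy u hu
    obtain ⟨b1, b2, b3⟩ := hy w hw
    exact hg.2 v i u w k a1 b1 (fun h => hne (hinj _ _ a2 b2 h)) hc cu ((hg.1 _ _).trans a3) cw
      ((hg.1 _ _).trans b3)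
  have h1 : ∀ w, (F ⋎ x ⋎ nifz(y ⋏ K, 0, Nat.xor y (y ⋏ K))).testBit w = true → col v w ≠ k := by
    intro w hw cw
    rw [tor, tor, nnz] at hw
    simp only [Bool.or_eq_true] at hw
    rcases hw with (hw | hw) | hw
    · exact hF w hw cw
    · obtain ⟨a1, a2, m, a3, a4, a5, a6⟩ := hx w hw
      exact hg.2 i w m v k a4 a1 (hv m a3) a2 a5 a6 (by rw [hg.1, hc]) cw
    · split_ifs at hw with h0
      · simp at hw
      · obtain ⟨m, hm⟩ := exbit h0
        rw [tx, tl] at hw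
        rw [tl] at hm
        simp only [Bool.and_eq_true] at hm
        have hyw : y.testBit w = true := by
          by_contra h; simp [h] at hw
        have := key m w hm.1 hyw (hK _ hm.2) cw
        subst this
        simp [hm] at hw
  refine ⟨h1, ?_⟩
  have e1 : (y ⋏ K) ⋏ Nat.sub (y ⋏ K) 1 = 0 := by
    apply two
    intro u w hu hw
    rw [tl] at hu hw
    simp only [Bool.and_eq_true] at hu hw
    exact key u w hu.1 hw.1 (hK _ hu.2) (hK _ hw.2)
  rw [e1]
  by_contra h2
  obtain ⟨w, hw⟩ := exbit h2
  rw [tor, tl, tor _ F'] at hw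
  simp only [Nat.zero_testBit, Bool.false_or, Bool.and_eq_true, Bool.or_eq_true] at hw
  exact h1 w hw.1 (hw.2.elim (hK w) (hF' w))

structure TskOk (p : ℕ → ℕ) (col : ℕ → ℕ → Bool) (I : ℕ → Prop) (v i : ℕ) (t : Tsk) : Prop where
  hb : t.b = 2 ^ i
  yR : ∀ w, t.yR.testBit w = true → Bet p v w i ∧ I w ∧ col i w = true
  yB : ∀ w, t.yB.testBit w = true → Bet p v w i ∧ I w ∧ col i w = false
  xR : ∀ w, t.xR.testBit w = true → Bet p i v w ∧ Satd p col I true i w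
  xB : ∀ w, t.xB.testBit w = true → Bet p i v w ∧ Satd p col I false i w

def KOk (col : ℕ → ℕ → Bool) (v KR KB : ℕ) : Prop :=
  (∀ w, KR.testBit w = true → col v w = true) ∧ (∀ w, KB.testBit w = true → col v w = false)
def FOk (col : ℕ → ℕ → Bool) (v FR FB : ℕ) : Prop :=
  (∀ w, FR.testBit w = true → col v w ≠ true) ∧ (∀ w, FB.testBit w = true → col v w ≠ false)

theorem KOk.addR {KR KB i} (h : KOk col v KR KB) (hc : col v i = true) :
    KOk col v (KR ⋎ 2 ^ i) KB := by
  refine ⟨fun w hw => ?_, h.2⟩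
  rw [tor, Nat.testBit_two_pow] at hw
  simp only [Bool.or_eq_true, decide_eq_true_eq] at hw
  rcases hw with hw | rfl
  · exact h.1 w hw
  · exact hc

theorem KOk.addB {KR KB i} (h : KOk col v KR KB) (hc : col v i = false) :
    KOk col v KR (KB ⋎ 2 ^ i) := by
  refine ⟨h.1, fun w hw => ?_⟩
  rw [tor, Nat.testBit_two_pow] at hw
  simp only [Bool.or_eq_true, decide_eq_true_eq] at hw
  rcases hw with hw | rfl
  · exact h.2 w hw
  · exact hc

def Cov (I : ℕ → Prop) (ts : List Tsk) (KR KB : ℕ) : Prop :=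
  ∀ w, I w → KR.testBit w = true ∨ KB.testBit w = true ∨ ∃ t ∈ ts, t.b = 2 ^ w

theorem dec_cons (leaf : ℕ → ℕ → Bool) (t : Tsk) (ts : List Tsk) (KR KB FR FB : ℕ) :
    dec leaf (t :: ts) KR KB FR FB =
      both(
          ifz(FR ⋏ t.b,
            ifz(((t.yR ⋏ KR) ⋏ Nat.sub (t.yR ⋏ KR) 1) ⋎
              ((FR ⋎ t.xR ⋎ nifz(t.yR ⋏ KR, 0, Nat.xor t.yR (t.yR ⋏ KR))) ⋏ (KR ⋎ FB)),
              dec leaf ts (KR ⋎ t.b) KB (FR ⋎ t.xR ⋎ nifz(t.yR ⋏ KR, 0, Nat.xor t.yR (t.yR ⋏ KR))) FB,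
              true), true),
          ifz(FB ⋏ t.b,
            ifz(((t.yB ⋏ KB) ⋏ Nat.sub (t.yB ⋏ KB) 1) ⋎
              ((FB ⋎ t.xB ⋎ nifz(t.yB ⋏ KB, 0, Nat.xor t.yB (t.yB ⋏ KB))) ⋏ (KB ⋎ FR)),
              dec leaf ts KR (KB ⋎ t.b) FR (FB ⋎ t.xB ⋎ nifz(t.yB ⋏ KB, 0, Nat.xor t.yB (t.yB ⋏ KB))),
              true), true)) := by
  cases t; rfl

theorem fst_bit {col : ℕ → ℕ → Bool} {k : Bool} {v F i : ℕ} (hF : ∀ w, F.testBit w = true → col v w ≠ k) (hc : col v i = k) :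
    F ⋏ 2 ^ i = 0 := by
  rw [lb]; by_contra h; exact hF i (by simpa using h) hc

theorem dec_sound (hg : Good p col) (hinj : ∀ u w, I u → I w → p u = p w → u = w)
    (hv : ∀ m, I m → p m ≠ p v) (leaf : ℕ → ℕ → Bool) (ts : List Tsk) :
    ∀ KR KB FR FB, (∀ t ∈ ts, ∃ i, TskOk p col I v i t) → KOk col v KR KB → FOk col v FR FB →
      Cov I ts KR KB → dec leaf ts KR KB FR FB = true →
      ∃ KR' KB', KOk col v KR' KB' ∧ Cov I [] KR' KB' ∧ leaf KR' KB' = true := by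
  induction ts with
  | nil => intro KR KB FR FB _ hK _ hC h; exact ⟨KR, KB, hK, hC, h⟩
  | cons t ts ih =>
    intro KR KB FR FB hts hK hF hC h
    obtain ⟨i, ht⟩ := hts t (by simp)
    have hts' : ∀ t ∈ ts, ∃ i, TskOk p col I v i t := fun t h => hts t (by simp [h])
    rw [dec_cons, bth, ht.hb] at h
    simp only [Bool.and_eq_true] at h
    cases hc : col v i
    · have h := h.2
      obtain ⟨s1, s2⟩ := step (F' := FR) hg hinj hv hc ht.yB ht.xB hK.2 hF.2
        (fun w hw => by simpa using hF.1 w hw)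
      rw [bnz, if_pos (fst_bit hF.2 hc), bnz, if_pos s2] at h
      refine ih _ _ _ _ hts' (hK.addB hc) ⟨hF.1, s1⟩ ?_ h
      intro w hw
      rcases hC w hw with h1 | h1 | ⟨t', h1, h2⟩
      · exact Or.inl h1
      · right; left; rw [tor, h1]; rfl
      · simp only [List.mem_cons] at h1
        rcases h1 with rfl | h1
        · right; left
          rw [ht.hb] at h2
          rw [h2, tor, Nat.testBit_two_pow_self, Bool.or_true]
        · exact Or.inr (Or.inr ⟨t', h1, h2⟩)
    · have h := h.1
      obtain ⟨s1, s2⟩ := step (F' := FB) hg hinj hv hc ht.yR ht.xR hK.1 hF.1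
        (fun w hw => by simpa using hF.2 w hw)
      rw [bnz, if_pos (fst_bit hF.1 hc), bnz, if_pos s2] at h
      refine ih _ _ _ _ hts' (hK.addR hc) ⟨s1, hF.2⟩ ?_ h
      intro w hw
      rcases hC w hw with h1 | h1 | ⟨t', h1, h2⟩
      · left; rw [tor, h1]; rfl
      · exact Or.inr (Or.inl h1)
      · simp only [List.mem_cons] at h1
        rcases h1 with rfl | h1
        · left
          rw [ht.hb] at h2
          rw [h2, tor, Nat.testBit_two_pow_self, Bool.or_true]
        · exact Or.inr (Or.inr ⟨t', h1, h2⟩)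

structure ABOk (p : ℕ → ℕ) (I : ℕ → Prop) (v A B : ℕ) : Prop where
  hv : ∀ m, I m → p m ≠ p v
  hA : ∀ w, A.testBit w = true → p v < p w ∧ I w
  hB : ∀ w, B.testBit w = true → p w < p v ∧ I w
  hC : ∀ w, I w → p w < p v → B.testBit w = true

theorem ABOk.after {A B w} (h : ABOk p I v A B) (hw : I w) (hb : B.testBit w = false) :
    p v < p w := by
  have h1 := h.hv w hw
  have h2 := h.hC w hw
  rw [hb] at h2
  have : ¬ p w < p v := fun h => by simpa using h2 h
  omega

theorem Y_ok {A B : ℕ} {r : Rec} (h : ABOk p I v A B) (hr : RecOk p col I r) {w : ℕ}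
    (hw : ((r.L ⋏ A) ⋎ (r.G ⋏ B)).testBit w = true) : Bet p v w r.i ∧ I w := by
  rw [tor, tl, tl] at hw
  simp only [Bool.or_eq_true, Bool.and_eq_true] at hw
  rcases hw with hw | hw
  · exact ⟨Or.inl ⟨(h.hA w hw.2).1, (hr.hL w hw.1).1⟩, (h.hA w hw.2).2⟩
  · exact ⟨Or.inr ⟨(hr.hG w hw.1).1, (h.hB w hw.2).1⟩, (h.hB w hw.2).2⟩

theorem X_ok {A B : ℕ} {r : Rec} (h : ABOk p I v A B) (hr : RecOk p col I r) {w : ℕ}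
    (hw : (nifz(B ⋏ r.b, B, A)).testBit w = true) : Bet p r.i v w ∧ I w := by
  rw [nnz, hr.hb] at hw; simp only [lb] at hw
  split_ifs at hw with h0
  · exact ⟨Or.inr ⟨(h.hB w hw).1, h.after hr.hi h0⟩, (h.hB w hw).2⟩
  · exact ⟨Or.inl ⟨(h.hB _ (by simpa using h0)).1, (h.hA w hw).1⟩, (h.hA w hw).2⟩

theorem pass_cons (A B KR KB : ℕ) (fin : List Tsk → ℕ → ℕ → Bool) (r : Rec) (st : List Rec)
    (ts : List Tsk) (FR FB : ℕ) : pass A B KR KB fin (r :: st) ts FR FB =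
      (fun Y X =>
            ifz(KR ⋏ r.b,
              ifz(KB ⋏ r.b,
                pass A B KR KB fin st (⟨r.b, Y ⋏ r.R, Y ⋏ r.B, X ⋏ r.SR, X ⋏ r.SB⟩ :: ts) FR FB,
                (fun yB => (fun M => (fun F => ifz((M ⋏ Nat.sub M 1) ⋎ (F ⋏ (KB ⋎ FR)), pass A B KR KB fin st ts FR F, true))
                  (FB ⋎ X ⋏ r.SB ⋎ nifz(M, 0, Nat.xor yB M))) (yB ⋏ KB)) (Y ⋏ r.B)),
              (fun yR => (fun M => (fun F => ifz((M ⋏ Nat.sub M 1) ⋎ (F ⋏ (KR ⋎ FB)), pass A B KR KB fin st ts F FB, true))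
                (FR ⋎ X ⋏ r.SR ⋎ nifz(M, 0, Nat.xor yR M))) (yR ⋏ KR)) (Y ⋏ r.R)))
          ((r.L ⋏ A) ⋎ (r.G ⋏ B)) (nifz(B ⋏ r.b, B, A)) := by
  cases r; rfl

theorem pass_sound (hg : Good p col) (hinj : ∀ u w, I u → I w → p u = p w → u = w)
    {A B KR KB : ℕ} (h : ABOk p I v A B) (hK : KOk col v KR KB)
    (fin : List Tsk → ℕ → ℕ → Bool) (st : List Rec) (hst : ∀ r ∈ st, RecOk p col I r) :
    ∀ ts FR FB, (∀ t ∈ ts, ∃ i, TskOk p col I v i t) → FOk col v FR FB →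
      (∀ w, I w → (∃ r ∈ st, r.i = w) ∨ KR.testBit w = true ∨ KB.testBit w = true ∨
        ∃ t ∈ ts, t.b = 2 ^ w) → pass A B KR KB fin st ts FR FB = true →
      ∃ ts FR FB, (∀ t ∈ ts, ∃ i, TskOk p col I v i t) ∧ FOk col v FR FB ∧ Cov I ts KR KB ∧
        fin ts FR FB = true := by
  induction st with
  | nil =>
    intro ts FR FB h1 h2 h3 h4
    refine ⟨ts, FR, FB, h1, h2, ?_, h4⟩
    intro w hw
    simpa using h3 w hw
  | cons r st ih =>
    intro ts FR FB h1 h2 h3 h4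
    have hr := hst r (by simp)
    have ih := ih (fun r h => hst r (by simp [h]))
    have yR : ∀ w, (((r.L ⋏ A) ⋎ (r.G ⋏ B)) ⋏ r.R).testBit w = true →
        Bet p v w r.i ∧ I w ∧ col r.i w = true := by
      intro w hw
      rw [tl] at hw
      simp only [Bool.and_eq_true] at hw
      have := Y_ok h hr hw.1
      exact ⟨this.1, this.2, hr.hR w hw.2⟩
    have yB : ∀ w, (((r.L ⋏ A) ⋎ (r.G ⋏ B)) ⋏ r.B).testBit w = true →
        Bet p v w r.i ∧ I w ∧ col r.i w = false := by
      intro w hw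
      rw [tl] at hw
      simp only [Bool.and_eq_true] at hw
      have := Y_ok h hr hw.1
      exact ⟨this.1, this.2, hr.hB w hw.2⟩
    have xR : ∀ w, ((nifz(B ⋏ r.b, B, A)) ⋏ r.SR).testBit w = true →
        Bet p r.i v w ∧ Satd p col I true r.i w := by
      intro w hw
      rw [tl] at hw
      simp only [Bool.and_eq_true] at hw
      exact ⟨(X_ok h hr hw.1).1, hr.hSR w hw.2⟩
    have xB : ∀ w, ((nifz(B ⋏ r.b, B, A)) ⋏ r.SB).testBit w = true →
        Bet p r.i v w ∧ Satd p col I false r.i w := by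
      intro w hw
      rw [tl] at hw
      simp only [Bool.and_eq_true] at hw
      exact ⟨(X_ok h hr hw.1).1, hr.hSB w hw.2⟩
    rw [pass_cons] at h4
    beta_reduce at h4
    rw [bnz (KR ⋏ r.b)] at h4
    split_ifs at h4 with c1
    · rw [bnz (KB ⋏ r.b)] at h4
      split_ifs at h4 with c2
      · refine ih _ _ _ ?_ h2 ?_ h4
        · intro t ht
          simp only [List.mem_cons] at ht
          rcases ht with rfl | ht
          · exact ⟨r.i, hr.hb, yR, yB, xR, xB⟩
          · exact h1 t ht
        · intro w hw
          rcases h3 w hw with ⟨r', h5, h6⟩ | h5 | h5 | ⟨t, h5, h6⟩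
          · simp only [List.mem_cons] at h5
            rcases h5 with rfl | h5
            · right; right; right
              refine ⟨_, List.mem_cons_self, ?_⟩
              rw [← h6]; exact hr.hb
            · exact Or.inl ⟨r', h5, h6⟩
          · exact Or.inr (Or.inl h5)
          · exact Or.inr (Or.inr (Or.inl h5))
          · exact Or.inr (Or.inr (Or.inr ⟨t, by simp [h5], h6⟩))
      · have c3 : KB.testBit r.i = true := by
          rw [hr.hb, lb] at c2; simpa using c2
        obtain ⟨s1, s2⟩ := step (F' := FR) hg hinj h.hv (hK.2 _ c3) yB xB hK.2 h2.2
          (fun w hw => by simpa using h2.1 w hw)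
        rw [bnz, if_pos s2] at h4
        refine ih _ _ _ h1 ⟨h2.1, s1⟩ ?_ h4
        intro w hw
        rcases h3 w hw with ⟨r', h5, h6⟩ | h5
        · simp only [List.mem_cons] at h5
          rcases h5 with rfl | h5
          · rw [← h6]; exact Or.inr (Or.inr (Or.inl c3))
          · exact Or.inl ⟨r', h5, h6⟩
        · exact Or.inr h5
    · have c3 : KR.testBit r.i = true := by
        rw [hr.hb, lb] at c1; simpa using c1
      obtain ⟨s1, s2⟩ := step (F' := FB) hg hinj h.hv (hK.1 _ c3) yR xR hK.1 h2.1
        (fun w hw => by simpa using h2.2 w hw)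
      rw [bnz, if_pos s2] at h4
      refine ih _ _ _ h1 ⟨s1, h2.2⟩ ?_ h4
      intro w hw
      rcases h3 w hw with ⟨r', h5, h6⟩ | h5
      · simp only [List.mem_cons] at h5
        rcases h5 with rfl | h5
        · rw [← h6]; exact Or.inr (Or.inl c3)
        · exact Or.inl ⟨r', h5, h6⟩
      · exact Or.inr h5

theorem covK {KR KB i : ℕ} (hK : KOk col v KR KB) (hC : Cov I [] KR KB) (hi : I i) :
    (KR.testBit i = true ↔ col v i = true) ∧ (KB.testBit i = true ↔ col v i = false) := by
  have := hC i hi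
  simp at this
  have h1 := hK.1 i
  have h2 := hK.2 i
  cases hh : col v i <;> simp_all

theorem chk_cons (A B KR KB : ℕ) (r : Rec) (st : List Rec) : chk A B KR KB (r :: st) =
    ((((r.L ⋏ A) ⋎ (r.G ⋏ B)) ⋏ (nifz(KR ⋏ r.b, r.B ⋏ KB, r.R ⋏ KR))) ⋏
      Nat.sub (((r.L ⋏ A) ⋎ (r.G ⋏ B)) ⋏ (nifz(KR ⋏ r.b, r.B ⋏ KB, r.R ⋏ KR))) 1) ⋎
      chk A B KR KB st := by
  cases r; rfl

theorem chk_sound (hg : Good p col) (hinj : ∀ u w, I u → I w → p u = p w → u = w)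
    {A B KR KB : ℕ} (h : ABOk p I v A B) (hK : KOk col v KR KB) (hC : Cov I [] KR KB)
    (st : List Rec) (hst : ∀ r ∈ st, RecOk p col I r) : chk A B KR KB st = 0 := by
  induction st with
  | nil => rfl
  | cons r st ih =>
    rw [chk_cons, ih (fun r h => hst r (by simp [h]))]
    have hr := hst r (by simp)
    rw [two]
    · rfl
    intro u w hu hw
    rw [tl, nnz] at hu hw
    simp only [Bool.and_eq_true] at hu hw
    obtain ⟨a1, a2⟩ := Y_ok h hr hu.1
    obtain ⟨b1, b2⟩ := Y_ok h hr hw.1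
    by_contra hne
    have hne : p u ≠ p w := fun h => hne (hinj _ _ a2 b2 h)
    have hu := hu.2
    have hw := hw.2
    rw [hr.hb] at hu hw; simp only [lb] at hu hw
    have := (covK hK hC hr.hi).1
    split_ifs at hu with h0
    · rw [if_pos h0, tl] at hw
      rw [tl] at hu
      simp only [Bool.and_eq_true] at hu hw
      rw [h0] at this
      exact hg.2 v r.i u w false a1 b1 hne (by simpa using this) (hK.2 _ hu.2)
        ((hg.1 _ _).trans (hr.hB _ hu.1)) (hK.2 _ hw.2) ((hg.1 _ _).trans (hr.hB _ hw.1))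
    · rw [if_neg h0, tl] at hw
      rw [tl] at hu
      simp only [Bool.and_eq_true] at hu hw
      exact hg.2 v r.i u w true a1 b1 hne (this.1 (by simpa using h0)) (hK.1 _ hu.2)
        ((hg.1 _ _).trans (hr.hR _ hu.1)) (hK.1 _ hw.2) ((hg.1 _ _).trans (hr.hR _ hw.1))

theorem sat_cons (A B K : ℕ) (pr : Rec → ℕ) (r : Rec) (st : List Rec) :
    sat A B K pr (r :: st) = nifz(K ⋏ r.b, sat A B K pr st,
       nifz(((r.L ⋏ A) ⋎ (r.G ⋏ B)) ⋏ (pr r ⋏ K), sat A B K pr st, r.b ⋎ sat A B K pr st)) := rfl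

theorem sat_sound (hg : Good p col) {A B K : ℕ} (h : ABOk p I v A B) (k : Bool) (pr : Rec → ℕ)
    (hK : ∀ w, K.testBit w = true → col v w = k)
    (st : List Rec) (hst : ∀ r ∈ st, RecOk p col I r)
    (hpr : ∀ r ∈ st, ∀ w, (pr r).testBit w = true → col r.i w = k) :
    ∀ w, (sat A B K pr st).testBit w = true → Satd p col I k v w := by
  induction st with
  | nil => intro w hw; simp [sat] at hw
  | cons r st ih =>
    have ih := ih (fun r h => hst r (by simp [h])) (fun r h => hpr r (by simp [h]))
    have hr := hst r (by simp)
    intro w hw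
    rw [sat_cons, nnz, nnz] at hw
    split_ifs at hw with h1 h2
    · exact ih w hw
    · exact ih w hw
    · rw [tor, hr.hb, Nat.testBit_two_pow] at hw
      simp only [Bool.or_eq_true, decide_eq_true_eq] at hw
      rcases hw with rfl | hw
      · rw [hr.hb, lb] at h1
        obtain ⟨m, hm⟩ := exbit h2
        rw [tl, tl] at hm
        simp only [Bool.and_eq_true] at hm
        obtain ⟨a1, a2⟩ := Y_ok h hr hm.1
        exact ⟨hK _ (by simpa using h1), m, a2, a1, hK _ hm.2.2,
          (hg.1 _ _).trans (hpr r (by simp) _ hm.2.1)⟩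
      · exact ih w hw

theorem Satd.mono {I' : ℕ → Prop} (hI : ∀ w, I w → I' w) {k u w} (h : Satd p col I k u w) :
    Satd p col I' k u w := by
  obtain ⟨h1, m, h2, h3⟩ := h
  exact ⟨h1, m, hI m h2, h3⟩

theorem upd_i (vb A B KR KB sR sB : ℕ) (r : Rec) : (upd vb A B KR KB sR sB r).i = r.i := by
  cases r; rfl

theorem upd_eq (vb A B KR KB sR sB : ℕ) (r : Rec) : upd vb A B KR KB sR sB r =
    ⟨r.i, r.b, nifz(B ⋏ r.b, r.L ⋎ vb, r.L), nifz(B ⋏ r.b, r.G, r.G ⋎ vb), 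
      nifz(KR ⋏ r.b, r.R, r.R ⋎ vb), nifz(KR ⋏ r.b, r.B ⋎ vb, r.B),
      nifz(KR ⋏ r.b, r.SR, r.SR ⋎ nifz(B ⋏ r.b, B, A) ⋏ (r.R ⋏ KR) ⋎ nifz(sR ⋏ r.b, 0, vb)),
      nifz(KR ⋏ r.b, r.SB ⋎ nifz(B ⋏ r.b, B, A) ⋏ (r.B ⋏ KB) ⋎ nifz(sB ⋏ r.b, 0, vb), r.SB)⟩ := by
  cases r; rfl

def Ins (I : ℕ → Prop) (v : ℕ) : ℕ → Prop := fun w => I w ∨ w = v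

theorem upd_sound (hg : Good p col) {A B KR KB sR sB : ℕ} (h : ABOk p I v A B)
    (hK : KOk col v KR KB) (hC : Cov I [] KR KB)
    (hsR : ∀ w, sR.testBit w = true → Satd p col I true v w)
    (hsB : ∀ w, sB.testBit w = true → Satd p col I false v w)
    (r : Rec) (hr : RecOk p col I r) :
    RecOk p col (Ins I v) (upd (2 ^ v) A B KR KB sR sB r) := by
  have hmono : ∀ w, I w → Ins I v w := fun w h => Or.inl h
  have hk := covK hK hC hr.hi
  rw [upd_eq]
  constructor
  · exact hr.hb
  · exact Or.inl hr.hi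
  · intro w hw
    dsimp only at hw ⊢
    rw [nnz, hr.hb] at hw; simp only [lb] at hw
    split_ifs at hw with h0
    · rw [tor, Nat.testBit_two_pow] at hw
      simp only [Bool.or_eq_true, decide_eq_true_eq] at hw
      rcases hw with hw | rfl
      · exact ⟨(hr.hL w hw).1, Or.inl (hr.hL w hw).2⟩
      · exact ⟨h.after hr.hi h0, Or.inr rfl⟩
    · exact ⟨(hr.hL w hw).1, Or.inl (hr.hL w hw).2⟩
  · intro w hw
    dsimp only at hw ⊢
    rw [nnz, hr.hb] at hw; simp only [lb] at hw
    split_ifs at hw with h0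
    · exact ⟨(hr.hG w hw).1, Or.inl (hr.hG w hw).2⟩
    · rw [tor, Nat.testBit_two_pow] at hw
      simp only [Bool.or_eq_true, decide_eq_true_eq] at hw
      rcases hw with hw | rfl
      · exact ⟨(hr.hG w hw).1, Or.inl (hr.hG w hw).2⟩
      · exact ⟨(h.hB _ (by simpa using h0)).1, Or.inr rfl⟩
  · intro w hw
    dsimp only at hw ⊢
    rw [nnz, hr.hb] at hw; simp only [lb] at hw
    split_ifs at hw with h0
    · exact hr.hR w hw
    · rw [tor, Nat.testBit_two_pow] at hw
      simp only [Bool.or_eq_true, decide_eq_true_eq] at hw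
      rcases hw with hw | rfl
      · exact hr.hR w hw
      · exact (hg.1 _ _).trans (hk.1.1 (by simpa using h0))
  · intro w hw
    dsimp only at hw ⊢
    rw [nnz, hr.hb] at hw; simp only [lb] at hw
    split_ifs at hw with h0
    · rw [tor, Nat.testBit_two_pow] at hw
      simp only [Bool.or_eq_true, decide_eq_true_eq] at hw
      rcases hw with hw | rfl
      · exact hr.hB w hw
      · rw [h0] at hk
        exact (hg.1 _ _).trans (by simpa using hk.1)
    · exact hr.hB w hw
  · intro w hw
    dsimp only at hw ⊢
    rw [nnz (KR ⋏ r.b), nnz (sR ⋏ r.b)] at hw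
    split_ifs at hw with h0 h1
    · exact (hr.hSR w hw).mono hmono
    all_goals
      rw [hr.hb, lb] at h0
      have hc := hk.1.1 (by simpa using h0)
      rw [tor, tor, tl, tl] at hw
      simp only [Bool.or_eq_true, Bool.and_eq_true] at hw
      rcases hw with (hw | hw) | hw
      · exact (hr.hSR w hw).mono hmono
      · exact ⟨hr.hR _ hw.2.1, v, Or.inr rfl, (X_ok h hr hw.1).1, (hg.1 _ _).trans hc,
          hK.1 _ hw.2.2⟩
      · simp only [Nat.zero_testBit, Nat.testBit_two_pow, decide_eq_true_eq, Bool.false_eq_true] at hw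
        try subst hw
        try rw [hr.hb, lb] at h1
        try exact ((hsR r.i (by simpa using h1)).symm hg).mono hmono
  · intro w hw
    dsimp only at hw ⊢
    rw [nnz (KR ⋏ r.b), nnz (sB ⋏ r.b)] at hw
    split_ifs at hw with h0 h1
    rotate_left 2
    · exact (hr.hSB w hw).mono hmono
    all_goals
      rw [hr.hb, lb] at h0
      have hc : col v r.i = false := by rw [h0] at hk; simpa using hk.1
      rw [tor, tor, tl, tl] at hw
      simp only [Bool.or_eq_true, Bool.and_eq_true] at hw
      rcases hw with (hw | hw) | hw
      · exact (hr.hSB w hw).mono hmono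
      · exact ⟨hr.hB _ hw.2.1, v, Or.inr rfl, (X_ok h hr hw.1).1, (hg.1 _ _).trans hc,
          hK.2 _ hw.2.2⟩
      · simp only [Nat.zero_testBit, Nat.testBit_two_pow, decide_eq_true_eq, Bool.false_eq_true] at hw
        try subst hw
        try rw [hr.hb, lb] at h1
        try exact ((hsB r.i (by simpa using h1)).symm hg).mono hmono
  · intro w hw hlt
    dsimp only at hlt ⊢
    rw [nnz, hr.hb]; simp only [lb]
    rcases hw with hw | rfl
    · split_ifs
      · rw [tor, hr.hLC w hw hlt]; rfl
      · exact hr.hLC w hw hlt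
    · have h0 : B.testBit r.i = false := by
        by_contra h0
        have := (h.hB r.i (by simpa using h0)).1
        omega
      rw [if_pos h0, tor, Nat.testBit_two_pow_self, Bool.or_true]

theorem bld_eq (vb A B KR KB sR sB : ℕ) (st tl : List Rec) :
    bld vb A B KR KB sR sB st tl = st.map (upd vb A B KR KB sR sB) ++ tl := by
  induction st with
  | nil => rfl
  | cons r st ih => 
    rw [List.map_cons, List.cons_append, ← ih]; rfl

structure SpecOk (p : ℕ → ℕ) (col : ℕ → ℕ → Bool) (I : ℕ → Prop) (s : Spec) : Prop where
  hb : s.b = 2 ^ s.i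
  hv : ∀ m, I m → p m ≠ p s.i
  lo : ∀ w, s.lo.testBit w = true → p w < p s.i
  hi : ∀ w, s.hi.testBit w = true → p s.i < p w
  rB : ∀ w, s.rB.testBit w = true → p w < p s.i → col s.i w = true
  rA : ∀ w, s.rA.testBit w = true → p s.i < p w → col s.i w = true
  bB : ∀ w, s.bB.testBit w = true → p w < p s.i → col s.i w = false
  bA : ∀ w, s.bA.testBit w = true → p s.i < p w → col s.i w = false

theorem gap_sound (hg : Good p col) {s : Spec} (k : List Rec → Bool) {A B : ℕ}
    {pre rest st : List Rec} (hst : StOk p col I st) (hs : SpecOk p col I s)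
    (hAB : ABOk p I s.i A B) (hpr : st = pre ++ rest)
    (h1 : ∀ r ∈ pre, p r.i < p s.i) (h2 : ∀ r ∈ rest, p s.i < p r.i)
    (hgap : gap s k A B pre rest st = true) :
    ∃ st', StOk p col (Ins I s.i) st' ∧ k st' = true := by
  unfold gap at hgap
  rw [bnz, if_pos] at hgap
  swap
  · by_contra h0
    obtain ⟨w, hw⟩ := exbit h0
    rw [tor, tl, tl] at hw
    simp only [Bool.or_eq_true, Bool.and_eq_true] at hw
    rcases hw with hw | hw
    · have := hs.lo w hw.1
      have := (hAB.hA w hw.2).1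
      omega
    · have := hs.hi w hw.1
      have := (hAB.hB w hw.2).1
      omega
  have hK : KOk col s.i ((s.rB ⋏ B) ⋎ (s.rA ⋏ A)) ((s.bB ⋏ B) ⋎ (s.bA ⋏ A)) := by
    constructor
    · intro w hw
      rw [tor, tl, tl] at hw
      simp only [Bool.or_eq_true, Bool.and_eq_true] at hw
      rcases hw with hw | hw
      · exact hs.rB w hw.1 (hAB.hB w hw.2).1
      · exact hs.rA w hw.1 (hAB.hA w hw.2).1
    · intro w hw
      rw [tor, tl, tl] at hw
      simp only [Bool.or_eq_true, Bool.and_eq_true] at hw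
      rcases hw with hw | hw
      · exact hs.bB w hw.1 (hAB.hB w hw.2).1
      · exact hs.bA w hw.1 (hAB.hA w hw.2).1
  beta_reduce at hgap
  obtain ⟨ts, FR, FB, a1, a2, a3, a4⟩ := pass_sound hg hst.hinj hAB hK _ st hst.hr [] 0 0
    (by simp) ⟨by simp, by simp⟩ (fun w hw => Or.inl (hst.hI w hw)) hgap
  obtain ⟨KR, KB, b1, b2, b3⟩ := dec_sound hg hst.hinj hAB.hv _ ts _ _ _ _ a1 hK a2 a3 a4
  rw [bnz, if_pos (chk_sound hg hst.hinj hAB b1 b2 st hst.hr)] at b3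
  have hsR := sat_sound hg hAB true Rec.R b1.1 st hst.hr (fun r hr => (hst.hr r hr).hR)
  have hsB := sat_sound hg hAB false Rec.B b1.2 st hst.hr (fun r hr => (hst.hr r hr).hB)
  refine ⟨_, ?_, b3⟩
  generalize sat A B KR Rec.R st = sR at *
  generalize sat A B KB Rec.B st = sB at *
  rw [bld_eq, bld_eq, List.append_nil, hs.hb]
  have hup := upd_sound hg hAB b1 b2 hsR hsB
  have hmono : ∀ w, I w → Ins I s.i w := fun w h => Or.inl h
  have hpw := hst.hs
  rw [hpr, List.pairwise_append] at hpw
  constructor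
  · intro r hr
    rw [List.mem_append, List.mem_cons, List.mem_map, List.mem_map] at hr
    rcases hr with ⟨r', hr', rfl⟩ | rfl | ⟨r', hr', rfl⟩
    · exact hup _ (hst.hr r' (by rw [hpr]; simp [hr']))
    · constructor
      · rfl
      · exact Or.inr rfl
      · intro w hw; exact ⟨(hAB.hB w hw).1, Or.inl (hAB.hB w hw).2⟩
      · intro w hw; exact ⟨(hAB.hA w hw).1, Or.inl (hAB.hA w hw).2⟩
      · exact b1.1
      · exact b1.2
      · intro w hw; exact (hsR w hw).mono hmono
      · intro w hw; exact (hsB w hw).mono hmono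
      · intro w hw hlt
        rcases hw with hw | rfl
        · exact hAB.hC w hw hlt
        · exact absurd hlt (lt_irrefl _)
    · exact hup _ (hst.hr r' (by rw [hpr]; simp [hr']))
  · rw [List.pairwise_append, List.pairwise_cons, List.pairwise_map, List.pairwise_map]
    simp only [upd_i, List.mem_map, List.mem_cons]
    refine ⟨hpw.1, ⟨?_, hpw.2.1⟩, ?_⟩
    · rintro a ⟨r, hr, rfl⟩
      rw [upd_i]; exact h2 r hr
    · rintro a ⟨r, hr, rfl⟩ b (rfl | ⟨r', hr', rfl⟩)
      · rw [upd_i]; exact h1 r hr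
      · rw [upd_i, upd_i]; exact hpw.2.2 r hr r' hr'
  · rintro w (hw | rfl)
    · obtain ⟨r, hr, rfl⟩ := hst.hI w hw
      refine ⟨upd (2 ^ s.i) A B KR KB sR sB r, ?_, upd_i ..⟩
      rw [hpr, List.mem_append] at hr
      rw [List.mem_append, List.mem_cons]
      rcases hr with hr | hr
      · exact Or.inl (List.mem_map_of_mem hr)
      · exact Or.inr (Or.inr (List.mem_map_of_mem hr))
    · exact ⟨_, List.mem_append_right _ List.mem_cons_self, rfl⟩
  · rintro u w (hu | rfl) (hw | rfl) h
    · exact hst.hinj u w hu hw h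
    · exact absurd h (hs.hv u hu)
    · exact absurd h.symm (hs.hv w hw)
    · rfl

theorem gaps_sound (hg : Good p col) {s : Spec} (k : List Rec → Bool)
    {st : List Rec} (hst : StOk p col I st) (hs : SpecOk p col I s) (rest : List Rec) :
    ∀ (B : ℕ) (pre : List Rec), st = pre ++ rest → (∀ r ∈ pre, p r.i < p s.i) →
      (∀ w, B.testBit w = true → p w < p s.i ∧ I w) →
      (∀ w, I w → (∀ r ∈ rest, p w < p r.i) → B.testBit w = true) →
      gaps s k st rest B pre = true →
    ∃ st', StOk p col (Ins I s.i) st' ∧ k st' = true := by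
  induction rest with
  | nil =>
    intro B pre h1 h2 h3 h4 h5
    refine gap_sound hg k hst hs (A := 0) (B := B) ⟨hs.hv, by simp, h3, ?_⟩ h1 h2 (by simp) h5
    intro w hw _
    exact h4 w hw (by simp)
  | cons r rest ih =>
    intro B pre h1 h2 h3 h4 h5
    have hr : RecOk p col I r := hst.hr r (by rw [h1]; simp)
    have h5 : both(gap s k (r.G ⋎ r.b) B pre (r :: rest) st,
        gaps s k st rest (r.L ⋎ r.b) (pre ++ [r])) = true := h5
    rw [bth] at h5
    simp only [Bool.and_eq_true] at h5
    have hpw := hst.hs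
    rw [h1, List.pairwise_append, List.pairwise_cons] at hpw
    by_cases hlt : p s.i < p r.i
    · have hal : ∀ r' ∈ r :: rest, p s.i < p r'.i := by
        intro r' hr'
        rw [List.mem_cons] at hr'
        rcases hr' with rfl | hr'
        · exact hlt
        · exact hlt.trans (hpw.2.1.1 r' hr')
      refine gap_sound hg k hst hs ⟨hs.hv, ?_, h3, ?_⟩ h1 h2 hal h5.1
      · intro w hw
        rw [tor, hr.hb, Nat.testBit_two_pow] at hw
        simp only [Bool.or_eq_true, decide_eq_true_eq] at hw
        rcases hw with hw | rfl
        · exact ⟨hlt.trans (hr.hG w hw).1, (hr.hG w hw).2⟩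
        · exact ⟨hlt, hr.hi⟩
      · intro w hw hw2
        exact h4 w hw (fun r' hr' => hw2.trans (hal r' hr'))
    · have hlt : p r.i < p s.i := by
        have := hs.hv _ hr.hi
        omega
      refine ih _ _ (by rw [h1]; simp) ?_ ?_ ?_ h5.2
      · intro r' hr'
        simp only [List.mem_append, List.mem_singleton] at hr'
        rcases hr' with hr' | rfl
        · exact h2 r' hr'
        · exact hlt
      · intro w hw
        rw [tor, hr.hb, Nat.testBit_two_pow] at hw
        simp only [Bool.or_eq_true, decide_eq_true_eq] at hw
        rcases hw with hw | rfl
        · exact ⟨(hr.hL w hw).1.trans hlt, (hr.hL w hw).2⟩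
        · exact ⟨hlt, hr.hi⟩
      · intro w hw hw2
        rw [tor, hr.hb, Nat.testBit_two_pow]
        obtain ⟨r', hr', rfl⟩ := hst.hI w hw
        rw [h1, List.mem_append, List.mem_cons] at hr'
        rcases hr' with hr' | rfl | hr'
        · rw [hr.hLC _ hw (hpw.2.2 r' hr' r (by simp))]; rfl
        · simp
        · exact absurd (hw2 r' hr') (lt_irrefl _)

def SpecsOk (p : ℕ → ℕ) (col : ℕ → ℕ → Bool) : (ℕ → Prop) → List Spec → Prop
  | _, [] => True
  | I, s :: ss => SpecOk p col I s ∧ SpecsOk p col (Ins I s.i) ss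

theorem run_sound (hg : Good p col) (leaf : List Rec → Bool) (ss : List Spec) :
    ∀ (I : ℕ → Prop) (st : List Rec),
    StOk p col I st → SpecsOk p col I ss → run leaf ss st = true →
    ∃ (I' : ℕ → Prop) (st' : List Rec), StOk p col I' st' ∧ leaf st' = true ∧ (∀ w, I w → I' w) ∧
      ∀ s ∈ ss, I' s.i := by
  induction ss with
  | nil => intro I st h1 _ h; exact ⟨I, st, h1, h, fun _ h => h, by simp⟩
  | cons s ss ih =>
    intro I st h1 h2 h3
    have h3 : gaps s (run leaf ss) st st 0 [] = true := h3
    obtain ⟨st', a1, a2⟩ := gaps_sound hg (run leaf ss) h1 h2.1 st 0 [] rfl (by simp) (by simp) (by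
      intro w hw hw2
      obtain ⟨r', hr', rfl⟩ := h1.hI w hw
      exact absurd (hw2 r' hr') (lt_irrefl _)) h3
    obtain ⟨I', st2, b1, b2, b3, b4⟩ := ih _ st' a1 h2.2 a2
    refine ⟨I', st2, b1, b2, fun w hw => b3 w (Or.inl hw), ?_⟩
    intro s' hs'
    rw [List.mem_cons] at hs'
    rcases hs' with rfl | hs'
    · exact b3 _ (Or.inr rfl)
    · exact b4 s' hs'
end

def mask {α : Type} (q : α → Bool) (f : α → ℕ) (l : List α) : ℕ :=
  l.foldr (fun x m => cond (q x) (Nat.lor (2 ^ f x) m) m) 0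

theorem mask_sound {α : Type} (q : α → Bool) (f : α → ℕ) (l : List α) (w : ℕ)
    (h : (mask q f l).testBit w = true) : ∃ x ∈ l, q x = true ∧ f x = w := by
  induction l with
  | nil => simp [mask] at h
  | cons x l ih =>
    have h : (cond (q x) (Nat.lor (2 ^ f x) (mask q f l)) (mask q f l)).testBit w = true := h
    cases hq : q x
    · rw [hq] at h
      obtain ⟨x', h1, h2⟩ := ih h
      exact ⟨x', by simp [h1], h2⟩
    · rw [hq, cond_true, tor, Nat.testBit_two_pow] at h
      simp only [Bool.or_eq_true, decide_eq_true_eq] at h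
      rcases h with h | h
      · exact ⟨x, by simp, hq, h⟩
      · obtain ⟨x', h1, h2⟩ := ih h
        exact ⟨x', by simp [h1], h2⟩

def mkSpec (pr : List (ℕ × ℕ)) (fl : List (ℕ × ℕ × Bool)) (v : ℕ) : Spec :=
  ⟨v, 2 ^ v, mask (fun e => Nat.beq e.2 v) (fun e => e.1) pr,
    mask (fun e => Nat.beq e.1 v) (fun e => e.2) pr,
    mask (fun e => Nat.beq e.2.1 v && e.2.2) (fun e => e.1) fl,
    mask (fun e => Nat.beq e.1 v && e.2.2) (fun e => e.2.1) fl,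
    mask (fun e => Nat.beq e.2.1 v && !e.2.2) (fun e => e.1) fl,
    mask (fun e => Nat.beq e.1 v && !e.2.2) (fun e => e.2.1) fl⟩

def Holds (p : ℕ → ℕ) (col : ℕ → ℕ → Bool) (pr : List (ℕ × ℕ)) (fl : List (ℕ × ℕ × Bool)) : Prop :=
  (∀ e ∈ pr, p e.1 < p e.2) ∧ ∀ t ∈ fl, p t.1 < p t.2.1 → col t.1 t.2.1 = t.2.2

theorem mkSpec_ok {p col pr fl} {I : ℕ → Prop} (hg : Good p col) (h : Holds p col pr fl) (v : ℕ)
    (hv : ∀ m, I m → p m ≠ p v) : SpecOk p col I (mkSpec pr fl v) := by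
  constructor
  · rfl
  · exact hv
  · intro w hw
    obtain ⟨x, h1, h2, h3⟩ := mask_sound _ _ _ _ hw
    simp only [Nat.beq_eq] at h2
    subst h2 h3
    exact h.1 x h1
  · intro w hw
    obtain ⟨x, h1, h2, h3⟩ := mask_sound _ _ _ _ hw
    simp only [Nat.beq_eq] at h2
    subst h2 h3
    exact h.1 x h1
  all_goals
    intro w hw hlt
    obtain ⟨x, h1, h2, h3⟩ := mask_sound _ _ _ _ hw
    simp only [Nat.beq_eq, Bool.and_eq_true, Bool.not_eq_true'] at h2
    obtain ⟨h2, h4⟩ := h2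
    subst h2 h3
    have := h.2 x h1 hlt
    rw [h4] at this
    first
    | exact this
    | exact (hg.1 _ _).trans this

theorem mkSpecs_ok {p col pr fl} (hg : Good p col) (h : Holds p col pr fl) (order : List ℕ) :
    ∀ I : ℕ → Prop, (∀ v ∈ order, ∀ m, I m → p m ≠ p v) → order.Pairwise (fun a b => p a ≠ p b) →
    SpecsOk p col I (order.map (mkSpec pr fl)) := by
  induction order with
  | nil => intros; trivial
  | cons v order ih =>
    intro I h1 h2
    rw [List.pairwise_cons] at h2
    refine ⟨mkSpec_ok hg h v (h1 v (by simp)), ih _ ?_ h2.2⟩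
    rintro v' hv' m (hm | rfl)
    · exact h1 v' (by simp [hv']) m hm
    · exact h2.1 v' hv'

def leafChk (pr : List (ℕ × ℕ)) (fl : List (ℕ × ℕ × Bool)) (st : List Rec) : Bool :=
  pr.all (fun e => st.any fun r => Nat.beq r.i e.2 && r.L.testBit e.1) &&
  fl.all (fun t => st.any fun r => Nat.beq r.i t.2.1 &&
    (!r.L.testBit t.1 || (cond t.2.2 r.R r.B).testBit t.1))

/-- Main soundness statement of the search. -/
theorem eng {p col pr fl} (hg : Good p col) (h : Holds p col pr fl) (order : List ℕ)
    (hinj : order.Pairwise (fun a b => p a ≠ p b)) (pr' : List (ℕ × ℕ))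
    (fl' : List (ℕ × ℕ × Bool)) (hor : (fl'.all fun t => order.contains t.1) = true)
    (hrun : run (leafChk pr' fl') (order.map (mkSpec pr fl)) [] = true) :
    Holds p col pr' fl' := by
  obtain ⟨I, st, h1, h2, _, h3⟩ := run_sound hg _ _ (fun _ => False) []
    ⟨by simp, by simp, by simp, by simp⟩ (mkSpecs_ok hg h order _ (by simp) hinj) hrun
  simp only [leafChk, Bool.and_eq_true, List.all_eq_true, List.any_eq_true] at h2
  simp only [List.all_eq_true, List.contains_iff_mem] at hor
  constructor
  · intro e he
    obtain ⟨r, hr, h4, h5⟩ := h2.1 e he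
    rw [Nat.beq_eq] at h4
    rw [← h4]
    exact ((h1.hr r hr).hL _ h5).1
  · intro t ht hlt
    obtain ⟨r, hr, h4, h5⟩ := h2.2 t ht
    have hI : I t.1 := h3 (mkSpec pr fl t.1) (List.mem_map_of_mem (hor t ht))
    rw [Nat.beq_eq] at h4
    rw [← h4] at hlt ⊢
    rw [(h1.hr r hr).hLC _ hI hlt] at h5
    simp only [Bool.not_true, Bool.false_or] at h5
    have hs := hg.1
    cases hk : t.2.2
    · rw [hk] at h5
      exact (hs _ _).trans ((h1.hr r hr).hB _ h5)
    · rw [hk] at h5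
      exact (hs _ _).trans ((h1.hr r hr).hR _ h5)

theorem eng_false {p col pr fl} (hg : Good p col) (h : Holds p col pr fl) (order : List ℕ)
    (hinj : order.Pairwise (fun a b => p a ≠ p b))
    (hrun : run (fun _ => false) (order.map (mkSpec pr fl)) [] = true) : False := by
  obtain ⟨I, st, h1, h2, _⟩ := run_sound hg _ _ (fun _ => False) []
    ⟨by simp, by simp, by simp, by simp⟩ (mkSpecs_ok hg h order _ (by simp) hinj) hrun
  exact absurd h2 (by simp)

def prC : List (ℕ × ℕ) := [(0, 1), (0, 2), (0, 3), (2, 1), (3, 1), (2, 3)]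
def prA : List (ℕ × ℕ) := [(0, 4), (0, 5), (0, 6), (0, 7), (4, 1), (5, 1), (6, 1), (7, 1),
  (4, 5), (4, 6), (4, 7), (5, 6), (5, 7), (6, 7)]
def prE : List (ℕ × ℕ) := [(0, 8), (0, 9), (0, 10), (0, 11), (8, 1), (9, 1), (10, 1), (11, 1),
  (8, 9), (8, 10), (8, 11), (9, 10), (9, 11), (10, 11)]
def flC (o3 : Bool) : List (ℕ × ℕ × Bool) := [(0, 1, true), (0, 2, false), (0, 3, false),
  (2, 1, false), (3, 1, false), (2, 3, o3)]
def flA (o1 : Bool) : List (ℕ × ℕ × Bool) := [(0, 4, true), (0, 5, true), (0, 6, true), (0, 7, true),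
  (4, 1, false), (5, 1, false), (6, 1, false), (7, 1, false), (4, 6, o1)]
def flE (o2 : Bool) : List (ℕ × ℕ × Bool) := [(0, 8, false), (0, 9, false), (0, 10, false),
  (0, 11, false), (8, 1, true), (9, 1, true), (10, 1, true), (11, 1, true), (8, 10, o2)]
def prA' (o3 : Bool) : List (ℕ × ℕ) :=
  cond o3 [(2, 5), (2, 6), (2, 7), (3, 6), (3, 7)] [(2, 7)]
def prE' (o3 : Bool) : List (ℕ × ℕ) :=
  cond o3 [(10, 3), (9, 3), (8, 3), (9, 2), (8, 2)] [(8, 3)]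
def flA' (o1 o3 : Bool) : List (ℕ × ℕ × Bool) :=
  (4, 5, true) :: (6, 7, false) :: (5, 6, !o1) :: (4, 7, !o1) :: (5, 7, o1) :: (4, 2, true) ::
  (5, 2, true) :: (6, 2, true) :: (4, 3, true) :: (5, 3, true) :: (6, 3, true) ::
  cond o3 [(2, 6, true), (2, 7, true), (3, 4, true), (3, 5, true)]
    [(2, 4, true), (2, 5, true), (2, 6, true), (2, 7, true)]
def flE' (o2 o3 : Bool) : List (ℕ × ℕ × Bool) :=
  (8, 9, false) :: (10, 11, true) :: (9, 10, !o2) :: (8, 11, !o2) :: (9, 11, o2) :: (2, 9, true) ::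
  (2, 10, true) :: (2, 11, true) :: (3, 9, true) :: (3, 10, true) :: (3, 11, true) ::
  cond o3 [(10, 2, true), (11, 2, true), (8, 3, true), (9, 3, true)]
    [(8, 3, true), (9, 3, true), (10, 3, true), (11, 3, true)]

theorem runA (o1 o3 : Bool) : run (leafChk (prA' o3) (flA' o1 o3))
    ([0, 1, 4, 5, 6, 7, 2, 3].map (mkSpec (prC ++ prA) (flC o3 ++ flA o1))) [] = true := by
  revert o1 o3; decide +kernel
theorem runE (o2 o3 : Bool) : run (leafChk (prE' o3) (flE' o2 o3))
    ([0, 1, 8, 9, 10, 11, 2, 3].map (mkSpec (prC ++ prE) (flC o3 ++ flE o2))) [] = true := by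
  revert o2 o3; decide +kernel

def prT (o3 : Bool) : List (ℕ × ℕ) := prC ++ prA ++ prE ++ prA' o3 ++ prE' o3
def flT (o1 o2 o3 : Bool) : List (ℕ × ℕ × Bool) :=
  flC o3 ++ flA o1 ++ flE o2 ++ flA' o1 o3 ++ flE' o2 o3

def prS : List (ℕ × ℕ) := [(0, 1), (0, 2), (0, 3), (0, 4), (0, 5), (0, 6), (0, 7), (1, 2), (2, 3),
  (3, 4), (4, 5), (5, 6), (6, 7)]
def flS (k : Bool) : List (ℕ × ℕ × Bool) := [(0, 1, k), (0, 2, k), (0, 3, k), (0, 4, k), (0, 5, k),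
  (0, 6, k), (0, 7, k)]
theorem runS (k : Bool) : run (fun _ => false) ([0, 1, 2, 3, 4, 5, 6, 7].map (mkSpec prS (flS k))) [] = true := by
  revert k; decide +kernel
def prS' : List (ℕ × ℕ) := [(1, 0), (2, 0), (3, 0), (4, 0), (5, 0), (6, 0), (7, 0), (1, 2), (2, 3),
  (3, 4), (4, 5), (5, 6), (6, 7)]
def flS' (k : Bool) : List (ℕ × ℕ × Bool) := [(1, 0, k), (2, 0, k), (3, 0, k), (4, 0, k), (5, 0, k),
  (6, 0, k), (7, 0, k)]
theorem runS' (k : Bool) : run (fun _ => false) ([0, 7, 6, 5, 4, 3, 2, 1].map (mkSpec prS' (flS' k))) [] = true := by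
  revert k; decide +kernel
def prF : List (ℕ × ℕ) := [(0, 1), (0, 2), (0, 3), (0, 4), (0, 5), (0, 6), (2, 1), (3, 1), (4, 1),
  (5, 1), (6, 1), (2, 3), (3, 4), (4, 5), (5, 6)]
def flF (k : Bool) : List (ℕ × ℕ × Bool) := [(0, 2, k), (0, 3, k), (0, 4, k), (0, 5, k), (0, 6, k),
  (2, 1, !k), (3, 1, !k), (4, 1, !k), (5, 1, !k), (6, 1, !k)]
theorem runF (k : Bool) : run (fun _ => false) ([0, 1, 2, 3, 4, 5, 6].map (mkSpec prF (flF k))) [] = true := by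
  revert k; decide +kernel

theorem big000 : run (fun _ => false)
    ([0, 1, 2, 3, 4, 5, 6, 7, 10, 9, 11, 8].map (mkSpec (prT false) (flT false false false))) [] = true := by
  decide +kernel
theorem big001 : run (fun _ => false)
    ([0, 1, 2, 3, 4, 5, 6, 7, 8, 9, 10, 11].map (mkSpec (prT true) (flT false false true))) [] = true := by
  decide +kernel
theorem big010 : run (fun _ => false)
    ([0, 1, 2, 3, 8, 9, 10, 11, 4, 6, 7, 5].map (mkSpec (prT false) (flT false true false))) [] = true := by
  decide +kernel
theorem big011 : run (fun _ => false)
    ([0, 1, 2, 3, 8, 9, 10, 11, 7, 6, 5, 4].map (mkSpec (prT true) (flT false true true))) [] = true := by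
  decide +kernel
theorem big100 : run (fun _ => false)
    ([0, 1, 2, 3, 4, 5, 6, 7, 9, 11, 8, 10].map (mkSpec (prT false) (flT true false false))) [] = true := by
  decide +kernel
theorem big101 : run (fun _ => false)
    ([0, 1, 2, 3, 4, 5, 6, 7, 8, 9, 10, 11].map (mkSpec (prT true) (flT true false true))) [] = true := by
  decide +kernel
theorem big110 : run (fun _ => false)
    ([0, 1, 2, 3, 8, 9, 10, 11, 5, 6, 7, 4].map (mkSpec (prT false) (flT true true false))) [] = true := by
  decide +kernel
theorem big111 : run (fun _ => false)
    ([0, 1, 2, 3, 8, 9, 10, 11, 7, 6, 5, 4].map (mkSpec (prT true) (flT true true true))) [] = true := by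
  decide +kernel

structure ND (e : ℕ → ℕ → Bool) : Prop where
  sym : ∀ u w, e u w = e w u
  nd : ∀ u w m n k, 1 ≤ u → w ≤ 13 → u < m → m < w → u < n → n < w → m ≠ n →
    e u w = k → e u m = k → e m w = k → e u n = k → e n w = k → False

theorem ND.good {e : ℕ → ℕ → Bool} (h : ND e) (p : ℕ → ℕ) (hp : ∀ a, 1 ≤ p a ∧ p a ≤ 13) :
    Good p (fun a b => e (p a) (p b)) := by
  refine ⟨fun u w => h.sym _ _, ?_⟩
  intro u w m n k h1 h2 hmn a1 a2 a3 a4 a5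
  simp only [] at a1 a2 a3 a4 a5
  rcases h1 with ⟨b1, b2⟩ | ⟨b1, b2⟩ <;> rcases h2 with ⟨b3, b4⟩ | ⟨b3, b4⟩
  · exact h.nd _ _ _ _ k (hp u).1 (hp w).2 b1 b2 b3 b4 hmn a1 a2 a3 a4 a5
  · omega
  · omega
  · exact h.nd _ _ _ _ k (hp w).1 (hp u).2 b1 b2 b3 b4 hmn ((h.sym _ _).trans a1)
      ((h.sym _ _).trans a3) ((h.sym _ _).trans a2) ((h.sym _ _).trans a5) ((h.sym _ _).trans a4)

def asg (l : List ℕ) (i : ℕ) : ℕ := l.getD i 1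

theorem asg_mem (l : List ℕ) (h : ∀ x ∈ l, 1 ≤ x ∧ x ≤ 13) (a : ℕ) :
    1 ≤ asg l a ∧ asg l a ≤ 13 := by
  unfold asg
  rcases lt_or_ge a l.length with h1 | h1
  · rw [List.getD_eq_getElem _ _ h1]
    exact h _ (List.getElem_mem h1)
  · rw [List.getD_eq_default _ _ h1]; omega

theorem exInc (s : Finset ℕ) (k : ℕ) (h : k ≤ s.card) :
    ∃ l : List ℕ, l.length = k ∧ l.Pairwise (· < ·) ∧ ∀ x ∈ l, x ∈ s := by
  refine ⟨(s.sort (· ≤ ·)).take k, by simp [h], ?_, ?_⟩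
  · exact (Finset.sortedLT_sort s).pairwise.sublist (List.take_sublist _ _)
  · intro x hx
    exact (Finset.mem_sort _).1 (List.mem_of_mem_take hx)

def mid (e : ℕ → ℕ → Bool) (a b : Bool) : Finset ℕ :=
  (Finset.Icc 2 12).filter (fun v => e 1 v = a ∧ e v 13 = b)

theorem mem_mid {e : ℕ → ℕ → Bool} {a b : Bool} {v : ℕ} :
    v ∈ mid e a b ↔ (2 ≤ v ∧ v ≤ 12) ∧ e 1 v = a ∧ e v 13 = b := by
  simp [mid]

theorem card_rr {e : ℕ → ℕ → Bool} (h : ND e) (h0 : e 1 13 = true) :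
    (mid e true true).card ≤ 1 := by
  by_contra hc
  obtain ⟨l, h1, h2, h3⟩ := exInc _ 2 (by omega : 2 ≤ (mid e true true).card)
  match l, h1 with
  | [x, y], _ =>
    simp only [List.mem_cons, List.not_mem_nil, or_false, forall_eq_or_imp, forall_eq, mem_mid] at h3
    simp at h2
    exact h.nd 1 13 x y true (by omega) (by omega) (by omega) (by omega) (by omega) (by omega)
      (by omega) h0 h3.1.2.1 h3.1.2.2 h3.2.2.1 h3.2.2.2

theorem card_F {e : ℕ → ℕ → Bool} (h : ND e) (k : Bool) : (mid e k (!k)).card ≤ 4 := by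
  by_contra hc
  obtain ⟨l, h1, h2, h3⟩ := exInc _ 5 (by omega : 5 ≤ (mid e k (!k)).card)
  match l, h1 with
  | [x1, x2, x3, x4, x5], _ =>
    simp only [List.mem_cons, List.not_mem_nil, or_false, forall_eq_or_imp, forall_eq, mem_mid] at h3
    simp only [List.pairwise_cons, List.mem_cons, List.not_mem_nil, or_false, forall_eq_or_imp,
      forall_eq] at h2
    have hg := h.good (asg [1, 13, x1, x2, x3, x4, x5]) (asg_mem _ (by
      simp only [List.mem_cons, List.not_mem_nil, or_false, forall_eq_or_imp, forall_eq]; omega))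
    refine eng_false (pr := prF) (fl := flF k) hg ?_ [0, 1, 2, 3, 4, 5, 6] ?_ (runF k)
    · constructor
      · simp only [prF, List.mem_cons, List.not_mem_nil, or_false, forall_eq_or_imp, forall_eq]
        simp [asg]; omega
      · simp only [flF, List.mem_cons, List.not_mem_nil, or_false, forall_eq_or_imp, forall_eq]
        simp [asg]; simp [h3]
    · simp [asg]; omega

theorem card_S {e : ℕ → ℕ → Bool} (h : ND e) (s : Finset ℕ)
    (hs : ∀ v ∈ s, (2 ≤ v ∧ v ≤ 12) ∧ e 1 v = false) : s.card ≤ 6 := by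
  by_contra hc
  obtain ⟨l, h1, h2, h3⟩ := exInc _ 7 (by omega : 7 ≤ s.card)
  replace h3 := fun x hx => hs x (h3 x hx)
  match l, h1 with
  | [x1, x2, x3, x4, x5, x6, x7], _ =>
    simp only [List.mem_cons, List.not_mem_nil, or_false, forall_eq_or_imp, forall_eq] at h3
    simp only [List.pairwise_cons, List.mem_cons, List.not_mem_nil, or_false, forall_eq_or_imp,
      forall_eq] at h2
    have hg := h.good (asg [1, x1, x2, x3, x4, x5, x6, x7]) (asg_mem _ (by
      simp only [List.mem_cons, List.not_mem_nil, or_false, forall_eq_or_imp, forall_eq]; omega))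
    refine eng_false (pr := prS) (fl := flS false) hg ?_ [0, 1, 2, 3, 4, 5, 6, 7] ?_ (runS false)
    · constructor
      · simp only [prS, List.mem_cons, List.not_mem_nil, or_false, forall_eq_or_imp, forall_eq]
        simp [asg]; omega
      · simp only [flS, List.mem_cons, List.not_mem_nil, or_false, forall_eq_or_imp, forall_eq]
        simp [asg]; simp [h3]
    · simp [asg]; omega

theorem card_S' {e : ℕ → ℕ → Bool} (h : ND e) (s : Finset ℕ)
    (hs : ∀ v ∈ s, (2 ≤ v ∧ v ≤ 12) ∧ e v 13 = false) : s.card ≤ 6 := by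
  by_contra hc
  obtain ⟨l, h1, h2, h3⟩ := exInc _ 7 (by omega : 7 ≤ s.card)
  replace h3 := fun x hx => hs x (h3 x hx)
  match l, h1 with
  | [x1, x2, x3, x4, x5, x6, x7], _ =>
    simp only [List.mem_cons, List.not_mem_nil, or_false, forall_eq_or_imp, forall_eq] at h3
    simp only [List.pairwise_cons, List.mem_cons, List.not_mem_nil, or_false, forall_eq_or_imp,
      forall_eq] at h2
    have hg := h.good (asg [13, x1, x2, x3, x4, x5, x6, x7]) (asg_mem _ (by
      simp only [List.mem_cons, List.not_mem_nil, or_false, forall_eq_or_imp, forall_eq]; omega))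
    refine eng_false (pr := prS') (fl := flS' false) hg ?_ [0, 7, 6, 5, 4, 3, 2, 1] ?_ (runS' false)
    · constructor
      · simp only [prS', List.mem_cons, List.not_mem_nil, or_false, forall_eq_or_imp, forall_eq]
        simp [asg]; omega
      · simp only [flS', List.mem_cons, List.not_mem_nil, or_false, forall_eq_or_imp, forall_eq]
        simp [asg]; simp [h3]
    · simp [asg]; omega

theorem mid_disj {e : ℕ → ℕ → Bool} {a b a' b' : Bool} (h : a ≠ a' ∨ b ≠ b') :
    Disjoint (mid e a b) (mid e a' b') := by
  rw [Finset.disjoint_left]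
  intro v h1 h2
  rw [mem_mid] at h1 h2
  rcases h with h | h
  · exact h (h1.2.1.symm.trans h2.2.1)
  · exact h (h1.2.2.symm.trans h2.2.2)

theorem card_mid (e : ℕ → ℕ → Bool) : (mid e true true).card + (mid e true false).card +
    (mid e false true).card + (mid e false false).card = 11 := by
  rw [← Finset.card_union_of_disjoint (mid_disj (by simp)),
    ← Finset.card_union_of_disjoint, ← Finset.card_union_of_disjoint]
  · have : mid e true true ∪ mid e true false ∪ mid e false true ∪ mid e false false =
        Finset.Icc 2 12 := by
      ext v
      simp only [Finset.mem_union, mem_mid, Finset.mem_Icc]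
      cases e 1 v <;> cases e v 13 <;> simp
    rw [this]; rfl
  · simp only [Finset.disjoint_union_left]
    refine ⟨⟨mid_disj ?_, mid_disj ?_⟩, mid_disj ?_⟩ <;> simp
  · simp only [Finset.disjoint_union_left]
    refine ⟨mid_disj ?_, mid_disj ?_⟩ <;> simp

theorem Holds.app {p col pr fl pr' fl'} (h : Holds p col pr fl) (h' : Holds p col pr' fl') :
    Holds p col (pr ++ pr') (fl ++ fl') := by
  constructor
  · intro e he
    rcases List.mem_append.1 he with he | he
    · exact h.1 e he
    · exact h'.1 e he
  · intro e he
    rcases List.mem_append.1 he with he | he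
    · exact h.2 e he
    · exact h'.2 e he

theorem fin_red {p col} (hg : Good p col) (h : ∀ a < 12, ∀ b < 12, a ≠ b → p a ≠ p b)
    {o1 o2 o3 : Bool} (hT : Holds p col (prT o3) (flT o1 o2 o3)) : False := by
  have key : ∀ l : List ℕ, (l.all (· < 12)) = true → l.Nodup → l.Pairwise (fun a b => p a ≠ p b) := by
    intro l h1 h2
    simp only [List.all_eq_true, decide_eq_true_eq] at h1
    refine List.Pairwise.imp_of_mem ?_ h2
    intro a b ha hb hab
    exact h a (h1 a ha) b (h1 b hb) hab
  cases o1 <;> cases o2 <;> cases o3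
  · exact eng_false hg hT _ (key _ (by decide) (by decide)) big000
  · exact eng_false hg hT _ (key _ (by decide) (by decide)) big001
  · exact eng_false hg hT _ (key _ (by decide) (by decide)) big010
  · exact eng_false hg hT _ (key _ (by decide) (by decide)) big011
  · exact eng_false hg hT _ (key _ (by decide) (by decide)) big100
  · exact eng_false hg hT _ (key _ (by decide) (by decide)) big101
  · exact eng_false hg hT _ (key _ (by decide) (by decide)) big110
  · exact eng_false hg hT _ (key _ (by decide) (by decide)) big111

theorem main_red {e : ℕ → ℕ → Bool} (h : ND e) (h0 : e 1 13 = true) : False := by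
  have c1 := card_rr h h0
  have c2 : (mid e true false).card ≤ 4 := card_F h true
  have c3 : (mid e false true).card ≤ 4 := card_F h false
  have c4 : (mid e false true ∪ mid e false false).card ≤ 6 := card_S h _ (by
    intro v hv
    rw [Finset.mem_union, mem_mid, mem_mid] at hv
    tauto)
  have c5 : (mid e true false ∪ mid e false false).card ≤ 6 := card_S' h _ (by
    intro v hv
    rw [Finset.mem_union, mem_mid, mem_mid] at hv
    tauto)
  rw [Finset.card_union_of_disjoint (mid_disj (by simp))] at c4 c5
  have c6 := card_mid e
  obtain ⟨la, a1, a2, a3⟩ := exInc _ 4 (by omega : 4 ≤ (mid e true false).card)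
  obtain ⟨le, e1, e2, e3⟩ := exInc _ 4 (by omega : 4 ≤ (mid e false true).card)
  obtain ⟨ly, y1, y2, y3⟩ := exInc _ 2 (by omega : 2 ≤ (mid e false false).card)
  have dis : ∀ {a b a' b' : Bool} {x y : ℕ}, (a ≠ a' ∨ b ≠ b') → x ∈ mid e a b →
      y ∈ mid e a' b' → x ≠ y := by
    intro a b a' b' x y hh hx hy hxy
    subst hxy
    exact Finset.disjoint_left.1 (mid_disj hh) hx hy
  have hnd : (1 :: 13 :: (ly ++ (la ++ le))).Nodup := by
    have nn : ∀ {l : List ℕ}, l.Pairwise (· < ·) → l.Nodup := fun hl => hl.imp (fun h => h.ne)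
    have q : ∀ x ∈ ly ++ (la ++ le), 2 ≤ x ∧ x ≤ 12 := by
      intro x hx
      simp only [List.mem_append] at hx
      rcases hx with hx | hx | hx
      · exact (mem_mid.1 (y3 x hx)).1
      · exact (mem_mid.1 (a3 x hx)).1
      · exact (mem_mid.1 (e3 x hx)).1
    rw [List.nodup_cons, List.nodup_cons]
    refine ⟨?_, ?_, ?_⟩
    · intro hx
      rcases List.mem_cons.1 hx with hx | hx
      · omega
      · have := q _ hx; omega
    · intro hx
      have := q _ hx; omega
    · rw [List.nodup_append, List.nodup_append]
      refine ⟨nn y2, ⟨nn a2, nn e2, ?_⟩, ?_⟩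
      · intro x hx y hy
        exact dis (by simp) (a3 x hx) (e3 y hy)
      · intro x hx y hy
        rcases List.mem_append.1 hy with hy | hy
        · exact dis (by simp) (y3 x hx) (a3 y hy)
        · exact dis (by simp) (y3 x hx) (e3 y hy)
  match la, a1, le, e1, ly, y1 with
  | [x4, x5, x6, x7], _, [x8, x9, x10, x11], _, [x2, x3], _ =>
    simp only [List.mem_cons, List.not_mem_nil, or_false, forall_eq_or_imp, forall_eq, mem_mid]
      at a3 e3 y3
    simp only [List.pairwise_cons, List.mem_cons, List.not_mem_nil, or_false, forall_eq_or_imp,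
      forall_eq] at a2 e2 y2
    have hg := h.good (asg [1, 13, x2, x3, x4, x5, x6, x7, x8, x9, x10, x11]) (asg_mem _ (by
      simp only [List.mem_cons, List.not_mem_nil, or_false, forall_eq_or_imp, forall_eq]; omega))
    have hinj : ∀ a < 12, ∀ b < 12, a ≠ b →
        asg [1, 13, x2, x3, x4, x5, x6, x7, x8, x9, x10, x11] a ≠
        asg [1, 13, x2, x3, x4, x5, x6, x7, x8, x9, x10, x11] b := by
      intro a ha b hb hab heq
      unfold asg at heq
      rw [List.getD_eq_getElem _ _ (by simpa using ha),
        List.getD_eq_getElem _ _ (by simpa using hb)] at heq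
      exact hab ((List.Nodup.getElem_inj_iff hnd).1 heq)
    have key : ∀ l : List ℕ, (l.all (· < 12)) = true → l.Nodup → l.Pairwise (fun a b =>
        asg [1, 13, x2, x3, x4, x5, x6, x7, x8, x9, x10, x11] a ≠
        asg [1, 13, x2, x3, x4, x5, x6, x7, x8, x9, x10, x11] b) := by
      intro l h1 h2
      simp only [List.all_eq_true, decide_eq_true_eq] at h1
      refine List.Pairwise.imp_of_mem ?_ h2
      intro a b ha hb hab
      exact hinj a (h1 a ha) b (h1 b hb) hab
    have hC := (show Holds (asg [1, 13, x2, x3, x4, x5, x6, x7, x8, x9, x10, x11]) _ prC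
      (flC (e x2 x3)) from by
        constructor
        · simp only [prC, List.mem_cons, List.not_mem_nil, or_false, forall_eq_or_imp, forall_eq]
          simp [asg]; omega
        · simp only [flC, List.mem_cons, List.not_mem_nil, or_false, forall_eq_or_imp, forall_eq]
          simp [asg]; simp [h0, y3] : Holds _ (fun a b =>
        e (asg [1, 13, x2, x3, x4, x5, x6, x7, x8, x9, x10, x11] a)
          (asg [1, 13, x2, x3, x4, x5, x6, x7, x8, x9, x10, x11] b)) _ _)
    have hA := (show Holds (asg [1, 13, x2, x3, x4, x5, x6, x7, x8, x9, x10, x11]) _ prA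
      (flA (e x4 x6)) from by
        constructor
        · simp only [prA, List.mem_cons, List.not_mem_nil, or_false, forall_eq_or_imp, forall_eq]
          simp [asg]; omega
        · simp only [flA, List.mem_cons, List.not_mem_nil, or_false, forall_eq_or_imp, forall_eq]
          simp [asg]; simp [a3] : Holds _ (fun a b =>
        e (asg [1, 13, x2, x3, x4, x5, x6, x7, x8, x9, x10, x11] a)
          (asg [1, 13, x2, x3, x4, x5, x6, x7, x8, x9, x10, x11] b)) _ _)
    have hE := (show Holds (asg [1, 13, x2, x3, x4, x5, x6, x7, x8, x9, x10, x11]) _ prE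
      (flE (e x8 x10)) from by
        constructor
        · simp only [prE, List.mem_cons, List.not_mem_nil, or_false, forall_eq_or_imp, forall_eq]
          simp [asg]; omega
        · simp only [flE, List.mem_cons, List.not_mem_nil, or_false, forall_eq_or_imp, forall_eq]
          simp [asg]; simp [e3] : Holds _ (fun a b =>
        e (asg [1, 13, x2, x3, x4, x5, x6, x7, x8, x9, x10, x11] a)
          (asg [1, 13, x2, x3, x4, x5, x6, x7, x8, x9, x10, x11] b)) _ _)
    generalize e x2 x3 = o3 at hC
    generalize e x4 x6 = o1 at hA
    generalize e x8 x10 = o2 at hE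
    have hA' := eng hg (hC.app hA) [0, 1, 4, 5, 6, 7, 2, 3] (key _ (by decide) (by decide))
      (prA' o3) (flA' o1 o3) (by cases o3 <;> cases o1 <;> decide) (runA o1 o3)
    have hE' := eng hg (hC.app hE) [0, 1, 8, 9, 10, 11, 2, 3] (key _ (by decide) (by decide))
      (prE' o3) (flE' o2 o3) (by cases o3 <;> cases o2 <;> decide) (runE o2 o3)
    exact fin_red hg hinj ((((hC.app hA).app hE).app hA').app hE')

theorem main_ND {e : ℕ → ℕ → Bool} (h : ND e) : False := by
  cases h0 : e 1 13
  · refine main_red (e := fun a b => !e a b) ⟨fun u w => by rw [h.sym], ?_⟩ (by simp [h0])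
    intro u w m n k h1 h2 h3 h4 h5 h6 h7 a1 a2 a3 a4 a5
    refine h.nd u w m n (!k) h1 h2 h3 h4 h5 h6 h7 ?_ ?_ ?_ ?_ ?_ <;> simp_all
  · exact main_red h h0

theorem upper (c : ℕ → ℕ → Bool) :
    ContainsMonoOrderedCopy 4 13 {(1, 2), (1, 3), (1, 4), (2, 4), (3, 4)} c := by
  by_contra hc
  have nd : ∀ u w m n k, 1 ≤ u → w ≤ 13 → u < m → m < n → n < w →
      c u w = k → c u m = k → c m w = k → c u n = k → c n w = k → False := by
    intro u w m n k h1 h2 h3 h4 h5 a1 a2 a3 a4 a5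
    refine hc ⟨k, asg [0, u, m, n, w], ?_, ?_, ?_⟩
    · intro i hi hi'
      interval_cases i <;> simp [asg] <;> omega
    · intro i j hi hij hj
      interval_cases j <;> interval_cases i <;> simp [asg] <;> omega
    · simp only [Finset.mem_insert, Finset.mem_singleton, forall_eq_or_imp, forall_eq]
      exact ⟨a2, a4, a1, a3, a5⟩
  refine main_ND (e := fun x y => if x < y then c x y else c y x) ⟨?_, ?_⟩
  · intro u w
    rcases lt_trichotomy u w with h | h | h
    · simp [h, h.not_gt]
    · simp [h]
    · simp [h, h.not_gt]
  · intro u w m n k h1 h2 h3 h4 h5 h6 h7 a1 a2 a3 a4 a5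
    simp only [h3, h4, h5, h6, h3.trans h4, if_true] at a1 a2 a3 a4 a5
    rcases lt_or_gt_of_ne h7 with h | h
    · exact nd u w m n k h1 h2 h3 h h6 a1 a2 a3 a4 a5
    · exact nd u w n m k h1 h2 h5 h h4 a1 a4 a5 a2 a3

def wit (a b : ℕ) : Bool := Nat.testBit 69521810188982226807 ((b - 1) * (b - 2) / 2 + (a - 1))

theorem wit_chk : ((List.range 13).all fun p4 => (List.range p4).all fun p3 =>
    (List.range p3).all fun p2 => (List.range p2).all fun p1 => p1 == 0 ||
      !((wit p1 p2 == wit p1 p4) && (wit p1 p3 == wit p1 p4) && (wit p2 p4 == wit p1 p4) &&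
        (wit p3 p4 == wit p1 p4))) = true := by
  decide +kernel

theorem lower : ¬ ContainsMonoOrderedCopy 4 12 {(1, 2), (1, 3), (1, 4), (2, 4), (3, 4)} wit := by
  rintro ⟨k, φ, h1, h2, h3⟩
  simp only [Finset.mem_insert, Finset.mem_singleton, forall_eq_or_imp, forall_eq] at h3
  obtain ⟨a1, a2, a3, a4, a5⟩ := h3
  have b1 := h1 1 (by omega) (by omega)
  have b4 := h1 4 (by omega) (by omega)
  have hw := wit_chk
  simp only [List.all_eq_true, List.mem_range] at hw
  have := hw (φ 4) (by omega) (φ 3) (h2 3 4 (by omega) (by omega) (by omega))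
    (φ 2) (h2 2 3 (by omega) (by omega) (by omega)) (φ 1) (h2 1 2 (by omega) (by omega) (by omega))
  rw [a1, a2, a3, a4, a5] at this
  have h0 : φ 1 ≠ 0 := by omega
  simp [h0] at this

end OD

/-- The ordered Ramsey number of the diamond `K₄ - e` on vertex set `{1,2,3,4}` with
all edges of `K₄` except `(2, 3)` equals `13`: every 2-coloring of the edges
of the complete graph on `{1,…,13}` contains a monochromatic ordered copy, and
some 2-coloring of the edges of the complete graph on `{1,…,12}` contains
none. -/
theorem orderedRamsey_diamond_missing_23_eq :
    (∀ c : ℕ → ℕ → Bool,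
      ContainsMonoOrderedCopy 4 13 {(1, 2), (1, 3), (1, 4), (2, 4), (3, 4)} c) ∧
    (∃ c : ℕ → ℕ → Bool,
      ¬ ContainsMonoOrderedCopy 4 12 {(1, 2), (1, 3), (1, 4), (2, 4), (3, 4)} c) := by
  exact ⟨OD.upper, OD.wit, OD.lower⟩
end
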